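/- arXiv:2210.03185 — 4 statements merged into one kernel-verified Lean document; each statement's English description precedes it below -/
import Mathlib

section
/- Let M be a d-dimensional manifold without boundary, π : E → M a fiber bundle with path-connected fiber, and W a sufficiently separated collection for π. Let Y_• be the associated semi-simplicial space with Y_p = ⨆ Γ(E, Δ_0, …, Δ_p), the coproduct over all (p+1)-tuples of pairwise disjoint elements of W, with face maps forgetting an element. Then the natural map ||Y_•|| → Γ(E) that forgets the fixed subsets (sending the class of a point of Γ(E, Δ_0, …, Δ_p) × Δ^p to the underlying section) is a weak homotopy equivalence. -/
/-!
A map is a weak homotopy equivalence as soon as every square from the inclusion of the boundary of a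
cube to the map is homotopic, through squares, to one with a strict lift. Consider a square for the
forgetful map: a map `φ` from `∂Iⁿ` to `||Y_•||` and a family `Φ` of sections over `Iⁿ`. Subtracting
a threshold from the barycentric coordinates of `φ` and rescaling makes the nonzero ones locally
supported on a single tuple of germs, so by compactness `φ` now involves only finitely many germs,
and it can be written down locally without regard to the topology of `||Y_•||`. Separatedness
provides a germ `w` in `W` disjoint from all of them. Over a disk around `w` the bundle is trivial;
the fiber being path connected and `w` being contractible and cofibrantly embedded, `Φ` can be
deformed near `w` to a family fixing `w`, and `φ` is carried along. Finally `φ` is coned off to the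
vertex `w`, where `Φ` itself provides a lift.
-/

open scoped unitInterval Topology

universe u v w

section WHE

variable {X : Type u} {Y : Type v} [TopologicalSpace X] [TopologicalSpace Y]

/-- The map induced on path components by a continuous map. -/
noncomputable def pi0Map (f : C(X, Y)) : ZerothHomotopy X → ZerothHomotopy Y :=
  Quotient.map f (fun _ _ h => ⟨h.somePath.map f.continuous⟩)

/-- The map induced on generalized loops by a continuous map. -/
def genLoopMap {N : Type} (f : C(X, Y)) {x : X} (p : GenLoop N X x) :
    GenLoop N Y (f x) :=
  ⟨f.comp p.1, fun y hy => by
    show f (p.1 y) = f x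
    rw [p.2 y hy]⟩

theorem genLoopMap_homotopic {N : Type} (f : C(X, Y)) {x : X} {p q : GenLoop N X x}
    (h : GenLoop.Homotopic p q) : GenLoop.Homotopic (genLoopMap f p) (genLoopMap f q) :=
  h.map (fun H => H.compContinuousMap f)

/-- The map induced on `n`-th homotopy groups by a continuous map. -/
noncomputable def piMap (n : ℕ) (f : C(X, Y)) (x : X) :
    HomotopyGroup (Fin n) X x → HomotopyGroup (Fin n) Y (f x) :=
  Quotient.map (genLoopMap f) (fun _ _ h => genLoopMap_homotopic f h)

/-- A map of topological spaces is a weak homotopy equivalence if it is continuous, induces a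
bijection on path components and, for every basepoint and every `n ≥ 1`, a bijection on `n`-th
homotopy groups. -/
def IsWeakHomotopyEquiv (f : X → Y) : Prop :=
  ∃ hf : Continuous f,
    Function.Bijective (pi0Map ⟨f, hf⟩) ∧
      ∀ n : ℕ, 1 ≤ n → ∀ x : X, Function.Bijective (piMap n ⟨f, hf⟩ x)

end WHE

section Cofib

/-- The inclusion of a closed subset `A ⊆ X` is a closed cofibration if it satisfies the
homotopy extension property with respect to all spaces. -/
def ClosedCofibration {X : Type u} [TopologicalSpace X] (A : Set X) : Prop :=
  IsClosed A ∧ ∀ (Z : Type u) [TopologicalSpace Z] (f : C(X, Z))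
    (h : C(A × unitInterval, Z)), (∀ a : A, h (a, 0) = f a) →
      ∃ H : C(X × unitInterval, Z), (∀ x : X, H (x, 0) = f x) ∧
        ∀ (a : A) (t : unitInterval), H (↑a, t) = h (a, t)

end Cofib

section Bundle

variable {E M : Type u} [TopologicalSpace E] [TopologicalSpace M]

/-- `π : E → M` is a fiber bundle with fiber `F`: a continuous map which is locally on `M`
trivial with fiber `F`. -/
structure IsFiberBundle (F : Type u) [TopologicalSpace F] (π : E → M) : Prop where
  continuous : Continuous π
  locTriv : ∀ x : M, ∃ U : Set M, IsOpen U ∧ x ∈ U ∧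
    ∃ e : (π ⁻¹' U) ≃ₜ (U × F), ∀ y : π ⁻¹' U, ((e y).1 : M) = π ↑y

/-- The space of continuous sections of `π : E → M`, topologized as a subspace of `C(M, E)`
with the compact-open topology. -/
abbrev SectionSpace (π : E → M) : Type u :=
  {s : C(M, E) // ∀ x : M, π (s x) = x}

/-- The closed unit ball in `ℝ^d`. -/
def closedDisk (d : ℕ) : Set (EuclideanSpace ℝ (Fin d)) :=
  Metric.closedBall 0 1

/-- A subset `Δ ⊆ M` together with (a representative of) a germ of a continuous section of
`π` on a neighborhood of `Δ`. -/
structure GermData (π : E → M) : Type u where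
  Δ : Set M
  U : Set M
  isOpen : IsOpen U
  subset : Δ ⊆ U
  sec : C(U, E)
  isSec : ∀ x : U, π (sec x) = ↑x

/-- A section has germ `g` if it agrees with the germ's section on the underlying set. -/
def GermData.Fixes {π : E → M} (g : GermData π) (s : SectionSpace π) : Prop :=
  ∀ x (hx : x ∈ g.Δ), s.1 x = g.sec ⟨x, g.subset hx⟩

/-- The space `Γ(E, Δ_0, …, Δ_k)` of sections agreeing with the given germs `γ_i` on the
sets `Δ_i`. -/
def relSections {π : E → M} {k : ℕ} (g : Fin k → GermData π) : Set (SectionSpace π) :=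
  {s | ∀ i, (g i).Fixes s}

/-- A tuple of pairs `(Δ_i, γ_i)` is disjoint if the underlying sets are pairwise disjoint. -/
def DisjTuple {π : E → M} {k : ℕ} (g : Fin k → GermData π) : Prop :=
  ∀ i j, i ≠ j → Disjoint (g i).Δ (g j).Δ

/-- A sufficiently separated collection for the bundle `π : E → M` over a `d`-dimensional
manifold `M`. -/
structure IsSuffSep (d : ℕ) {E M : Type u} [TopologicalSpace E] [TopologicalSpace M]
    (π : E → M) (W : Set (GermData π)) : Prop where
  compact : ∀ g ∈ W, IsCompact g.Δ
  contractible : ∀ g ∈ W, ContractibleSpace g.Δ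
  cofib : ∀ g ∈ W, ∃ D : Set M, Nonempty (D ≃ₜ closedDisk d) ∧ g.Δ ⊆ interior D ∧
    ClosedCofibration (X := D) (Subtype.val ⁻¹' g.Δ)
  sep : ∀ (k : ℕ) (g : Fin k → GermData π), (∀ i, g i ∈ W) →
    ∃ g' ∈ W, ∃ D : Set M, Nonempty (D ≃ₜ closedDisk d) ∧ g'.Δ ⊆ interior D ∧
      ∀ i, Disjoint D (g i).Δ

end Bundle

section Simplex

/-- The `i`-th face inclusion `Δ^p → Δ^{p+1}` of standard topological simplices. -/
def simplexFace {p : ℕ} (i : Fin (p + 2)) (t : stdSimplex ℝ (Fin (p + 1))) :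
    stdSimplex ℝ (Fin (p + 2)) :=
  ⟨i.insertNth 0 t.1, by
    constructor
    · intro x
      rcases eq_or_ne x i with rfl | hx
      · simp
      · obtain ⟨j, rfl⟩ := Fin.exists_succAbove_eq hx
        rw [Fin.insertNth_apply_succAbove]
        exact t.2.1 j
    · rw [Fin.sum_univ_succAbove _ i]
      simp only [Fin.insertNth_apply_same, Fin.insertNth_apply_succAbove, zero_add]
      exact t.2.2⟩

end Simplex

section YReal

variable {E M : Type u} [TopologicalSpace E] [TopologicalSpace M]
  (π : E → M) (W : Set (GermData π))

/-- The set of `(p+1)`-tuples of pairwise disjoint elements of `W`. -/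
def TupW (p : ℕ) : Type u :=
  {g : Fin (p + 1) → GermData π // (∀ i, g i ∈ W) ∧ DisjTuple g}

variable {π W}

/-- The face of a tuple obtained by forgetting the `i`-th element. -/
def TupW.face {p : ℕ} (i : Fin (p + 2)) (g : TupW π W (p + 1)) : TupW π W p :=
  ⟨fun j => g.1 (i.succAbove j), fun j => g.2.1 _, fun j k hjk =>
    g.2.2 _ _ fun hc => hjk (Fin.succAbove_right_injective hc)⟩

variable (π W)

/-- The `p`-th space of the semi-simplicial space `Y_•` associated to `W`: the coproduct, over
all `(p+1)`-tuples of pairwise disjoint elements of `W`, of the section spaces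
`Γ(E, Δ_0, …, Δ_p)`. -/
abbrev Yspace (p : ℕ) : Type u :=
  Σ g : TupW π W p, ↥(relSections g.1)

/-- The face maps of `Y_•`, forgetting the `i`-th fixed subset. -/
def Yface (p : ℕ) (i : Fin (p + 2)) (y : Yspace π W (p + 1)) : Yspace π W p :=
  ⟨y.1.face i, ⟨y.2.1, fun j => y.2.2 (i.succAbove j)⟩⟩

/-- The underlying space `⨆_p Y_p × Δ^p` of the fat geometric realization of `Y_•`. -/
abbrev YPre : Type u :=
  Σ p : ℕ, Yspace π W p × stdSimplex ℝ (Fin (p + 1))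

/-- The gluing relation of the fat geometric realization of `Y_•`. -/
inductive YRel : YPre π W → YPre π W → Prop
  | glue (p : ℕ) (i : Fin (p + 2)) (y : Yspace π W (p + 1))
      (t : stdSimplex ℝ (Fin (p + 1))) :
      YRel ⟨p, Yface π W p i y, t⟩ ⟨p + 1, y, simplexFace i t⟩

/-- The fat geometric realization `||Y_•||`, with the quotient topology. -/
abbrev YRealization : Type u :=
  Quot (YRel π W)

/-- The natural map `||Y_•|| → Γ(E)` forgetting the fixed subsets. -/
def forgetY : YRealization π W → SectionSpace π :=
  Quot.lift (fun a => (a.2.1.2 : SectionSpace π)) (by rintro _ _ ⟨p, i, y, t⟩; rfl)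

end YReal

/-! ### A lifting criterion for weak homotopy equivalences -/

section Collar

variable {ι : Type*}

/-- The expansion of the cube from its centre by the factor `1 + s`, cut off at the boundary. -/
noncomputable def cubeStretch (s : I) (x : ι → I) : ι → I := fun i =>
  Set.projIcc 0 1 zero_le_one ((x i : ℝ) + s * (x i - 1 / 2))

theorem continuous_cubeStretch : Continuous fun z : I × (ι → I) => cubeStretch z.1 z.2 :=
  continuous_pi fun _ => continuous_projIcc.comp (by fun_prop)

theorem cubeStretch_zero (x : ι → I) : cubeStretch 0 x = x := by
  funext i
  simp [cubeStretch]

theorem isClosed_cubeBoundary [Finite ι] : IsClosed (Cube.boundary ι) := by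
  have h : Cube.boundary ι = ⋃ i, {y | y i = 0} ∪ {y | y i = 1} := by
    ext y
    simp [Cube.boundary]
  rw [h]
  exact isClosed_iUnion_of_finite fun i =>
    (isClosed_eq (continuous_apply i) continuous_const).union
      (isClosed_eq (continuous_apply i) continuous_const)

variable [Fintype ι]

/-- The sup-norm distance of a point of the cube to the boundary of the cube; it is the junk
value `1` for the zero-dimensional cube. -/
noncomputable def cubeDepth (x : ι → I) : I :=
  Finset.univ.inf fun i => min (x i) (σ (x i))

/-- The coordinate `min 1 (4 * cubeDepth x)` of a collar of the boundary of the cube. -/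
noncomputable def cubeCollar (x : ι → I) : I :=
  Set.projIcc 0 1 zero_le_one (4 * (cubeDepth x : ℝ))

theorem continuous_cubeDepth : Continuous (cubeDepth (ι := ι)) :=
  Continuous.finset_inf_apply fun i _ =>
    (continuous_apply i).min (unitInterval.continuous_symm.comp (continuous_apply i))

theorem continuous_cubeCollar : Continuous (cubeCollar (ι := ι)) :=
  continuous_projIcc.comp
    (continuous_const.mul (continuous_subtype_val.comp continuous_cubeDepth))

theorem cubeDepth_of_mem_boundary {x : ι → I} (hx : x ∈ Cube.boundary ι) : cubeDepth x = 0 := by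
  obtain ⟨i, hi⟩ := hx
  refine le_antisymm ((Finset.inf_le (Finset.mem_univ i)).trans ?_) unitInterval.nonneg'
  rcases hi with hi | hi <;> simp [hi]

theorem cubeCollar_of_mem_boundary {x : ι → I} (hx : x ∈ Cube.boundary ι) : cubeCollar x = 0 := by
  simp [cubeCollar, cubeDepth_of_mem_boundary hx]

theorem cubeCollar_of_le_cubeDepth {x : ι → I} (hx : 1 / 4 ≤ (cubeDepth x : ℝ)) :
    cubeCollar x = 1 :=
  Set.projIcc_of_right_le _ (by linarith)

theorem coe_cubeCollar_of_cubeDepth_le {x : ι → I} (hx : (cubeDepth x : ℝ) ≤ 1 / 4) :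
    (cubeCollar x : ℝ) = 4 * cubeDepth x := by
  rw [cubeCollar, Set.projIcc_of_mem]
  exact ⟨by linarith [(cubeDepth x).2.1], by linarith⟩

theorem exists_coe_cubeDepth_eq {x : ι → I} (hx : (cubeDepth x : ℝ) < 1) :
    ∃ i, (x i : ℝ) = cubeDepth x ∨ (x i : ℝ) = 1 - cubeDepth x := by
  have hne : (Finset.univ : Finset ι).Nonempty := by
    rw [Finset.nonempty_iff_ne_empty]
    intro he
    simp [cubeDepth, he] at hx
  obtain ⟨i, -, hi⟩ := Finset.exists_mem_eq_inf _ hne fun i => min (x i) (σ (x i))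
  refine ⟨i, ?_⟩
  rcases min_choice (x i) (σ (x i)) with h | h
  · exact Or.inl (congrArg Subtype.val (hi.trans h)).symm
  · right
    rw [cubeDepth, hi, h, unitInterval.coe_symm_eq]
    ring

-- A coordinate at distance `δ ≤ 1 / 4` from `0` moves to `δ + 4 * δ * (δ - 1 / 2) ≤ 0`.
theorem cubeStretch_cubeCollar_mem_boundary {x : ι → I} (hx : (cubeDepth x : ℝ) ≤ 1 / 4) :
    cubeStretch (cubeCollar x) x ∈ Cube.boundary ι := by
  have hpos : 0 ≤ (cubeDepth x : ℝ) := (cubeDepth x).2.1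
  obtain ⟨i, hi | hi⟩ := exists_coe_cubeDepth_eq (x := x) (by linarith)
  · refine ⟨i, Or.inl (Set.projIcc_of_le_left _ ?_)⟩
    rw [coe_cubeCollar_of_cubeDepth_le hx, hi]
    nlinarith
  · refine ⟨i, Or.inr (Set.projIcc_of_right_le _ ?_)⟩
    rw [coe_cubeCollar_of_cubeDepth_le hx, hi]
    nlinarith

theorem exists_collar_extension {X : Type*} [TopologicalSpace X] (φ : C(I × Cube.boundary ι, X))
    (m : C(ι → I, X)) (h : ∀ x : Cube.boundary ι, m x = φ (1, x)) :
    ∃ l : C(ι → I, X),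
      (∀ x (hx : (cubeDepth x : ℝ) ≤ 1 / 4),
        l x = φ (cubeCollar x, ⟨_, cubeStretch_cubeCollar_mem_boundary hx⟩)) ∧
      ∀ x, 1 / 4 ≤ (cubeDepth x : ℝ) → l x = m (cubeStretch 1 x) := by
  classical
  let l : (ι → I) → X := fun x =>
    if hx : (cubeDepth x : ℝ) ≤ 1 / 4 then
      φ (cubeCollar x, ⟨_, cubeStretch_cubeCollar_mem_boundary hx⟩)
    else m (cubeStretch 1 x)
  have hcollar : ∀ x (hx : (cubeDepth x : ℝ) ≤ 1 / 4),
      l x = φ (cubeCollar x, ⟨_, cubeStretch_cubeCollar_mem_boundary hx⟩) :=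
    fun x hx => dif_pos hx
  have hinner : ∀ x, 1 / 4 ≤ (cubeDepth x : ℝ) → l x = m (cubeStretch 1 x) := by
    intro x hx
    rcases hx.eq_or_lt with heq | hlt
    · rw [hcollar x heq.ge]
      simp only [cubeCollar_of_le_cubeDepth hx, ← h]
    · exact dif_neg hlt.not_ge
  have hdepth : Continuous fun x : ι → I => (cubeDepth x : ℝ) :=
    continuous_subtype_val.comp continuous_cubeDepth
  have hstretch : Continuous fun x : ι → I => cubeStretch (cubeCollar x) x :=
    continuous_cubeStretch.comp (continuous_cubeCollar.prodMk continuous_id)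
  have hl_collar : ContinuousOn l {x | (cubeDepth x : ℝ) ≤ 1 / 4} := by
    rw [continuousOn_iff_continuous_domRestrict, 
      show Set.domRestrict _ l = _ from funext fun x => hcollar x.1 x.2]
    exact φ.continuous.comp ((continuous_cubeCollar.comp continuous_subtype_val).prodMk
      ((hstretch.comp continuous_subtype_val).subtype_mk _))
  have hl_inner : ContinuousOn l {x | 1 / 4 ≤ (cubeDepth x : ℝ)} :=
    (m.continuous.comp (continuous_cubeStretch.comp
      (continuous_const.prodMk continuous_id))).continuousOn.congr hinner
  have hl : Continuous l := by
    rw [← continuousOn_univ]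
    convert hl_collar.union_of_isClosed hl_inner (isClosed_le hdepth continuous_const)
      (isClosed_le continuous_const hdepth)
    ext x
    simp [le_total]
  exact ⟨⟨l, hl⟩, hcollar, hinner⟩

end Collar

section Squares

variable {X Y : Type*} [TopologicalSpace X] [TopologicalSpace Y]
  {K : Type*} [TopologicalSpace K] {A : Set K} {f : C(X, Y)}

/-- The space of commutative squares from the inclusion `A ⊆ K` to `f : X → Y`, with the
compact-open topology. For locally compact `A` and `K` its paths are the homotopies of squares. -/
abbrev SquareSpace (A : Set K) (f : C(X, Y)) : Type _ :=
  {p : C(A, X) × C(K, Y) // ∀ x : A, f (p.1 x) = p.2 x}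

/-- A square has a strict lift if there is a diagonal making both of its triangles commute. -/
def HasStrictLift (p : SquareSpace A f) : Prop :=
  ∃ l : C(K, X), (∀ x : A, l x = p.1.1 x) ∧ ∀ x, f (l x) = p.1.2 x

theorem SquareSpace.joined_of_homotopy {p q : SquareSpace A f} (h : C(I × A, X)) (H : C(I × K, Y))
    (hH : ∀ s (x : A), f (h (s, x)) = H (s, x)) (h₀ : ∀ x, h (0, x) = p.1.1 x)
    (h₁ : ∀ x, h (1, x) = q.1.1 x) (H₀ : ∀ x, H (0, x) = p.1.2 x)
    (H₁ : ∀ x, H (1, x) = q.1.2 x) : Joined p q :=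
  ⟨⟨⟨fun s => ⟨(h.curry s, H.curry s), hH s⟩,
      (h.curry.continuous.prodMk H.curry.continuous).subtype_mk _⟩,
    Subtype.ext (Prod.ext (ContinuousMap.ext h₀) (ContinuousMap.ext H₀)),
    Subtype.ext (Prod.ext (ContinuousMap.ext h₁) (ContinuousMap.ext H₁))⟩⟩

-- The homotopy of squares is inserted in a collar of the boundary of the cube.
theorem exists_lift_homotopicRel_of_joined {ι : Type*} [Finite ι]
    {p q : SquareSpace (Cube.boundary ι) f} (h : Joined p q) (hq : HasStrictLift q) :
    ∃ l : C(ι → I, X), (∀ x : Cube.boundary ι, l x = p.1.1 x) ∧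
      ContinuousMap.HomotopicRel (f.comp l) p.1.2 (Cube.boundary ι) := by
  classical
  have := Fintype.ofFinite ι
  have : CompactSpace (Cube.boundary ι) :=
    isCompact_iff_compactSpace.1 isClosed_cubeBoundary.isCompact
  obtain ⟨γ⟩ := h
  obtain ⟨m, hm, hfm⟩ := hq
  have hγ : Continuous fun s => (γ s).1 := continuous_subtype_val.comp γ.continuous
  let φ : C(I × Cube.boundary ι, X) :=
    ContinuousMap.uncurry ⟨fun s => (γ s).1.1, continuous_fst.comp hγ⟩
  let Φ : C(I × (ι → I), Y) :=
    ContinuousMap.uncurry ⟨fun s => (γ s).1.2, continuous_snd.comp hγ⟩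
  obtain ⟨l, hl_collar, hl_inner⟩ := exists_collar_extension φ m fun x => by
    simp [φ, hm]
  let Ψ : C(I × (ι → I), Y) := ⟨fun z => Φ (z.1, cubeStretch z.1 z.2),
    Φ.continuous.comp (continuous_fst.prodMk continuous_cubeStretch)⟩
  have hΨ₀ : ∀ x, Ψ (0, x) = p.1.2 x := by simp [Ψ, Φ, cubeStretch_zero]
  have hfl : ∀ x, f (l x) = Ψ (cubeCollar x, x) := by
    intro x
    rcases le_total (cubeDepth x : ℝ) (1 / 4) with hx | hx
    · rw [hl_collar x hx]
      exact (γ (cubeCollar x)).2 _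
    · rw [hl_inner x hx, hfm, cubeCollar_of_le_cubeDepth hx]
      simp [Ψ, Φ]
  refine ⟨l, fun x => ?_, ⟨⟨⟨⟨fun z => Ψ (σ z.1 * cubeCollar z.2, z.2), ?_⟩, ?_, ?_⟩, ?_⟩⟩⟩
  · rw [hl_collar x (by simp [cubeDepth_of_mem_boundary x.2])]
    simp [φ, cubeCollar_of_mem_boundary x.2, cubeStretch_zero]
  · have := continuous_cubeCollar (ι := ι)
    fun_prop
  · intro x
    simpa using (hfl x).symm
  · intro x
    simpa using hΨ₀ x
  · intro s x hx
    have hx' := hfl x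
    simp only [cubeCollar_of_mem_boundary hx] at hx'
    simp [cubeCollar_of_mem_boundary hx, hx']

end Squares

section Criterion

variable {X : Type u} {Y : Type v} [TopologicalSpace X] [TopologicalSpace Y] {f : C(X, Y)}

/-- Every square from the boundary inclusion of a cube to `f` is homotopic, through squares, to
one with a strict lift. -/
def HasHomotopyLifts (f : C(X, Y)) : Prop :=
  ∀ (n : ℕ) (p : SquareSpace (Cube.boundary (Fin n)) f), ∃ q, Joined p q ∧ HasStrictLift q

theorem HasHomotopyLifts.exists_lift (hf : HasHomotopyLifts f) {n : ℕ}
    (p : SquareSpace (Cube.boundary (Fin n)) f) :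
    ∃ l : C(Fin n → I, X), (∀ x : Cube.boundary (Fin n), l x = p.1.1 x) ∧
      ContinuousMap.HomotopicRel (f.comp l) p.1.2 (Cube.boundary (Fin n)) :=
  let ⟨_, hpq, hq⟩ := hf n p
  exists_lift_homotopicRel_of_joined hpq hq

theorem mem_cubeBoundary_succ_iff {n : ℕ} {z : Fin (n + 1) → I} :
    z ∈ Cube.boundary (Fin (n + 1)) ↔ (z 0 = 0 ∨ z 0 = 1) ∨ Fin.tail z ∈ Cube.boundary (Fin n) :=
  Fin.exists_fin_succ

theorem exists_cubeBoundary_glue {n : ℕ} (a b : C(Fin n → I, X))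
    (hab : ∀ x ∈ Cube.boundary (Fin n), a x = b x) :
    ∃ φ : C(Cube.boundary (Fin (n + 1)), X),
      (∀ z, z.1 0 = 0 → φ z = a (Fin.tail z.1)) ∧ (∀ z, z.1 0 = 1 → φ z = b (Fin.tail z.1)) ∧
      ∀ z, (Fin.tail z.1 : Fin n → I) ∈ Cube.boundary (Fin n) → φ z = a (Fin.tail z.1) := by
  have htail : Continuous fun z : Cube.boundary (Fin (n + 1)) => Fin.tail z.1 :=
    continuous_pi fun i => (continuous_apply i.succ).comp continuous_subtype_val
  refine ⟨⟨fun z => if (z.1 0 : ℝ) ≤ 1 / 2 then a (Fin.tail z.1) else b (Fin.tail z.1), ?_⟩,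
    fun z hz => ?_, fun z hz => ?_, fun z hz => ?_⟩
  · refine Continuous.if_le (a.continuous.comp htail) (b.continuous.comp htail)
      (continuous_subtype_val.comp ((continuous_apply 0).comp continuous_subtype_val))
      continuous_const fun z hz => ?_
    rcases mem_cubeBoundary_succ_iff.1 z.2 with (h | h) | h
    · norm_num [h] at hz
    · norm_num [h] at hz
    · exact hab _ h
  · simp [hz]
  · norm_num [hz]
  · simp [hab _ hz]

theorem HasHomotopyLifts.homotopicRel_of_comp (hf : HasHomotopyLifts f) {n : ℕ}
    {a b : C(Fin n → I, X)} (hab : ∀ x ∈ Cube.boundary (Fin n), a x = b x)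
    (h : ContinuousMap.HomotopicRel (f.comp a) (f.comp b) (Cube.boundary (Fin n))) :
    ContinuousMap.HomotopicRel a b (Cube.boundary (Fin n)) := by
  obtain ⟨H⟩ := h
  obtain ⟨φ, hφ₀, hφ₁, hφ⟩ := exists_cubeBoundary_glue a b hab
  let Φ : C(Fin (n + 1) → I, Y) := ⟨fun z => H (z 0, Fin.tail z),
    H.continuous.comp ((continuous_apply 0).prodMk
      (continuous_pi fun i => continuous_apply i.succ))⟩
  have hsquare : ∀ z, f (φ z) = Φ z := by
    intro z
    rcases mem_cubeBoundary_succ_iff.1 z.2 with (h | h) | h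
    · simp [hφ₀ z h, Φ, h]
    · simp [hφ₁ z h, Φ, h]
    · rw [hφ z h]
      exact (H.eq_fst _ h).symm
  obtain ⟨l, hl, -⟩ := hf.exists_lift ⟨(φ, Φ), hsquare⟩
  replace hl : ∀ z (hz : z ∈ Cube.boundary (Fin (n + 1))), l z = φ ⟨z, hz⟩ := fun z hz => hl ⟨z, hz⟩
  have hcons : Continuous fun z : I × (Fin n → I) => (Fin.cons z.1 z.2 : Fin (n + 1) → I) :=
    Continuous.finCons (A := fun _ => I) continuous_fst continuous_snd
  refine ⟨⟨⟨⟨fun z => l (Fin.cons z.1 z.2), l.continuous.comp hcons⟩, fun x => ?_, fun x => ?_⟩,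
    fun t x hx => ?_⟩⟩
  · exact (hl _ (mem_cubeBoundary_succ_iff.2 (.inl (.inl rfl)))).trans (hφ₀ _ rfl)
  · exact (hl _ (mem_cubeBoundary_succ_iff.2 (.inl (.inr rfl)))).trans (hφ₁ _ rfl)
  · exact (hl _ (mem_cubeBoundary_succ_iff.2 (.inr (by simpa using hx)))).trans
      (hφ _ (by simpa using hx))

theorem HasHomotopyLifts.bijective_pi0Map (hf : HasHomotopyLifts f) :
    Function.Bijective (pi0Map f) := by
  have hempty : ∀ x : Fin 0 → I, x ∉ Cube.boundary (Fin 0) := fun _ ⟨i, _⟩ => i.elim0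
  constructor
  · refine fun a b => Quotient.inductionOn₂ a b fun a b hab => ?_
    obtain ⟨γ⟩ : Joined (f a) (f b) := Quotient.exact hab
    obtain ⟨H⟩ := hf.homotopicRel_of_comp (n := 0) (a := .const _ a) (b := .const _ b)
      (fun x hx => absurd hx (hempty x))
      ⟨⟨⟨⟨fun z => γ z.1, by fun_prop⟩, by simp, by simp⟩, fun _ x hx => absurd hx (hempty x)⟩⟩
    exact Quotient.sound ⟨⟨⟨fun t => H (t, Fin.elim0), by fun_prop⟩, by simp, by simp⟩⟩
  · refine fun b => Quotient.inductionOn b fun y => ?_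
    have : IsEmpty (Cube.boundary (Fin 0)) := ⟨fun x => hempty x x.2⟩
    obtain ⟨l, -, ⟨H⟩⟩ := hf.exists_lift (n := 0)
      ⟨(⟨isEmptyElim, continuous_of_const isEmptyElim⟩, .const _ y), isEmptyElim⟩
    exact ⟨Quotient.mk _ (l Fin.elim0),
      Quotient.sound ⟨⟨⟨fun t => H (t, Fin.elim0), by fun_prop⟩, by simp, by simp⟩⟩⟩

theorem HasHomotopyLifts.bijective_piMap (hf : HasHomotopyLifts f) (n : ℕ) (x : X) :
    Function.Bijective (piMap n f x) := by
  constructor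
  · refine fun a b => Quotient.inductionOn₂ a b fun a b hab => Quotient.sound ?_
    exact hf.homotopicRel_of_comp (fun y hy => (a.2 y hy).trans (b.2 y hy).symm)
      (Quotient.exact hab)
  · refine fun b => Quotient.inductionOn b fun b => ?_
    obtain ⟨l, hl, hlb⟩ := hf.exists_lift ⟨(.const _ x, b.1), fun y => (b.2 y y.2).symm⟩
    exact ⟨Quotient.mk _ ⟨l, fun y hy => hl ⟨y, hy⟩⟩, Quotient.sound hlb⟩

theorem HasHomotopyLifts.isWeakHomotopyEquiv (hf : HasHomotopyLifts f) : IsWeakHomotopyEquiv f :=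
  ⟨f.continuous, hf.bijective_pi0Map, fun n _ x => hf.bijective_piMap n x⟩

end Criterion

/-! ### Triviality of fiber bundles over disks -/

section Box

variable {ι : Type*} [DecidableEq ι] {a b : ι → ℝ} {i : ι} {c : ℝ}

theorem Icc_update_union_Icc_update (hc : c ∈ Set.Icc (a i) (b i)) :
    Set.Icc a (Function.update b i c) ∪ Set.Icc (Function.update a i c) b = Set.Icc a b := by
  refine Set.Subset.antisymm (Set.union_subset (Set.Icc_subset_Icc_right ?_)
    (Set.Icc_subset_Icc_left ?_)) fun x hx => ?_
  · exact update_le_self_iff.2 hc.2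
  · exact le_update_self_iff.2 hc.1
  · rcases le_total (x i) c with h | h
    · exact Or.inl ⟨hx.1, le_update_iff.2 ⟨h, fun j _ => hx.2 j⟩⟩
    · exact Or.inr ⟨update_le_iff.2 ⟨h, fun j _ => hx.1 j⟩, hx.2⟩

theorem box_bisection_induction [Finite ι] {p : (ι → ℝ) → (ι → ℝ) → Prop} {δ : ℝ} (hδ : 0 < δ)
    (small : ∀ a b, a ≤ b → (∀ i, b i - a i ≤ δ) → p a b)
    (split : ∀ a b i, a ≤ b → p a (Function.update b i ((a i + b i) / 2)) →
      p (Function.update a i ((a i + b i) / 2)) b → p a b)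
    (hab : a ≤ b) : p a b := by
  have := Fintype.ofFinite ι
  suffices h : ∀ (s : Finset ι) (a b), a ≤ b → (∀ i ∉ s, b i - a i ≤ δ) → p a b from
    h Finset.univ a b hab fun i hi => absurd (Finset.mem_univ i) hi
  intro s
  induction s using Finset.induction with
  | empty => exact fun a b hab h => small a b hab fun i => h i (Finset.notMem_empty i)
  | insert j s _ ih =>
    intro a b hab hside
    obtain ⟨n, hn⟩ := pow_unbounded_of_one_lt ((b j - a j) / δ) (one_lt_two (α := ℝ))
    replace hn : b j - a j ≤ 2 ^ n * δ := ((div_lt_iff₀ hδ).1 hn).le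
    induction n generalizing a b with
    | zero =>
      refine ih a b hab fun i hi => ?_
      rcases eq_or_ne i j with rfl | hij
      · simpa using hn
      · exact hside i (by simp [hij, hi])
    | succ n ihn =>
      have hj := hab j
      rw [pow_succ] at hn
      refine split a b j hab (ihn _ _ ?_ ?_ ?_) (ihn _ _ ?_ ?_ ?_)
      · exact le_update_iff.2 ⟨by linarith, fun i _ => hab i⟩
      · intro i hi
        simpa [Function.update_of_ne (fun h => hi (by simp [h]) : i ≠ j)] using hside i hi
      · rw [Function.update_self]
        linarith
      · exact update_le_iff.2 ⟨by linarith, fun i _ => hab i⟩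
      · intro i hi
        simpa [Function.update_of_ne (fun h => hi (by simp [h]) : i ≠ j)] using hside i hi
      · rw [Function.update_self]
        linarith

end Box

/-- A trivialization, with fiber `F`, of the pullback of `π : E → M` along `ψ : B → M` over the
set `A ⊆ B`. The two maps `toTotal` and `toFiber` between `A × F` and the pullback are total
functions whose values are junk outside of these sets. -/
structure PullbackTrivialization {E M B : Type*} (F : Type*) [TopologicalSpace E]
    [TopologicalSpace F] [TopologicalSpace B] (π : E → M) (ψ : B → M) (A : Set B) where
  toTotal : B × F → E
  toFiber : B × E → F
  continuousOn_toTotal : ContinuousOn toTotal (A ×ˢ Set.univ)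
  continuousOn_toFiber : ContinuousOn toFiber {z | z.1 ∈ A ∧ π z.2 = ψ z.1}
  proj_toTotal : ∀ x ∈ A, ∀ v, π (toTotal (x, v)) = ψ x
  toFiber_toTotal : ∀ x ∈ A, ∀ v, toFiber (x, toTotal (x, v)) = v
  toTotal_toFiber : ∀ x ∈ A, ∀ e, π e = ψ x → toTotal (x, toFiber (x, e)) = e

namespace PullbackTrivialization

variable {E M F B : Type*} [TopologicalSpace E] [TopologicalSpace F] [TopologicalSpace B]
  {π : E → M} {ψ : B → M} {A A' : Set B}

/-- Pull back a trivialization along a further map. -/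
def comp {C : Type*} [TopologicalSpace C] (T : PullbackTrivialization F π ψ A) {c : C → B}
    (hc : Continuous c) (hcA : ∀ x, c x ∈ A) : PullbackTrivialization F π (ψ ∘ c) Set.univ where
  toTotal z := T.toTotal (c z.1, z.2)
  toFiber z := T.toFiber (c z.1, z.2)
  continuousOn_toTotal := T.continuousOn_toTotal.comp (by fun_prop) fun z _ => ⟨hcA z.1, trivial⟩
  continuousOn_toFiber := T.continuousOn_toFiber.comp (by fun_prop) fun z hz => ⟨hcA z.1, hz.2⟩
  proj_toTotal x _ := T.proj_toTotal (c x) (hcA x)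
  toFiber_toTotal x _ := T.toFiber_toTotal (c x) (hcA x)
  toTotal_toFiber x _ := T.toTotal_toFiber (c x) (hcA x)

/-- Change a trivialization `T` over `A'` by its transition functions to `S`, extended from
`A ∩ A'` to `A'` along a retraction. -/
def align (S : PullbackTrivialization F π ψ A) (T : PullbackTrivialization F π ψ A') {r : B → B}
    (hr : Continuous r) (hrA : Set.MapsTo r A' A) (hrA' : Set.MapsTo r A' A') :
    PullbackTrivialization F π ψ A' where
  toTotal z := T.toTotal (z.1, T.toFiber (r z.1, S.toTotal (r z.1, z.2)))
  toFiber z := S.toFiber (r z.1, T.toTotal (r z.1, T.toFiber z))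
  continuousOn_toTotal := by
    have hS : ContinuousOn (fun z : B × F => S.toTotal (r z.1, z.2)) (A' ×ˢ Set.univ) :=
      S.continuousOn_toTotal.comp (by fun_prop) fun z hz => ⟨hrA hz.1, trivial⟩
    have hT : ContinuousOn (fun z : B × F => T.toFiber (r z.1, S.toTotal (r z.1, z.2)))
        (A' ×ˢ Set.univ) :=
      T.continuousOn_toFiber.comp (by fun_prop)
        fun z hz => ⟨hrA' hz.1, S.proj_toTotal _ (hrA hz.1) _⟩
    exact T.continuousOn_toTotal.comp (by fun_prop) fun z hz => ⟨hz.1, trivial⟩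
  continuousOn_toFiber := by
    have h := T.continuousOn_toFiber
    have hT : ContinuousOn (fun z : B × E => T.toTotal (r z.1, T.toFiber z))
        {z | z.1 ∈ A' ∧ π z.2 = ψ z.1} :=
      T.continuousOn_toTotal.comp (by fun_prop) fun z hz => ⟨hrA' hz.1, trivial⟩
    exact S.continuousOn_toFiber.comp (by fun_prop)
      fun z hz => ⟨hrA hz.1, T.proj_toTotal _ (hrA' hz.1) _⟩
  proj_toTotal x hx v := T.proj_toTotal x hx _
  toFiber_toTotal x hx v := by
    rw [T.toFiber_toTotal x hx, T.toTotal_toFiber _ (hrA' hx) _ (S.proj_toTotal _ (hrA hx) _),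
      S.toFiber_toTotal _ (hrA hx)]
  toTotal_toFiber x hx e he := by
    rw [S.toTotal_toFiber _ (hrA hx) _ (T.proj_toTotal _ (hrA' hx) _),
      T.toFiber_toTotal _ (hrA' hx), T.toTotal_toFiber x hx e he]

theorem align_toTotal_of_fixed (S : PullbackTrivialization F π ψ A)
    (T : PullbackTrivialization F π ψ A') {r : B → B} (hr : Continuous r)
    (hrA : Set.MapsTo r A' A) (hrA' : Set.MapsTo r A' A') {x : B} (hx : x ∈ A') (hrx : r x = x)
    (v : F) : (S.align T hr hrA hrA').toTotal (x, v) = S.toTotal (x, v) := by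
  simp only [align, hrx]
  exact T.toTotal_toFiber x hx _ (S.proj_toTotal x (hrx ▸ hrA hx) v)

variable [TopologicalSpace M]

/-- A local trivialization of `π` over `U` trivializes pullbacks over sets mapping to `U`. -/
noncomputable def ofHomeomorph [Nonempty E] [Nonempty F] {U : Set M} (e : (π ⁻¹' U) ≃ₜ (U × F))
    (he : ∀ y : π ⁻¹' U, ((e y).1 : M) = π y) (hψ : Continuous ψ) (hA : Set.MapsTo ψ A U) :
    PullbackTrivialization F π ψ A := by
  classical
  exact
  { toTotal := fun z => if h : ψ z.1 ∈ U then e.symm (⟨ψ z.1, h⟩, z.2) else Classical.arbitrary E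
    toFiber := fun z => if h : π z.2 ∈ U then (e ⟨z.2, h⟩).2 else Classical.arbitrary F
    continuousOn_toTotal := by
      rw [continuousOn_iff_continuous_domRestrict]
      have h : Continuous fun z : (A ×ˢ (Set.univ : Set F)) =>
          (e.symm (⟨ψ z.1.1, hA z.2.1⟩, z.1.2) : E) := by fun_prop
      exact h.congr fun z => by rw [Set.domRestrict_apply, dif_pos (hA z.2.1)]
    continuousOn_toFiber := by
      rw [continuousOn_iff_continuous_domRestrict]
      have hU (z : {z : B × E | z.1 ∈ A ∧ π z.2 = ψ z.1}) : π z.1.2 ∈ U :=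
        z.2.2 ▸ hA z.2.1
      have h : Continuous fun z : {z : B × E | z.1 ∈ A ∧ π z.2 = ψ z.1} =>
          (e ⟨z.1.2, hU z⟩).2 :=
        continuous_snd.comp (e.continuous.comp (Continuous.subtype_mk (by fun_prop) _))
      exact h.congr fun z => by rw [Set.domRestrict_apply, dif_pos (hU z)]
    proj_toTotal := fun x hx v => by
      rw [dif_pos (hA hx), ← he, e.apply_symm_apply]
    toFiber_toTotal := fun x hx v => by
      have h : π (e.symm (⟨ψ x, hA hx⟩, v)) ∈ U := (e.symm (⟨ψ x, hA hx⟩, v)).2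
      simp [hA hx, h]
    toTotal_toFiber := fun x hx y hy => by
      have h : π y ∈ U := hy ▸ hA hx
      have hey : (⟨ψ x, hA hx⟩, (e ⟨y, h⟩).2) = e ⟨y, h⟩ :=
        Prod.ext (Subtype.ext ((he _).trans hy).symm) rfl
      simp [hA hx, h, hey] }

/-- Glue two trivializations over closed sets that agree on the intersection. -/
noncomputable def union [T2Space M] (S : PullbackTrivialization F π ψ A)
    (T : PullbackTrivialization F π ψ A') (hπ : Continuous π) (hψ : Continuous ψ)
    (hA : IsClosed A) (hA' : IsClosed A')
    (hST : ∀ x ∈ A, x ∈ A' → ∀ v, S.toTotal (x, v) = T.toTotal (x, v)) :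
    PullbackTrivialization F π ψ (A ∪ A') := by
  classical
  let τ : B × F → E := fun z => if z.1 ∈ A then S.toTotal z else T.toTotal z
  let κ : B × E → F := fun z => if z.1 ∈ A then S.toFiber z else T.toFiber z
  have τS : ∀ x ∈ A, ∀ v, τ (x, v) = S.toTotal (x, v) := fun x hx v => if_pos hx
  have κS : ∀ x ∈ A, ∀ e, κ (x, e) = S.toFiber (x, e) := fun x hx e => if_pos hx
  have τT : ∀ x ∈ A', ∀ v, τ (x, v) = T.toTotal (x, v) := fun x hx v => by
    by_cases hxA : x ∈ A
    · rw [τS x hxA, hST x hxA hx]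
    · exact if_neg hxA
  have κT : ∀ x ∈ A', ∀ e, π e = ψ x → κ (x, e) = T.toFiber (x, e) := fun x hx e he => by
    by_cases hxA : x ∈ A
    · rw [κS x hxA]
      conv_lhs => rw [← T.toTotal_toFiber x hx e he, ← hST x hxA hx, S.toFiber_toTotal x hxA]
    · exact if_neg hxA
  have hκ_dom : {z : B × E | z.1 ∈ A ∪ A' ∧ π z.2 = ψ z.1} =
      {z | z.1 ∈ A ∧ π z.2 = ψ z.1} ∪ {z | z.1 ∈ A' ∧ π z.2 = ψ z.1} :=
    Set.ext fun z => or_and_right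
  have hclosed : IsClosed {z : B × E | π z.2 = ψ z.1} :=
    isClosed_eq (by fun_prop) (by fun_prop)
  exact
  { toTotal := τ
    toFiber := κ
    continuousOn_toTotal := by
      rw [Set.union_prod]
      exact (S.continuousOn_toTotal.congr fun z hz => τS z.1 hz.1 z.2).union_of_isClosed
        (T.continuousOn_toTotal.congr fun z hz => τT z.1 hz.1 z.2) (hA.prod isClosed_univ)
        (hA'.prod isClosed_univ)
    continuousOn_toFiber := by
      rw [hκ_dom]
      exact (S.continuousOn_toFiber.congr fun z hz => κS z.1 hz.1 z.2).union_of_isClosed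
        (T.continuousOn_toFiber.congr fun z hz => κT z.1 hz.1 z.2 hz.2)
        ((hA.preimage continuous_fst).inter hclosed) ((hA'.preimage continuous_fst).inter hclosed)
    proj_toTotal := by
      rintro x (hx | hx) v
      · rw [τS x hx, S.proj_toTotal x hx]
      · rw [τT x hx, T.proj_toTotal x hx]
    toFiber_toTotal := by
      rintro x (hx | hx) v
      · rw [τS x hx, κS x hx, S.toFiber_toTotal x hx]
      · rw [τT x hx, κT x hx _ (T.proj_toTotal x hx v), T.toFiber_toTotal x hx]
    toTotal_toFiber := by
      rintro x (hx | hx) e he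
      · rw [κS x hx, τS x hx, S.toTotal_toFiber x hx e he]
      · rw [κT x hx e he, τT x hx, T.toTotal_toFiber x hx e he] }

end PullbackTrivialization

section TrivialOverDisk

theorem nonempty_trivialization_union_box {E M F : Type*} [TopologicalSpace E] [TopologicalSpace M]
    [TopologicalSpace F] [T2Space M] {ι : Type*} [DecidableEq ι] {π : E → M} (hπ : Continuous π)
    {ψ : (ι → ℝ) → M} (hψ : Continuous ψ) {a b : ι → ℝ} {i : ι} {c : ℝ}
    (hc : c ∈ Set.Icc (a i) (b i))
    (S : PullbackTrivialization F π ψ (Set.Icc a (Function.update b i c)))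
    (T : PullbackTrivialization F π ψ (Set.Icc (Function.update a i c) b)) :
    Nonempty (PullbackTrivialization F π ψ (Set.Icc a b)) := by
  have hr : Continuous fun x : ι → ℝ => Function.update x i c := by fun_prop
  have hrS : Set.MapsTo (fun x => Function.update x i c) (Set.Icc (Function.update a i c) b)
      (Set.Icc a (Function.update b i c)) := fun x hx =>
    ⟨le_update_iff.2 ⟨hc.1, (update_le_iff.1 hx.1).2⟩,
      update_le_update_iff.2 ⟨le_rfl, fun j _ => hx.2 j⟩⟩
  have hrT : Set.MapsTo (fun x => Function.update x i c) (Set.Icc (Function.update a i c) b)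
      (Set.Icc (Function.update a i c) b) := fun x hx =>
    ⟨update_le_update_iff.2 ⟨le_rfl, (update_le_iff.1 hx.1).2⟩,
      update_le_iff.2 ⟨hc.2, fun j _ => hx.2 j⟩⟩
  rw [← Icc_update_union_Icc_update hc]
  refine ⟨S.union (S.align T hr hrS hrT) hπ hψ isClosed_Icc isClosed_Icc fun x hxS hxT v =>
    (S.align_toTotal_of_fixed T hr hrS hrT hxT ?_ v).symm⟩
  exact Function.update_eq_self_iff.2
    (le_antisymm (update_le_iff.1 hxT.1).1 (le_update_iff.1 hxS.2).1)

variable {E M F : Type u} [TopologicalSpace E] [TopologicalSpace M] [TopologicalSpace F]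
  [T2Space M] [Nonempty F] {π : E → M}

theorem IsFiberBundle.nonempty_trivialization_box (hπ : IsFiberBundle F π) {ι : Type*} [Finite ι]
    {ψ : (ι → ℝ) → M} (hψ : Continuous ψ) {a₀ b₀ : ι → ℝ} (hab₀ : a₀ ≤ b₀) :
    Nonempty (PullbackTrivialization F π ψ (Set.Icc a₀ b₀)) := by
  classical
  have := Fintype.ofFinite ι
  choose U hU hmem e he using hπ.locTriv
  have : Nonempty E := ⟨(e (ψ a₀)).symm (⟨ψ a₀, hmem _⟩, Classical.arbitrary F)⟩
  obtain ⟨δ, hδ, hball⟩ := lebesgue_number_lemma_of_metric (s := Set.Icc a₀ b₀)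
    (c := fun m => ψ ⁻¹' U m) isCompact_Icc (fun m => (hU m).preimage hψ)
    fun x _ => Set.mem_iUnion.2 ⟨ψ x, hmem _⟩
  refine box_bisection_induction (half_pos hδ)
    (p := fun a b => Set.Icc a b ⊆ Set.Icc a₀ b₀ →
      Nonempty (PullbackTrivialization F π ψ (Set.Icc a b)))
    (fun a b hab hside hsub => ?_) (fun a b i hab hS hT hsub => ?_) hab₀ subset_rfl
  · obtain ⟨m, hm⟩ := hball a (hsub ⟨le_rfl, hab⟩)
    refine ⟨.ofHomeomorph (e m) (he m) hψ fun x hx => hm ?_⟩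
    rw [Metric.mem_ball, dist_pi_lt_iff hδ]
    intro i
    rw [Real.dist_eq, abs_of_nonneg (sub_nonneg.2 (hx.1 i))]
    linarith [hx.2 i, hside i]
  · have hc : (a i + b i) / 2 ∈ Set.Icc (a i) (b i) := by
      constructor <;> linarith [hab i]
    rw [← Icc_update_union_Icc_update hc, Set.union_subset_iff] at hsub
    obtain ⟨S⟩ := hS hsub.1
    obtain ⟨T⟩ := hT hsub.2
    exact nonempty_trivialization_union_box hπ.continuous hψ hc S T

-- `D` is a retract of the Euclidean space, so `g` extends to it.
theorem IsFiberBundle.nonempty_trivialization_of_isClosedEmbedding (hπ : IsFiberBundle F π)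
    {ι : Type} [Finite ι] {D : Type u} [TopologicalSpace D] [TietzeExtension.{0} D] [CompactSpace D]
    {c : D → ι → ℝ} (hc : Topology.IsClosedEmbedding c) (g : C(D, M)) :
    Nonempty (PullbackTrivialization F π g Set.univ) := by
  have := Fintype.ofFinite ι
  obtain ⟨r, hr⟩ := (ContinuousMap.id D).exists_extension hc
  have hbounded := (isCompact_range hc.continuous).isBounded
  obtain ⟨a, ha⟩ := hbounded.bddBelow
  obtain ⟨b, hb⟩ := hbounded.bddAbove
  obtain ⟨T⟩ := hπ.nonempty_trivialization_box (g.comp r).continuous (inf_le_right : a ⊓ b ≤ b)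
  have hgrc : (g.comp r) ∘ c = g := funext fun x => congrArg g (DFunLike.congr_fun hr x)
  exact ⟨hgrc ▸ T.comp hc.continuous fun x =>
    ⟨inf_le_left.trans (ha (Set.mem_range_self x)), hb (Set.mem_range_self x)⟩⟩

theorem IsFiberBundle.nonempty_trivialization_disk (hπ : IsFiberBundle F π) {d : ℕ} {D : Set M}
    (hD : D ≃ₜ closedDisk d) :
    Nonempty (PullbackTrivialization F π (Subtype.val : D → M) Set.univ) := by
  have : CompactSpace (closedDisk d) := isCompact_iff_compactSpace.1 (isCompact_closedBall 0 1)
  have : CompactSpace D := hD.symm.compactSpace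
  have : TietzeExtension.{0} (closedDisk d) :=
    Set.instTietzeExtensionUnitClosedBall (𝕜 := ℝ) (E := EuclideanSpace ℝ (Fin d))
  have : TietzeExtension.{0} D := .of_homeo hD
  have hc : Topology.IsClosedEmbedding fun x : D => WithLp.ofLp (hD x).1 :=
    Continuous.isClosedEmbedding (by fun_prop)
      ((WithLp.ofLp_injective 2).comp (Subtype.val_injective.comp hD.injective))
  exact hπ.nonempty_trivialization_of_isClosedEmbedding hc ⟨_, continuous_subtype_val⟩

end TrivialOverDisk

/-! ### Deforming families of sections near a compact contractible set -/

section Deformation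

theorem homotopic_of_contractible {X F : Type*} [TopologicalSpace X] [TopologicalSpace F]
    [ContractibleSpace X] [PathConnectedSpace F] (f g : C(X, F)) : f.Homotopic g := by
  obtain ⟨x, hx⟩ := id_nullhomotopic X
  have homotopic_const (f : C(X, F)) : f.Homotopic (ContinuousMap.const X (f x)) := by
    simpa using (ContinuousMap.Homotopic.refl f).comp hx
  have : Nonempty X := ⟨x⟩
  exact ((homotopic_const f).trans (ContinuousMap.homotopic_const_iff.2
    (PathConnectedSpace.joined (f x) (g x)))).trans (homotopic_const g).symm

-- The homotopy extension property is applied to the target `C(K, Z)`.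
theorem ClosedCofibration.exists_family_extension {X Z : Type u} {K : Type} [TopologicalSpace X]
    [TopologicalSpace Z] [TopologicalSpace K] [LocallyCompactSpace K] {A : Set X}
    (hA : ClosedCofibration A) (f : C(K × X, Z)) {p q : C(K × A, Z)} (H : p.Homotopy q)
    (hp : ∀ k (a : A), p (k, a) = f (k, a)) :
    ∃ G : C(I × K × X, Z), (∀ k x, G (0, k, x) = f (k, x)) ∧
      ∀ k (a : A), G (1, k, a) = q (k, a) := by
  let f' : C(X, C(K, Z)) := ContinuousMap.curry ⟨fun z => f (z.2, z.1), by fun_prop⟩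
  let H' : C(A × I, C(K, Z)) :=
    ContinuousMap.curry ⟨fun z => H (z.1.2, (z.2, z.1.1)), by fun_prop⟩
  obtain ⟨G, hG₀, hG⟩ := hA.2 (C(K, Z)) f' H' fun a => ContinuousMap.ext fun k =>
    (H.apply_zero (k, a)).trans (hp k a)
  refine ⟨⟨fun z => G (z.2.2, z.1) z.2.1, by fun_prop⟩, fun k x => ?_, fun k a => ?_⟩
  · exact DFunLike.congr_fun (hG₀ x) k
  · exact (DFunLike.congr_fun (hG a 1) k).trans (H.apply_one (k, a))

theorem PullbackTrivialization.exists_deformation {E M F X : Type u} {K : Type}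
    [TopologicalSpace E] [TopologicalSpace M] [TopologicalSpace F] [TopologicalSpace X]
    [TopologicalSpace K] [PathConnectedSpace F] [LocallyCompactSpace K] [ContractibleSpace K]
    {π : E → M} {ψ : X → M} (T : PullbackTrivialization F π ψ Set.univ) {A : Set X}
    (hA : ClosedCofibration A) [ContractibleSpace A] (Φ : C(K × X, E))
    (hΦ : ∀ k x, π (Φ (k, x)) = ψ x) (γ : C(A, E)) (hγ : ∀ a : A, π (γ a) = ψ a) :
    ∃ L : C(I × K × X, E), (∀ t k x, π (L (t, k, x)) = ψ x) ∧
      (∀ k x, L (0, k, x) = Φ (k, x)) ∧ ∀ k (a : A), L (1, k, a) = γ a := by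
  have toFiber_section {Z : Type u} [TopologicalSpace Z] (i : C(Z, X)) (s : C(K × Z, E))
      (hs : ∀ z, π (s z) = ψ (i z.2)) : Continuous fun z => T.toFiber (i z.2, s z) :=
    T.continuousOn_toFiber.comp_continuous (by fun_prop) fun z => ⟨trivial, hs z⟩
  let i : C(A, X) := ⟨_, continuous_subtype_val⟩
  let f : C(K × X, F) := ⟨_, toFiber_section (.id X) Φ fun z => hΦ z.1 z.2⟩
  let p : C(K × A, F) := f.comp ((ContinuousMap.id K).prodMap i)
  let q : C(K × A, F) := ⟨_, toFiber_section i (γ.comp .snd) fun z => hγ z.2⟩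
  obtain ⟨H⟩ := homotopic_of_contractible p q
  obtain ⟨G, hG₀, hG₁⟩ := hA.exists_family_extension f H fun _ _ => rfl
  refine ⟨⟨fun z => T.toTotal (z.2.2, G z), ?_⟩, ?_, ?_, ?_⟩
  · exact T.continuousOn_toTotal.comp_continuous (by fun_prop) fun z => ⟨trivial, trivial⟩
  · exact fun t k x => T.proj_toTotal x trivial _
  · intro k x
    simp only [ContinuousMap.coe_mk, hG₀]
    exact T.toTotal_toFiber x trivial _ (hΦ k x)
  · intro k a
    simp only [ContinuousMap.coe_mk, hG₁]
    exact T.toTotal_toFiber a trivial _ (hγ a)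

theorem continuous_dite_of_eq_compl {X Y : Type*} [TopologicalSpace X] [TopologicalSpace Y]
    {D C : Set X} [DecidablePred (· ∈ D)] (hC : IsClosed C) (hCD : C ⊆ interior D) {f : D → Y}
    {g : X → Y} (hf : Continuous f) (hg : Continuous g) (hfg : ∀ x : D, ↑x ∉ C → f x = g x) :
    Continuous fun x => if hx : x ∈ D then f ⟨x, hx⟩ else g x := by
  rw [continuous_iff_continuousAt]
  intro x
  by_cases hx : x ∈ C
  · have hD : D ∈ 𝓝 x := mem_interior_iff_mem_nhds.1 (hCD hx)
    refine ContinuousOn.continuousAt (s := D) ?_ hD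
    rw [continuousOn_iff_continuous_domRestrict]
    exact hf.congr fun y => by rw [Set.domRestrict_apply, dif_pos y.2]
  · refine hg.continuousAt.congr ?_
    filter_upwards [hC.isOpen_compl.mem_nhds hx] with y hy
    split_ifs with hyD
    exacts [(hfg ⟨y, hyD⟩ hy).symm, rfl]

-- A bump function in the time variable cuts the deformation off.
theorem exists_cutoff_deformation {E M : Type u} {K : Type*} [TopologicalSpace E]
    [TopologicalSpace M] [TopologicalSpace K] [T2Space M] [LocallyCompactSpace M]
    {π : E → M} {A D V : Set M} (hA : IsCompact A) (hAD : A ⊆ interior D) (hV : IsOpen V)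
    (hAV : A ⊆ V) (Φ : C(K, SectionSpace π)) (L : C(I × K × D, E))
    (hL : ∀ t k (x : D), π (L (t, k, x)) = x) (hL₀ : ∀ k (x : D), L (0, k, x) = (Φ k).1 x) :
    ∃ H : C(I × K, SectionSpace π), (∀ k, H (0, k) = Φ k) ∧
      (∀ t k, ∀ x ∉ V, (H (t, k)).1 x = (Φ k).1 x) ∧
      ∀ k (x : D), ↑x ∈ A → (H (1, k)).1 x = L (1, k, x) := by
  classical
  obtain ⟨b, hb₁, -, hbV, hbI⟩ := exists_continuousMap_one_of_isCompact_subset_isOpen hA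
    (isOpen_interior.inter hV) (Set.subset_inter hAD hAV)
  let τ : C(M, I) := ⟨fun x => ⟨b x, hbI x⟩, by fun_prop⟩
  have hτ₀ {x : M} (hx : x ∉ tsupport b) : τ x = 0 :=
    Subtype.ext (image_eq_zero_of_notMem_tsupport (f := b) hx)
  have hτ₁ {x : M} (hx : x ∈ A) : τ x = 1 := Subtype.ext (hb₁ hx)
  let s (z : (I × K) × M) : E :=
    if hx : z.2 ∈ D then L (τ z.2 * z.1.1, z.1.2, ⟨z.2, hx⟩) else (Φ z.1.2).1 z.2
  have hs : Continuous s := by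
    have : Continuous fun k => (Φ k).1 := by fun_prop
    refine continuous_dite_of_eq_compl (D := {z : (I × K) × M | z.2 ∈ D})
      (f := fun z => L (τ z.1.2 * z.1.1.1, z.1.1.2, ⟨z.1.2, z.2⟩))
      ((isClosed_tsupport b).preimage continuous_snd) ?_ (by fun_prop) (by fun_prop) ?_
    · exact fun z hz => preimage_interior_subset_interior_preimage continuous_snd (hbV hz).1
    · intro z hz
      simp only [hτ₀ hz, zero_mul, hL₀]
  have hs_off (t k x) (ht : τ x * t = 0) : s ((t, k), x) = (Φ k).1 x := by
    simp only [s, ht, hL₀, dite_eq_ite, ite_self]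
  have hs_sec (z) : π (s z) = z.2 := by
    by_cases hx : z.2 ∈ D
    · simp only [s, dif_pos hx, hL]
    · simp only [s, dif_neg hx, (Φ z.1.2).2]
  let S : C(I × K, C(M, E)) := ContinuousMap.curry ⟨s, hs⟩
  refine ⟨⟨fun z => ⟨S z, fun x => hs_sec (z, x)⟩, by fun_prop⟩, fun k => ?_, fun t k x hx => ?_,
    fun k x hx => ?_⟩
  · exact Subtype.ext (ContinuousMap.ext fun x => hs_off 0 k x (mul_zero _))
  · exact hs_off t k x (by rw [hτ₀ fun h => hx (hbV h).2, zero_mul])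
  · change s ((1, k), x) = _
    simp only [s, x.2, dif_pos, hτ₁ hx, one_mul, Subtype.coe_eta]

theorem IsFiberBundle.exists_deformation {E M F : Type u} {K : Type} [TopologicalSpace E]
    [TopologicalSpace M] [TopologicalSpace F] [TopologicalSpace K] [T2Space M]
    [LocallyCompactSpace M] [PathConnectedSpace F] [LocallyCompactSpace K] [ContractibleSpace K]
    {d : ℕ} {π : E → M} (hπ : IsFiberBundle F π) (g : GermData π) (hcompact : IsCompact g.Δ)
    [ContractibleSpace g.Δ] {D : Set M} (hD : D ≃ₜ closedDisk d) (hgD : g.Δ ⊆ interior D)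
    (hcofib : ClosedCofibration (X := D) (Subtype.val ⁻¹' g.Δ)) {V : Set M} (hV : IsOpen V)
    (hgV : g.Δ ⊆ V) (Φ : C(K, SectionSpace π)) :
    ∃ H : C(I × K, SectionSpace π), (∀ k, H (0, k) = Φ k) ∧
      (∀ t k, ∀ x ∉ V, (H (t, k)).1 x = (Φ k).1 x) ∧ ∀ k, g.Fixes (H (1, k)) := by
  obtain ⟨T⟩ := hπ.nonempty_trivialization_disk hD
  let A : Set D := Subtype.val ⁻¹' g.Δ
  let eA : A ≃ₜ g.Δ := (Topology.IsEmbedding.subtypeVal.homeomorphImage A).trans <|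
    .setCongr <| (Subtype.image_preimage_coe D g.Δ).trans <|
      Set.inter_eq_right.2 (hgD.trans interior_subset)
  have : ContractibleSpace A := eA.contractibleSpace
  have : Continuous fun k => (Φ k).1 := by fun_prop
  obtain ⟨L, hL, hL₀, hL₁⟩ := T.exists_deformation hcofib
    ⟨fun z => (Φ z.1).1 z.2.1, by fun_prop⟩ (fun k x => (Φ k).2 x)
    ⟨fun a : A => g.sec ⟨a.1, g.subset a.2⟩, by fun_prop⟩ fun a => g.isSec _
  obtain ⟨H, hH₀, hHV, hH₁⟩ := exists_cutoff_deformation hcompact hgD hV hgV Φ L hL hL₀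
  refine ⟨H, hH₀, hHV, fun k x hx => ?_⟩
  exact (hH₁ k ⟨x, interior_subset (hgD hx)⟩ hx).trans (hL₁ k ⟨_, hx⟩)

end Deformation

/-! ### Points of the realization and their normal forms -/

section SupportList

variable {α : Type*} {n : ℕ}

theorem filter_ofFn_succAbove {P : α → Bool} {h : Fin (n + 1) → α} {i : Fin (n + 1)}
    (hi : P (h i) = false) :
    (List.ofFn h).filter P = (List.ofFn fun j => h (i.succAbove j)).filter P := by
  induction n with
  | zero =>
    obtain rfl : i = 0 := Subsingleton.elim (α := Fin 1) i 0
    simp [hi]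
  | succ n ih =>
    cases i using Fin.cases with
    | zero =>
      rw [List.ofFn_succ, List.filter_cons_of_neg (by simp [hi])]
      simp only [Fin.zero_succAbove]
    | succ k =>
      rw [List.ofFn_succ, List.ofFn_succ (f := fun j => h (k.succ.succAbove j)), List.filter_cons,
        List.filter_cons, ih (h := fun j => h j.succ) hi]
      simp only [Fin.succ_succAbove_zero, Fin.succ_succAbove_succ]

theorem filter_eq_of_sublist_of_nodup {P : α → Bool} {l₀ l : List α} (h : l₀.Sublist l)
    (hl : l.Nodup) (hP : ∀ a ∈ l, a ∉ l₀ → P a = false) : l.filter P = l₀.filter P := by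
  induction h with
  | slnil => rfl
  | cons a h ih =>
    rw [List.nodup_cons] at hl
    rw [List.filter_cons_of_neg, ih hl.2 fun b hb => hP b (List.mem_cons_of_mem a hb)]
    simp [hP a List.mem_cons_self fun ha => hl.1 (h.subset ha)]
  | cons_cons a _ ih =>
    rw [List.nodup_cons] at hl
    rw [List.filter_cons, List.filter_cons, ih hl.2 fun b hb hb₀ =>
      hP b (List.mem_cons_of_mem a hb) (by simp [hb₀, ne_of_mem_of_not_mem hb hl.1])]

/-- The points of a tuple `g` at which the coordinates `t` do not vanish, in order, together with
these coordinates. -/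
noncomputable def supportList (g : Fin n → α) (t : Fin n → ℝ) : List (α × ℝ) :=
  (List.ofFn fun i => (g i, t i)).filter fun z => z.2 ≠ 0

theorem mem_supportList {g : Fin n → α} {t : Fin n → ℝ} {z : α × ℝ} :
    z ∈ supportList g t ↔ ∃ i, t i ≠ 0 ∧ z = (g i, t i) := by
  simp only [supportList, List.mem_filter, List.mem_ofFn, decide_eq_true_eq]
  constructor
  · rintro ⟨⟨i, rfl⟩, hi⟩
    exact ⟨i, hi, rfl⟩
  · rintro ⟨i, hi, rfl⟩
    exact ⟨⟨i, rfl⟩, hi⟩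

theorem filter_supportList (g : Fin n → α) (t : Fin n → ℝ) :
    (supportList g t).filter (fun z => z.2 ≠ 0) = supportList g t := by
  simp only [supportList, List.filter_filter, Bool.and_self]

theorem supportList_eq_ofFn {g : Fin n → α} {t : Fin n → ℝ} (ht : ∀ i, t i ≠ 0) :
    supportList g t = List.ofFn fun i => (g i, t i) := by
  simpa [supportList] using ht

theorem supportList_succAbove {g : Fin (n + 1) → α} {t : Fin (n + 1) → ℝ} {i : Fin (n + 1)}
    (hi : t i = 0) :
    supportList g t = supportList (fun j => g (i.succAbove j)) fun j => t (i.succAbove j) :=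
  filter_ofFn_succAbove (by simp [hi])

theorem supportList_comp (g : Fin n → α) (c : α → ℝ) :
    supportList g (c ∘ g) = ((List.ofFn g).filter fun w => c w ≠ 0).map fun w => (w, c w) := by
  have h : (List.ofFn fun i => (g i, (c ∘ g) i)) = (List.ofFn g).map fun w => (w, c w) :=
    .symm <| List.map_ofFn (f := g)
  rw [supportList, h, List.filter_map]
  rfl

theorem map_fst_supportList (g : Fin n → α) (t : Fin n → ℝ) :
    (supportList g t).map Prod.fst = ((List.finRange n).filter fun i => t i ≠ 0).map g := by
  rw [supportList, List.ofFn_eq_map, List.filter_map, List.map_map]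
  rfl

theorem sum_map_snd_supportList (g : Fin n → α) (t : Fin n → ℝ) :
    ((supportList g t).map Prod.snd).sum = ∑ i, t i := by
  have sum_filter (l : List (α × ℝ)) :
      ((l.filter fun z => z.2 ≠ 0).map Prod.snd).sum = (l.map Prod.snd).sum := by
    induction l with
    | nil => rfl
    | cons z l ih => by_cases hz : z.2 = 0 <;> simp [hz, ← ih]
  rw [supportList, sum_filter, List.map_ofFn, List.sum_ofFn]
  rfl

end SupportList

section Realization

variable {E M : Type u} [TopologicalSpace E] [TopologicalSpace M]
  {π : E → M} {W : Set (GermData π)} {p : ℕ}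

theorem simplexFace_apply_self (i : Fin (p + 2)) (t : stdSimplex ℝ (Fin (p + 1))) :
    (simplexFace i t).1 i = 0 := by simp [simplexFace]

theorem simplexFace_apply_succAbove (i : Fin (p + 2)) (t : stdSimplex ℝ (Fin (p + 1)))
    (j : Fin (p + 1)) : (simplexFace i t).1 (i.succAbove j) = t.1 j := by simp [simplexFace]

theorem exists_eq_simplexFace {i : Fin (p + 2)} {t : stdSimplex ℝ (Fin (p + 2))}
    (hi : t.1 i = 0) : ∃ t' : stdSimplex ℝ (Fin (p + 1)), t = simplexFace i t' := by
  refine ⟨⟨fun j => t.1 (i.succAbove j), fun j => t.2.1 _, ?_⟩, Subtype.ext (funext fun j => ?_)⟩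
  · simpa [Fin.sum_univ_succAbove _ i, hi] using t.2.2
  · cases j using i.succAboveCases with
    | x => exact hi.trans (simplexFace_apply_self i _).symm
    | p j => rw [simplexFace_apply_succAbove]

/-- The point of `||Y_•||` given by a tuple `g`, a section `f` fixing `g` and barycentric
coordinates `t`. -/
def mkY (g : TupW π W p) (f : relSections g.1) (t : stdSimplex ℝ (Fin (p + 1))) :
    YRealization π W :=
  Quot.mk _ ⟨p, ⟨g, f⟩, t⟩

theorem continuous_mkY (g : TupW π W p) :
    Continuous fun z : relSections g.1 × stdSimplex ℝ (Fin (p + 1)) => mkY g z.1 z.2 := by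
  have h : Continuous (Sigma.mk g : _ → Yspace π W p) := continuous_sigmaMk
  exact continuous_quot_mk.comp (continuous_sigmaMk.comp (h.prodMap continuous_id))

theorem exists_mkY (y : YRealization π W) :
    ∃ (p : ℕ) (g : TupW π W p) (f : relSections g.1) (t : stdSimplex ℝ (Fin (p + 1))),
      y = mkY g f t := by
  rcases y with ⟨p, ⟨g, f⟩, t⟩
  exact ⟨p, g, f, t, rfl⟩

theorem mkY_simplexFace (i : Fin (p + 2)) (g : TupW π W (p + 1)) (f : relSections g.1)
    (t : stdSimplex ℝ (Fin (p + 1))) :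
    mkY g f (simplexFace i t) = mkY (g.face i) ⟨f.1, fun j => f.2 (i.succAbove j)⟩ t :=
  (Quot.sound (YRel.glue p i ⟨g, f⟩ t)).symm

theorem exists_mkY_pos (y : YRealization π W) :
    ∃ (p : ℕ) (g : TupW π W p) (f : relSections g.1) (t : stdSimplex ℝ (Fin (p + 1))),
      (∀ i, 0 < t.1 i) ∧ y = mkY g f t := by
  obtain ⟨p, g, f, t, rfl⟩ := exists_mkY y
  induction p with
  | zero =>
    refine ⟨0, g, f, t, fun i => ?_, rfl⟩
    have ht : t.1 0 = 1 := by simpa using t.2.2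
    rw [Subsingleton.elim (α := Fin 1) i 0, ht]
    exact one_pos
  | succ p ih =>
    by_cases! h : ∀ i, 0 < t.1 i
    · exact ⟨p + 1, g, f, t, h, rfl⟩
    · obtain ⟨i, hi⟩ := h
      obtain ⟨t', rfl⟩ := exists_eq_simplexFace (le_antisymm hi (t.2.1 i))
      rw [mkY_simplexFace]
      exact ih _ _ _

theorem continuous_prod_realization {T Z : Type*} [TopologicalSpace T] [LocallyCompactSpace T]
    [TopologicalSpace Z] {F : T × YRealization π W → Z}
    (hF : ∀ (p : ℕ) (g : TupW π W p), Continuous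
      fun z : T × (relSections g.1 × stdSimplex ℝ (Fin (p + 1))) =>
        F (z.1, mkY g z.2.1 z.2.2)) : Continuous F := by
  refine isQuotientMap_quot_mk.continuous_lift_prod_right (continuous_iff_continuousAt.2 ?_)
  rintro ⟨s, p, ⟨g, f⟩, t⟩
  have hg : Topology.IsOpenEmbedding (Sigma.mk g : _ → Yspace π W p) := .sigmaMk
  have hp : Topology.IsOpenEmbedding (Sigma.mk p : _ → YPre π W) := .sigmaMk
  have hpg := Topology.IsOpenEmbedding.id (X := T) |>.prodMap (hp.comp (hg.prodMap .id))
  exact (hpg.continuousAt_iff (x := (s, f, t))).1 (hF p g).continuousAt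

theorem continuous_realization {Z : Type*} [TopologicalSpace Z] {F : YRealization π W → Z}
    (hF : ∀ (p : ℕ) (g : TupW π W p), Continuous
      fun z : relSections g.1 × stdSimplex ℝ (Fin (p + 1)) => F (mkY g z.1 z.2)) :
    Continuous F :=
  (continuous_prod_realization (T := Unit) (F := fun z => F z.2)
    fun p g => (hF p g).comp continuous_snd).comp (Continuous.prodMk_right ())

theorem continuous_forgetY : Continuous (forgetY π W) :=
  continuous_realization fun _ _ => continuous_subtype_val.comp continuous_fst

/-- The normal form of a point of `||Y_•||`: the list of its germs with their nonzero barycentric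
coordinates. Together with the underlying section it determines the point. -/
noncomputable def normalForm : YRealization π W → List (GermData π × ℝ) :=
  Quot.lift (fun a => supportList a.2.1.1.1 a.2.2.1) (by
    rintro _ _ ⟨p, i, y, t⟩
    rw [supportList_succAbove (simplexFace_apply_self i t)]
    simp only [simplexFace_apply_succAbove]
    rfl)

theorem normalForm_mkY (g : TupW π W p) (f : relSections g.1) (t : stdSimplex ℝ (Fin (p + 1))) :
    normalForm (mkY g f t) = supportList g.1 t.1 := rfl

theorem filter_normalForm (y : YRealization π W) :
    (normalForm y).filter (fun z => z.2 ≠ 0) = normalForm y := by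
  obtain ⟨p, g, f, t, rfl⟩ := exists_mkY y
  exact filter_supportList _ _

theorem eq_of_normalForm_eq {y y' : YRealization π W} (hf : forgetY π W y = forgetY π W y')
    (hn : normalForm y = normalForm y') : y = y' := by
  obtain ⟨p, g, f, t, ht, rfl⟩ := exists_mkY_pos y
  obtain ⟨p', g', f', t', ht', rfl⟩ := exists_mkY_pos y'
  rw [normalForm_mkY, normalForm_mkY, supportList_eq_ofFn fun i => (ht i).ne',
    supportList_eq_ofFn fun i => (ht' i).ne'] at hn
  obtain rfl : p = p' := by simpa using congrArg List.length hn
  have hgt := congrFun (List.ofFn_injective hn)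
  obtain rfl : g = g' := Subtype.ext (funext fun i => congrArg Prod.fst (hgt i))
  obtain rfl : t = t' := Subtype.ext (funext fun i => congrArg Prod.snd (hgt i))
  obtain rfl : f = f' := Subtype.ext hf
  rfl

end Realization

/-! ### Maps into the realization given by local data -/

section ConeList

variable {α : Type*} {n : ℕ}

/-- The effect on normal forms of moving a point towards the vertex `w`, which is placed first: the
coordinate of `w` is `s`, and the other coordinates are scaled by `1 - s`. -/
noncomputable def coneList (w : α) (s : ℝ) (l : List (α × ℝ)) : List (α × ℝ) :=
  ((w, s) :: l.map fun z => (z.1, (1 - s) * z.2)).filter fun z => z.2 ≠ 0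

theorem supportList_cons (w : α) (g : Fin n → α) (s : ℝ) (t : Fin n → ℝ) :
    supportList (Fin.cons w g : Fin (n + 1) → α) (Fin.cons s ((1 - s) • t)) =
      coneList w s (supportList g t) := by
  have h (l : List (α × ℝ)) :
      (l.map fun z => (z.1, (1 - s) * z.2)).filter (fun z => z.2 ≠ 0) =
        ((l.filter fun z => z.2 ≠ 0).map fun z => (z.1, (1 - s) * z.2)).filter
          fun z => z.2 ≠ 0 := by
    simp only [List.filter_map, List.filter_filter]
    congr 2
    ext z
    simp
  rw [supportList, coneList, List.ofFn_succ, List.filter_cons, List.filter_cons, supportList, ← h,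
    List.map_ofFn]
  rfl

theorem coneList_zero {w : α} {l : List (α × ℝ)} (hl : l.filter (fun z => z.2 ≠ 0) = l) :
    coneList w 0 l = l := by
  simpa [coneList] using hl

theorem coneList_one (w : α) (l : List (α × ℝ)) : coneList w 1 l = [(w, 1)] := by
  have h : ∀ z ∈ l.map fun z => (z.1, (1 - 1 : ℝ) * z.2), z.2 = 0 := by
    simp only [sub_self, zero_mul, List.mem_map]
    rintro _ ⟨z, -, rfl⟩
    rfl
  rw [coneList, List.filter_cons_of_pos (by simp), List.filter_eq_nil_iff.2 (by simpa using h)]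

end ConeList

section LocallyPresented

variable {E M : Type u} {X Z : Type*} [TopologicalSpace E] [TopologicalSpace M]
  [TopologicalSpace X] [TopologicalSpace Z] {π : E → M} {S W : Set (GermData π)}
  {f f' : X → SectionSpace π} {N : X → List (GermData π × ℝ)}

/-- Near each point of `X`, the sections `f` and the normal forms `N` come from a tuple of germs
in `S` with continuously varying barycentric coordinates. Such data describe a continuous map from
`X` to the realization. -/
def LocallyPresented (S : Set (GermData π)) (f : X → SectionSpace π)
    (N : X → List (GermData π × ℝ)) : Prop :=
  ∀ x, ∃ (p : ℕ) (g : TupW π S p) (θ : C(X, Fin (p + 1) → ℝ)), ∀ᶠ x' in 𝓝 x,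
    θ x' ∈ stdSimplex ℝ (Fin (p + 1)) ∧ f x' ∈ relSections g.1 ∧ N x' = supportList g.1 (θ x')

namespace LocallyPresented

theorem exists_continuousMap (h : LocallyPresented W f N) (hf : Continuous f) :
    ∃ F : C(X, YRealization π W), ∀ x, forgetY π W (F x) = f x ∧ normalForm (F x) = N x := by
  choose p g θ hθ using h
  let F (x : X) : YRealization π W :=
    mkY (g x) ⟨f x, (hθ x).self_of_nhds.2.1⟩ ⟨θ x x, (hθ x).self_of_nhds.1⟩
  have hF (x : X) : normalForm (F x) = N x := (hθ x).self_of_nhds.2.2.symm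
  refine ⟨⟨F, continuous_iff_continuousAt.2 fun x => ?_⟩, fun x => ⟨rfl, hF x⟩⟩
  obtain ⟨U, hU, hUo, hxU⟩ := eventually_nhds_iff.1 (hθ x)
  refine ContinuousOn.continuousAt (s := U) ?_ (hUo.mem_nhds hxU)
  rw [continuousOn_iff_continuous_domRestrict]
  have hFx : U.domRestrict F = fun x' : U => mkY (g x) ⟨f x', (hU x' x'.2).2.1⟩
      ⟨θ x x', (hU x' x'.2).1⟩ :=
    funext fun x' => eq_of_normalForm_eq rfl ((hF x').trans (hU x' x'.2).2.2)
  rw [hFx]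
  exact (continuous_mkY (g x)).comp
    (((hf.comp continuous_subtype_val).subtype_mk _).prodMk
      (((θ x).continuous.comp continuous_subtype_val).subtype_mk _))

theorem comp (h : LocallyPresented S f N) (k : C(Z, X)) :
    LocallyPresented S (f ∘ k) (N ∘ k) := fun z => by
  obtain ⟨p, g, θ, hθ⟩ := h (k z)
  exact ⟨p, g, θ.comp k, k.continuous.continuousAt.eventually hθ⟩

theorem mono (h : LocallyPresented S f N) (hS : S ⊆ W) : LocallyPresented W f N := fun x => by
  obtain ⟨p, g, hg⟩ := h x
  exact ⟨p, ⟨g.1, fun i => hS (g.2.1 i), g.2.2⟩, hg⟩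

theorem congr_section (h : LocallyPresented S f N)
    (hf : ∀ x, ∀ g ∈ S, g.Fixes (f x) → g.Fixes (f' x)) : LocallyPresented S f' N := fun x => by
  obtain ⟨p, g, θ, hθ⟩ := h x
  exact ⟨p, g, θ, hθ.mono fun x' hx' =>
    ⟨hx'.1, fun i => hf x' _ (g.2.1 i) (hx'.2.1 i), hx'.2.2⟩⟩

theorem exists_finite [CompactSpace X] (h : LocallyPresented S f N) :
    ∃ S' ⊆ S, S'.Finite ∧ LocallyPresented S' f N := by
  choose p g θ hθ using h
  obtain ⟨T, hT⟩ := CompactSpace.elim_nhds_subcover _ fun x => eventually_eventually_nhds.2 (hθ x)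
  refine ⟨⋃ x ∈ T, Set.range (g x).1, ?_, T.finite_toSet.biUnion fun x _ => Set.finite_range _,
    fun x' => ?_⟩
  · exact Set.iUnion₂_subset fun x _ => Set.range_subset_iff.2 (g x).2.1
  · obtain ⟨x, hx, hx'⟩ := Set.mem_iUnion₂.1 (hT.ge (Set.mem_univ x'))
    exact ⟨p x, ⟨(g x).1, fun i => Set.mem_iUnion₂.2 ⟨x, hx, i, rfl⟩, (g x).2.2⟩, θ x,
      hx'⟩

theorem cone (h : LocallyPresented S f N) {w : GermData π} (hw : ∀ x, w.Fixes (f x))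
    (hwS : ∀ g ∈ S, Disjoint w.Δ g.Δ) :
    LocallyPresented (insert w S) (fun z : I × X => f z.2)
      fun z => coneList w z.1 (N z.2) := fun ⟨s, x⟩ => by
  obtain ⟨p, g, θ, hθ⟩ := h x
  refine ⟨p + 1, ⟨Fin.cons w g.1, ?_, ?_⟩,
    ⟨fun z => Fin.cons (z.1 : ℝ) ((1 - z.1 : ℝ) • θ z.2), by fun_prop⟩,
    (continuousAt_snd.eventually hθ).mono ?_⟩
  · exact Fin.cases (Set.mem_insert _ _) fun i => Set.mem_insert_of_mem _ (g.2.1 i)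
  · refine Fin.cases (Fin.cases (by simp) fun j _ => hwS _ (g.2.1 j)) fun i =>
      Fin.cases (fun _ => (hwS _ (g.2.1 i)).symm) fun j hij => g.2.2 i j ?_
    exact fun h => hij (congrArg Fin.succ h)
  · rintro ⟨s, x⟩ ⟨hθ, hf, hN⟩
    refine ⟨⟨Fin.cases s.2.1 fun i => mul_nonneg (sub_nonneg.2 s.2.2) (hθ.1 i), ?_⟩,
      Fin.cases (hw x) hf, ?_⟩
    · simp [Fin.sum_univ_succ, ← Finset.mul_sum, hθ.2]
    · exact (congrArg (coneList w s) hN).trans (supportList_cons w g.1 s (θ x)).symm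

end LocallyPresented

theorem locallyPresented_vertex {w : GermData π} (hw : ∀ x, w.Fixes (f x)) :
    LocallyPresented {w} f fun _ => [(w, 1)] := fun _ =>
  ⟨0, ⟨fun _ => w, fun _ => rfl, fun i j hij => (hij (Subsingleton.elim (α := Fin 1) i j)).elim⟩,
    .const _ 1, .of_forall fun x => ⟨by simp [stdSimplex], fun _ => hw x, by simp [supportList]⟩⟩

end LocallyPresented

/-! ### Pushing small barycentric coordinates to zero -/

section Squish

variable {n p : ℕ}

/-- Half the sum of squares of the coordinates: a threshold which depends continuously on a point
of a simplex, is compatible with face inclusions, and lies strictly between zero and the largest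
coordinate. -/
noncomputable def thresh (t : Fin n → ℝ) : ℝ := (∑ i, t i ^ 2) / 2

theorem continuous_thresh : Continuous (thresh (n := n)) := by
  unfold thresh
  fun_prop

theorem thresh_simplexFace (i : Fin (p + 2)) (t : stdSimplex ℝ (Fin (p + 1))) :
    thresh (simplexFace i t).1 = thresh t.1 := by
  simp only [thresh, Fin.sum_univ_succAbove _ i, simplexFace_apply_self,
    simplexFace_apply_succAbove, ne_eq, OfNat.ofNat_ne_zero, not_false_eq_true, zero_pow, zero_add]

theorem thresh_pos (t : stdSimplex ℝ (Fin n)) : 0 < thresh t.1 := by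
  obtain ⟨i, hi⟩ : ∃ i, t.1 i ≠ 0 := by
    by_contra! h
    simpa [h] using t.2.2
  exact half_pos (Finset.sum_pos' (fun i _ => sq_nonneg _) ⟨i, Finset.mem_univ i, by positivity⟩)

theorem exists_thresh_lt (t : stdSimplex ℝ (Fin n)) : ∃ i, thresh t.1 < t.1 i := by
  by_contra! h
  have hsq : 2 * thresh t.1 ≤ thresh t.1 := calc
    2 * thresh t.1 = ∑ i, t.1 i * t.1 i := by simp only [thresh, sq]; ring
    _ ≤ ∑ i, thresh t.1 * t.1 i :=
      Finset.sum_le_sum fun i _ => mul_le_mul_of_nonneg_right (h i) (t.2.1 i)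
    _ = thresh t.1 := by rw [← Finset.mul_sum, t.2.2, mul_one]
  linarith [thresh_pos t]

/-- The coordinates `t`, lowered by `s` times the threshold and cut off at zero. -/
noncomputable def cut (s : ℝ) (t : Fin n → ℝ) (i : Fin n) : ℝ := max (t i - s * thresh t) 0

theorem cut_nonneg (s : ℝ) (t : Fin n → ℝ) (i : Fin n) : 0 ≤ cut s t i := le_max_right _ _

theorem cut_sum_pos (s : I) (t : stdSimplex ℝ (Fin n)) : 0 < ∑ i, cut s t.1 i := by
  obtain ⟨i, hi⟩ := exists_thresh_lt t
  refine Finset.sum_pos' (fun i _ => cut_nonneg _ _ _)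
    ⟨i, Finset.mem_univ _, lt_max_of_lt_left (sub_pos.2 ?_)⟩
  exact (mul_le_of_le_one_left (thresh_pos t).le s.2.2).trans_lt hi

theorem cut_simplexFace_self (s : I) (i : Fin (p + 2)) (t : stdSimplex ℝ (Fin (p + 1))) :
    cut s (simplexFace i t).1 i = 0 := by
  rw [cut, simplexFace_apply_self, zero_sub]
  exact max_eq_right (neg_nonpos.2 (mul_nonneg s.2.1 (thresh_pos _).le))

theorem cut_simplexFace_succAbove (s : ℝ) (i : Fin (p + 2)) (t : stdSimplex ℝ (Fin (p + 1)))
    (j : Fin (p + 1)) : cut s (simplexFace i t).1 (i.succAbove j) = cut s t.1 j := by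
  simp only [cut, thresh_simplexFace, simplexFace_apply_succAbove]

/-- The homotopy of a simplex which at time one kills all coordinates below the threshold. -/
noncomputable def squish (s : I) (t : stdSimplex ℝ (Fin n)) : stdSimplex ℝ (Fin n) :=
  ⟨fun i => cut s t.1 i / ∑ j, cut s t.1 j,
    fun i => div_nonneg (cut_nonneg _ _ _) (cut_sum_pos s t).le,
    by rw [← Finset.sum_div, div_self (cut_sum_pos s t).ne']⟩

theorem continuous_squish :
    Continuous fun z : I × stdSimplex ℝ (Fin n) => squish z.1 z.2 := by
  have hcut (i : Fin n) : Continuous fun z : I × stdSimplex ℝ (Fin n) => cut z.1 z.2.1 i := by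
    have ht : Continuous fun z : I × stdSimplex ℝ (Fin n) => z.2.1 := by fun_prop
    have hs : Continuous fun z : I × stdSimplex ℝ (Fin n) => (z.1 : ℝ) := by fun_prop
    exact (((continuous_apply i).comp ht).sub (hs.mul (continuous_thresh.comp ht))).max
      continuous_const
  exact (continuous_pi fun i => (hcut i).div (continuous_finsetSum _ fun j _ => hcut j)
    fun z => (cut_sum_pos z.1 z.2).ne').subtype_mk _

theorem squish_zero (t : stdSimplex ℝ (Fin n)) : squish 0 t = t := by
  have hcut (j : Fin n) : cut (0 : I) t.1 j = t.1 j := by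
    simpa [cut] using t.2.1 j
  refine Subtype.ext (funext fun i => ?_)
  simp only [squish, hcut, t.2.2, div_one]

theorem squish_one_apply_eq_zero {t : stdSimplex ℝ (Fin n)} {i : Fin n} (hi : t.1 i ≤ thresh t.1) :
    (squish 1 t).1 i = 0 := by
  have hcut : cut (1 : I) t.1 i = 0 := by simpa [cut] using hi
  exact div_eq_zero_iff.2 (.inl hcut)

theorem squish_simplexFace (s : I) (i : Fin (p + 2)) (t : stdSimplex ℝ (Fin (p + 1))) :
    squish s (simplexFace i t) = simplexFace i (squish s t) := by
  refine Subtype.ext (funext fun j => ?_)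
  simp only [squish, Fin.sum_univ_succAbove _ i, cut_simplexFace_self, cut_simplexFace_succAbove,
    zero_add]
  cases j using i.succAboveCases with
  | x => rw [simplexFace_apply_self, cut_simplexFace_self, zero_div]
  | p j => rw [simplexFace_apply_succAbove, cut_simplexFace_succAbove]

variable {E M : Type u} [TopologicalSpace E] [TopologicalSpace M]
  {π : E → M} {W : Set (GermData π)}

/-- The homotopy of `||Y_•||` over `Γ(E)` induced by the homotopies `squish` of the simplices. -/
noncomputable def squishY (s : I) : YRealization π W → YRealization π W :=
  Quot.map (fun a => ⟨a.1, a.2.1, squish s a.2.2⟩) (by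
    rintro _ _ ⟨p, i, y, t⟩
    dsimp only
    rw [squish_simplexFace]
    exact YRel.glue p i y _)

theorem squishY_mkY (s : I) (g : TupW π W p) (f : relSections g.1)
    (t : stdSimplex ℝ (Fin (p + 1))) : squishY s (mkY g f t) = mkY g f (squish s t) := rfl

theorem continuous_squishY : Continuous fun z : I × YRealization π W => squishY z.1 z.2 :=
  continuous_prod_realization fun p g => (continuous_mkY g).comp <|
    (by fun_prop : Continuous fun z : I × relSections g.1 × stdSimplex ℝ (Fin (p + 1)) =>
      z.2.1).prodMk (continuous_squish.comp (by fun_prop :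
        Continuous fun z : I × relSections g.1 × stdSimplex ℝ (Fin (p + 1)) => (z.1, z.2.2)))

theorem squishY_zero (y : YRealization π W) : squishY 0 y = y := by
  obtain ⟨p, g, f, t, rfl⟩ := exists_mkY y
  rw [squishY_mkY, squish_zero]

theorem forgetY_squishY (s : I) (y : YRealization π W) :
    forgetY π W (squishY s y) = forgetY π W y := by
  obtain ⟨p, g, f, t, rfl⟩ := exists_mkY y
  rfl

end Squish

section StarNeighborhood

variable {E M : Type u} [TopologicalSpace E] [TopologicalSpace M]
  {π : E → M} {W : Set (GermData π)} {n p : ℕ}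

/-- The barycentric coordinate of a point of `||Y_•||` at a germ. -/
noncomputable def coordY (w : GermData π) : YRealization π W → ℝ :=
  open Classical in
  Quot.lift (fun a => ∑ i, if a.2.1.1.1 i = w then a.2.2.1 i else 0) (by
    rintro _ _ ⟨p, i, y, t⟩
    simp only [Fin.sum_univ_succAbove _ i, simplexFace_apply_self, simplexFace_apply_succAbove,
      ite_self, zero_add]
    rfl)

/-- The threshold as a function on `||Y_•||`. -/
noncomputable def threshY : YRealization π W → ℝ :=
  Quot.lift (fun a => thresh a.2.2.1) (by
    rintro _ _ ⟨p, i, y, t⟩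
    exact (thresh_simplexFace i t).symm)

open Classical in
theorem coordY_mkY (w : GermData π) (g : TupW π W p) (f : relSections g.1)
    (t : stdSimplex ℝ (Fin (p + 1))) :
    coordY w (mkY g f t) = ∑ i, if g.1 i = w then t.1 i else 0 := rfl

theorem continuous_coordY (w : GermData π) : Continuous (coordY (W := W) w) := by
  classical
  refine continuous_realization fun p g => ?_
  simp only [coordY_mkY]
  refine continuous_finsetSum _ fun i _ => ?_
  split_ifs
  · exact (continuous_apply i).comp (continuous_subtype_val.comp continuous_snd)
  · exact continuous_const

theorem coordY_nonneg (w : GermData π) (y : YRealization π W) : 0 ≤ coordY w y := by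
  classical
  obtain ⟨p, g, f, t, rfl⟩ := exists_mkY y
  rw [coordY_mkY]
  exact Finset.sum_nonneg fun i _ => by split_ifs; exacts [t.2.1 i, le_rfl]

theorem TupW.injective (hW : ∀ g ∈ W, g.Δ.Nonempty) (g : TupW π W p) : Function.Injective g.1 := by
  refine fun i j hij => by_contra fun hne => (hW _ (g.2.1 i)).ne_empty ?_
  simpa [hij] using g.2.2 i j hne

theorem coordY_mkY_self (hW : ∀ g ∈ W, g.Δ.Nonempty) (g : TupW π W p) (f : relSections g.1)
    (t : stdSimplex ℝ (Fin (p + 1))) (i : Fin (p + 1)) :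
    coordY (g.1 i) (mkY g f t) = t.1 i := by
  classical
  simp [coordY_mkY, (g.injective hW).eq_iff]

theorem sum_normalForm (y : YRealization π W) : ((normalForm y).map Prod.snd).sum = 1 := by
  obtain ⟨p, g, f, t, rfl⟩ := exists_mkY y
  rw [normalForm_mkY, sum_map_snd_supportList, t.2.2]

/-- The points of `||Y_•||` whose germs include the tuple `g₀`, in order, and whose coordinates at
all other germs are below the threshold. -/
def starNhd (W : Set (GermData π)) (g₀ : Fin n → GermData π) : Set (YRealization π W) :=
  {y | (List.ofFn g₀).Sublist ((normalForm y).map Prod.fst) ∧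
    ∀ z ∈ normalForm y, z.1 ∉ Set.range g₀ → z.2 < threshY y}

theorem mkY_mem_starNhd {g : TupW π W p} {f : relSections g.1} {t : stdSimplex ℝ (Fin (p + 1))}
    (ht : ∀ i, 0 < t.1 i) : mkY g f t ∈ starNhd W g.1 := by
  refine ⟨?_, fun z hz hzg => ?_⟩
  · rw [normalForm_mkY, supportList_eq_ofFn fun i => (ht i).ne', List.map_ofFn]
    exact List.Sublist.refl _
  · obtain ⟨i, -, rfl⟩ := mem_supportList.1 hz
    exact (hzg ⟨i, rfl⟩).elim

theorem isOpen_setOf_sublist_support {α : Type*} (l : List α) (g : Fin n → α) :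
    IsOpen {t : Fin n → ℝ | l.Sublist ((supportList g t).map Prod.fst)} := by
  refine isOpen_iff_mem_nhds.2 fun t ht => ?_
  have hsupp : ∀ᶠ t' in 𝓝 t, ∀ i, t i ≠ 0 → t' i ≠ 0 := Filter.eventually_all.2 fun i =>
    Filter.eventually_imp_distrib_left.2 fun hi =>
      (continuous_apply i).continuousAt.eventually_ne hi
  filter_upwards [hsupp] with t' ht'
  refine List.Sublist.trans ht ?_
  rw [map_fst_supportList, map_fst_supportList]
  exact (List.monotone_filter_right _ fun i => by simpa using ht' i).map g

theorem isOpen_setOf_lt_thresh {α : Type*} (A : Set α) (g : Fin n → α) :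
    IsOpen {t : stdSimplex ℝ (Fin n) | ∀ z ∈ supportList g t.1, z.1 ∉ A → z.2 < thresh t.1} := by
  have heq : {t : stdSimplex ℝ (Fin n) | ∀ z ∈ supportList g t.1, z.1 ∉ A → z.2 < thresh t.1} =
      ⋂ i, {t | g i ∉ A → t.1 i < thresh t.1} := by
    ext t
    simp only [mem_supportList, Set.mem_ofPred_eq, Set.mem_iInter]
    refine ⟨fun h i hi => ?_, ?_⟩
    · by_cases hti : t.1 i = 0
      · exact hti ▸ thresh_pos t
      · exact h _ ⟨i, hti, rfl⟩ hi
    · rintro h _ ⟨i, -, rfl⟩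
      exact h i
  rw [heq]
  refine isOpen_iInter_of_finite fun i => ?_
  by_cases hi : g i ∈ A
  · simp [hi]
  · simp only [hi, not_false_eq_true, forall_const]
    exact isOpen_lt ((continuous_apply i).comp continuous_subtype_val)
      (continuous_thresh.comp continuous_subtype_val)

theorem isOpen_starNhd (g₀ : Fin n → GermData π) : IsOpen (starNhd W g₀) := by
  refine (continuous_Prop.1 (continuous_realization fun p g => continuous_Prop.2 ?_)).inter
    (continuous_Prop.1 (continuous_realization fun p g => continuous_Prop.2 ?_))
  · exact (isOpen_setOf_sublist_support _ g.1).preimage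
      (continuous_subtype_val.comp continuous_snd)
  · exact (isOpen_setOf_lt_thresh _ g.1).preimage continuous_snd

theorem ofFn_sublist_of_mkY_mem_starNhd {g₀ : Fin n → GermData π} {g : TupW π W p}
    {f : relSections g.1} {t : stdSimplex ℝ (Fin (p + 1))} (h : mkY g f t ∈ starNhd W g₀) :
    (List.ofFn g₀).Sublist (List.ofFn g.1) := by
  refine h.1.trans ?_
  rw [normalForm_mkY, map_fst_supportList, List.ofFn_eq_map]
  exact List.filter_sublist.map g.1

theorem forgetY_mem_relSections {g₀ : Fin n → GermData π} {y : YRealization π W}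
    (hy : y ∈ starNhd W g₀) : forgetY π W y ∈ relSections g₀ := fun j => by
  obtain ⟨p, g, f, t, rfl⟩ := exists_mkY y
  obtain ⟨i, hi⟩ := List.mem_ofFn.1 ((ofFn_sublist_of_mkY_mem_starNhd hy).subset
    (List.mem_ofFn.2 ⟨j, rfl⟩))
  exact hi ▸ f.2 i

theorem normalForm_squishY_one (hW : ∀ g ∈ W, g.Δ.Nonempty) {g₀ : Fin n → GermData π}
    {y : YRealization π W} (hy : y ∈ starNhd W g₀) :
    normalForm (squishY 1 y) = supportList g₀ fun j => coordY (g₀ j) (squishY 1 y) := by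
  obtain ⟨p, g, f, t, rfl⟩ := exists_mkY y
  let c (w : GermData π) : ℝ := coordY w (mkY g f (squish 1 t))
  have hc (i : Fin (p + 1)) : c (g.1 i) = (squish 1 t).1 i := coordY_mkY_self hW g f _ i
  have hc₀ : ∀ w ∈ List.ofFn g.1, w ∉ List.ofFn g₀ → decide (c w ≠ 0) = false := by
    intro w hw hw₀
    obtain ⟨i, rfl⟩ := List.mem_ofFn.1 hw
    rw [List.mem_ofFn] at hw₀
    rw [hc, squish_one_apply_eq_zero, decide_eq_false (not_not.2 rfl)]
    by_cases hti : t.1 i = 0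
    · exact hti ▸ (thresh_pos t).le
    · exact (hy.2 _ (mem_supportList.2 ⟨i, hti, rfl⟩) hw₀).le
  calc normalForm (mkY g f (squish 1 t))
    _ = supportList g.1 (c ∘ g.1) := congrArg (supportList g.1) (funext fun i => (hc i).symm)
    _ = supportList g₀ (c ∘ g₀) := by
      rw [supportList_comp, supportList_comp, filter_eq_of_sublist_of_nodup
        (ofFn_sublist_of_mkY_mem_starNhd hy) (List.nodup_ofFn.2 (g.injective hW)) hc₀]

theorem locallyPresented_squishY_one (hW : ∀ g ∈ W, g.Δ.Nonempty) :
    LocallyPresented W (forgetY π W) fun y => normalForm (squishY 1 y) := fun y₀ => by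
  obtain ⟨p, g₀, f₀, t₀, ht₀, rfl⟩ := exists_mkY_pos y₀
  have hθ : Continuous fun (y : YRealization π W) j => coordY (g₀.1 j) (squishY 1 y) :=
    continuous_pi fun j => (continuous_coordY _).comp
      (continuous_squishY.comp (Continuous.prodMk_right 1))
  refine ⟨p, g₀, ⟨_, hθ⟩, ?_⟩
  filter_upwards [(isOpen_starNhd g₀.1).mem_nhds (mkY_mem_starNhd ht₀)] with y hy
  have hN := normalForm_squishY_one hW hy
  refine ⟨⟨fun j => coordY_nonneg _ _, ?_⟩, forgetY_mem_relSections hy, hN⟩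
  exact (sum_map_snd_supportList g₀.1 _).symm.trans (hN ▸ sum_normalForm _)

end StarNeighborhood

/-! ### Lifting squares up to homotopy -/

section Assembly

theorem contractibleSpace_cube (ι : Type*) : ContractibleSpace (ι → I) :=
  (contractible_iff_id_nullhomotopic _).2
    ⟨fun _ => 0, ⟨⟨⟨fun z i => σ z.1 * z.2 i, by fun_prop⟩, by simp, by simp⟩⟩⟩

variable {E M : Type u} [TopologicalSpace E] [TopologicalSpace M] {π : E → M}
  {S W : Set (GermData π)} {d : ℕ}

theorem IsSuffSep.exists_deformation {F : Type u} {K : Type} [TopologicalSpace F]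
    [TopologicalSpace K] [T2Space M] [LocallyCompactSpace M] [PathConnectedSpace F]
    [LocallyCompactSpace K] [ContractibleSpace K] (hW : IsSuffSep d π W) (hπ : IsFiberBundle F π)
    (hS : S.Finite) (hSW : S ⊆ W) (Φ : C(K, SectionSpace π)) :
    ∃ w ∈ W, (∀ g ∈ S, Disjoint w.Δ g.Δ) ∧ ∃ H : C(I × K, SectionSpace π),
      (∀ k, H (0, k) = Φ k) ∧ (∀ t k, ∀ g ∈ S, g.Fixes (Φ k) → g.Fixes (H (t, k))) ∧
      ∀ k, w.Fixes (H (1, k)) := by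
  obtain ⟨n, g, -, rfl⟩ := hS.fin_param
  rw [Set.range_subset_iff] at hSW
  obtain ⟨w, hw, V, -, hwV, hVg⟩ := hW.sep n g hSW
  have := hW.contractible w hw
  obtain ⟨D, ⟨hD⟩, hwD, hcofib⟩ := hW.cofib w hw
  obtain ⟨H, H₀, hHV, H₁⟩ := hπ.exists_deformation w (hW.compact w hw) hD hwD hcofib
    isOpen_interior hwV Φ
  refine ⟨w, hw, Set.forall_mem_range.2 fun i => (hVg i).mono_left (hwV.trans interior_subset),
    H, H₀, fun t k => Set.forall_mem_range.2 fun i hi x hx => ?_, H₁⟩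
  rw [hHV t k x fun hxV => (hVg i).notMem_of_mem_left (interior_subset hxV) hx, hi x hx]

variable (π W) in
/-- The forgetful map `||Y_•|| → Γ(E)` as a bundled continuous map. -/
def forgetYMap : C(YRealization π W, SectionSpace π) := ⟨forgetY π W, continuous_forgetY⟩

variable {K : Type*} [TopologicalSpace K] {A : Set K}

theorem exists_joined_locallyPresented (hW : ∀ g ∈ W, g.Δ.Nonempty)
    (p : SquareSpace A (forgetYMap π W)) :
    ∃ q : SquareSpace A (forgetYMap π W), Joined p q ∧
      LocallyPresented W (fun a : A => q.1.2 a) fun a => normalForm (q.1.1 a) := by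
  obtain ⟨⟨φ, Φ⟩, hφ⟩ := p
  let h : C(I × A, YRealization π W) := ⟨fun z => squishY z.1 (φ z.2),
    continuous_squishY.comp (continuous_fst.prodMk (φ.continuous.comp continuous_snd))⟩
  have hh (s : I) (a : A) : forgetYMap π W (h (s, a)) = Φ a :=
    (forgetY_squishY s (φ a)).trans (hφ a)
  refine ⟨⟨(h.comp ((ContinuousMap.const A 1).prodMk (.id A)), Φ), hh 1⟩,
    SquareSpace.joined_of_homotopy h (Φ.comp .snd) hh (fun a => squishY_zero _) (fun _ => rfl)
      (fun _ => rfl) fun _ => rfl, ?_⟩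
  have hφΦ : forgetY π W ∘ φ = fun a : A => Φ a := funext hφ
  exact hφΦ ▸ (locallyPresented_squishY_one hW).comp φ

theorem exists_joined_of_deformation {p : SquareSpace A (forgetYMap π W)} (hSW : S ⊆ W)
    (hp : LocallyPresented S (fun a : A => p.1.2 a) fun a => normalForm (p.1.1 a))
    (H : C(I × K, SectionSpace π)) (H₀ : ∀ k, H (0, k) = p.1.2 k)
    (hH : ∀ t k, ∀ g ∈ S, g.Fixes (p.1.2 k) → g.Fixes (H (t, k))) :
    ∃ q : SquareSpace A (forgetYMap π W), Joined p q ∧ (∀ k, q.1.2 k = H (1, k)) ∧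
      LocallyPresented S (fun a : A => q.1.2 a) fun a => normalForm (q.1.1 a) := by
  have hpH : LocallyPresented S (fun z : I × A => H (z.1, z.2))
      fun z => normalForm (p.1.1 z.2) :=
    (hp.comp .snd).congr_section fun z => hH z.1 z.2
  obtain ⟨h, hh⟩ := (hpH.mono hSW).exists_continuousMap (by fun_prop)
  refine ⟨⟨(h.comp ((ContinuousMap.const A 1).prodMk (.id A)),
      H.comp ((ContinuousMap.const K 1).prodMk (.id K))), fun a => (hh (1, a)).1⟩,
    SquareSpace.joined_of_homotopy h H (fun s a => (hh (s, a)).1) (fun a => ?_) (fun _ => rfl) H₀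
      fun _ => rfl, fun _ => rfl, ?_⟩
  · exact eq_of_normalForm_eq ((hh (0, a)).1.trans ((H₀ a).trans (p.2 a).symm)) (hh (0, a)).2
  · have hN : (fun a => normalForm (h (1, a))) = fun a => normalForm (p.1.1 a) :=
      funext fun a => (hh (1, a)).2
    exact hN ▸ hpH.comp ((ContinuousMap.const A 1).prodMk (.id A))

theorem exists_joined_hasStrictLift {p : SquareSpace A (forgetYMap π W)} (hSW : S ⊆ W)
    (hp : LocallyPresented S (fun a : A => p.1.2 a) fun a => normalForm (p.1.1 a))
    {w : GermData π} (hwW : w ∈ W) (hwS : ∀ g ∈ S, Disjoint w.Δ g.Δ)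
    (hw : ∀ k, w.Fixes (p.1.2 k)) : ∃ q, Joined p q ∧ HasStrictLift q := by
  obtain ⟨l, hl⟩ := ((locallyPresented_vertex hw).mono
    (Set.singleton_subset_iff.2 hwW)).exists_continuousMap p.1.2.continuous
  obtain ⟨h, hh⟩ := ((hp.cone (fun a : A => hw a) hwS).mono
    (Set.insert_subset hwW hSW)).exists_continuousMap (by fun_prop)
  refine ⟨⟨(l.comp ⟨Subtype.val, continuous_subtype_val⟩, p.1.2), fun a => (hl a).1⟩,
    SquareSpace.joined_of_homotopy h (p.1.2.comp .snd) (fun s a => (hh (s, a)).1) (fun a => ?_)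
      (fun a => ?_) (fun _ => rfl) fun _ => rfl, l, fun _ => rfl, fun k => (hl k).1⟩
  · exact eq_of_normalForm_eq ((hh (0, a)).1.trans (p.2 a).symm)
      ((hh (0, a)).2.trans (coneList_zero (filter_normalForm _)))
  · exact eq_of_normalForm_eq ((hh (1, a)).1.trans (hl a).1.symm)
      ((hh (1, a)).2.trans ((coneList_one _ _).trans (hl a).2.symm))

end Assembly

theorem forgetY_isWeakHomotopyEquiv_general {d : ℕ} {E M F : Type u} [TopologicalSpace E]
    [TopologicalSpace M] [TopologicalSpace F] [T2Space M] [LocallyCompactSpace M]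
    [PathConnectedSpace F] (π : E → M) (hπ : IsFiberBundle F π) (W : Set (GermData π))
    (hW : IsSuffSep d π W) : IsWeakHomotopyEquiv (forgetY π W) := by
  refine HasHomotopyLifts.isWeakHomotopyEquiv (f := forgetYMap π W) fun n p₀ => ?_
  have := contractibleSpace_cube (Fin n)
  have : CompactSpace (Cube.boundary (Fin n)) :=
    isCompact_iff_compactSpace.1 isClosed_cubeBoundary.isCompact
  have hne (g) (hg : g ∈ W) : g.Δ.Nonempty :=
    have := hW.contractible g hg
    Set.nonempty_coe_sort.1 inferInstance
  obtain ⟨p₁, h₀₁, hp₁⟩ := exists_joined_locallyPresented hne p₀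
  obtain ⟨S, hSW, hS, hp₁⟩ := hp₁.exists_finite
  obtain ⟨w, hwW, hwS, H, H₀, hH, H₁⟩ := hW.exists_deformation hπ hS hSW p₁.1.2
  obtain ⟨p₂, h₁₂, hp₂H, hp₂⟩ := exists_joined_of_deformation hSW hp₁ H H₀ hH
  obtain ⟨q, h₂q, hq⟩ := exists_joined_hasStrictLift hSW hp₂ hwW hwS fun k => hp₂H k ▸ H₁ k
  exact ⟨q, (h₀₁.trans h₁₂).trans h₂q, hq⟩

/-- Let `M` be a `d`-dimensional manifold without boundary, `π : E → M` a fiber bundle with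
path-connected fiber, and `W` a sufficiently separated collection for `π`.  Then the natural map
`||Y_•|| → Γ(E)` from the fat geometric realization of the associated semi-simplicial space,
given by forgetting the fixed subsets, is a weak homotopy equivalence. -/
theorem forgetY_isWeakHomotopyEquiv {d : ℕ} {E M F : Type u}
    [TopologicalSpace E] [TopologicalSpace M] [TopologicalSpace F]
    [ChartedSpace (EuclideanSpace ℝ (Fin d)) M] [T2Space M] [PathConnectedSpace F]
    (π : E → M) (hπ : IsFiberBundle F π)
    (W : Set (GermData π)) (hW : IsSuffSep d π W) :
    IsWeakHomotopyEquiv (forgetY π W) := by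
  have : LocallyCompactSpace M := ChartedSpace.locallyCompactSpace (EuclideanSpace ℝ (Fin d)) M
  exact forgetY_isWeakHomotopyEquiv_general π hπ W hW
end

section
/- Let M be a manifold without boundary and π : E → M a fiber bundle with path-connected fiber. Let Δ ⊆ M be compact and contractible with the inclusion Δ ↪ M a closed cofibration, and let γ be a continuous section of π defined on a neighborhood U of Δ. Assume Δ admits a neighborhood basis B_1 ⊇ B_2 ⊇ ⋯ contained in U consisting of compact contractible sets with each inclusion B_i ↪ M a closed cofibration. Define Γ_g(E, Δ, γ) := colim_i Γ(E, B_i, γ), topologized as the colimit along the closed inclusions Γ(E, B_i, γ) ⊆ Γ(E, B_{i+1}, γ). Then the natural inclusion Γ_g(E, Δ, γ) → Γ(E, Δ, γ) is a weak homotopy equivalence. -/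
/-!
The idea is to push a family of sections which agree with `γ` on `Δ` to sections which agree with
`γ` near `Δ`, relative to the parameters where this already holds.

*Deformation.* The cofibration `Δ ↪ M` yields a homotopy `h` of `M`, starting at the identity and
fixing `Δ`, whose end moves a neighborhood of `Δ` into `Δ`. Near the compact set `Δ` the tracks of
`h` are so short that local trivializations patch to a continuous transport `Φ` from the fiber over
`h (x, t)` back to the fiber over `x`, the identity where the track of `x` is constant.

*Compression.* For a section `s` equal to `γ` on `Δ`, the local sections
`x ↦ Φ (x, t, s (h (x, t)))` walk, as `t` goes from `0` to `1`, from `s` to a section which near `Δ`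
depends only on `s|_Δ = γ|_Δ`. The walk of `γ` has the same end, so running it backwards leads to a
section equal to `γ` near `Δ`. If `s` equals `γ` on a neighborhood of `Δ` containing the tracks,
both walks agree at all times, so one may turn round at any earlier time `c`. This lets a cutoff
function on the parameter space interpolate to the constant deformation.

*Compact families in the colimit.* These lie in a stage up to specialization of points, and a
family may be moved to a specialization by a homotopy that jumps at its end. This avoids any
separation hypothesis on the fiber.

*Homotopy groups.* Stretching the cube makes a family constant along collars of the boundary, so
that a cutoff function vanishing on the boundary is available. The two previous facts then give
bijectivity on path components and homotopy groups.
-/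

open scoped unitInterval Topology

universe u v w

/-- The space `Γ(E, A, γ)` of sections of `π` agreeing with the section `γ` (defined on
`U ⊇ A`) on the subset `A`. -/
def fixSet {E M : Type u} [TopologicalSpace E] [TopologicalSpace M] (π : E → M)
    {U : Set M} (γ : C(U, E)) (A : Set M) (hAU : A ⊆ U) : Set (SectionSpace π) :=
  {s | ∀ x (hx : x ∈ A), s.1 x = γ ⟨x, hAU hx⟩}

/-! ### Collars of cubes -/

/-- A collar of a subset `L ⊆ K`, in a weak sense suited to families over `K` with prescribed
behaviour on `L`: a homotopy `push` of the pair `(K, L)` starting at the identity, and a function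
`cutoff` vanishing on `L`, such that the points with `cutoff ≠ 1` are pushed into `L`. -/
structure Collar {K : Type*} [TopologicalSpace K] (L : Set K) where
  push : C(I × K, K)
  cutoff : C(K, I)
  push_zero : ∀ y, push (0, y) = y
  push_mem : ∀ t, ∀ y ∈ L, push (t, y) ∈ L
  cutoff_eq_zero : ∀ y ∈ L, cutoff y = 0
  push_one_mem : ∀ y, cutoff y ≠ 1 → push (1, y) ∈ L

namespace Collar

section General

variable {K : Type*} [TopologicalSpace K] {L : Set K}

/-- The end of the push of a collar. -/
def collapse (C : Collar L) : C(K, K) := C.push.curry 1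

lemma collapse_mem (C : Collar L) {y : K} (hy : y ∈ L) : C.collapse y ∈ L :=
  C.push_mem 1 y hy

lemma homotopicRel_comp_collapse {X : Type*} [TopologicalSpace X] (C : Collar L) {p : C(K, X)}
    {x : X} (hp : ∀ y ∈ L, p y = x) : p.HomotopicRel (p.comp C.collapse) L :=
  ⟨{ toContinuousMap := p.comp C.push
     map_zero_left := fun y => congrArg p (C.push_zero y)
     map_one_left := fun _ => rfl
     prop' := fun t y hy => (hp _ (C.push_mem t y hy)).trans (hp y hy).symm }⟩

/-- The collar of `L₁ × K₂ ∪ K₁ × L₂` obtained from collars of `L₁ ⊆ K₁` and `L₂ ⊆ K₂`. -/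
def prod {K' : Type*} [TopologicalSpace K'] {L' : Set K'} (C : Collar L) (C' : Collar L') :
    Collar {z : K × K' | z.1 ∈ L ∨ z.2 ∈ L'} where
  push := ⟨fun z => (C.push (z.1, z.2.1), C'.push (z.1, z.2.2)), by fun_prop⟩
  cutoff := ⟨fun z => C.cutoff z.1 * C'.cutoff z.2, by fun_prop⟩
  push_zero z := Prod.ext (C.push_zero z.1) (C'.push_zero z.2)
  push_mem t z := Or.imp (C.push_mem t z.1) (C'.push_mem t z.2)
  cutoff_eq_zero := by
    rintro z (hz | hz)
    · simp [C.cutoff_eq_zero _ hz]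
    · simp [C'.cutoff_eq_zero _ hz]
  push_one_mem z hz := by
    by_cases h : C.cutoff z.1 = 1
    · exact Or.inr (C'.push_one_mem _ fun h' => hz (by simp [h, h']))
    · exact Or.inl (C.push_one_mem _ h)

/-- The collar of `{y | ∃ i, y i ∈ L i}` obtained from collars of `L i ⊆ K i`. -/
def pi {ι : Type*} [Fintype ι] {K : ι → Type*} [∀ i, TopologicalSpace (K i)]
    {L : ∀ i, Set (K i)} (C : ∀ i, Collar (L i)) : Collar {y : ∀ i, K i | ∃ i, y i ∈ L i} where
  push := ⟨fun z i => (C i).push (z.1, z.2 i), by fun_prop⟩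
  cutoff := ⟨fun y => ∏ i, (C i).cutoff (y i), by fun_prop⟩
  push_zero y := funext fun i => (C i).push_zero (y i)
  push_mem t y := Exists.imp fun i => (C i).push_mem t (y i)
  cutoff_eq_zero := fun _ ⟨i, hi⟩ =>
    Finset.prod_eq_zero (Finset.mem_univ i) ((C i).cutoff_eq_zero _ hi)
  push_one_mem y hy :=
    have ⟨i, _, hi⟩ := Finset.exists_ne_one_of_prod_ne_one hy
    ⟨i, (C i).push_one_mem _ hi⟩

end General

/-- The stretch of the unit interval about its midpoint by the factor `1 + 2t`, truncated to the
interval. At `t = 1` it sends the outer thirds to the endpoints. -/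
noncomputable def stretch : C(I × I, I) where
  toFun z := Set.projIcc 0 1 zero_le_one ((1 + 2 * (z.1 : ℝ)) * ((z.2 : ℝ) - 1 / 2) + 1 / 2)
  continuous_toFun := continuous_projIcc.comp (by fun_prop)

lemma stretch_zero_left (s : I) : stretch (0, s) = s := by
  simp [stretch]

lemma stretch_zero_right (t : I) : stretch (t, 0) = 0 :=
  Set.projIcc_of_le_left zero_le_one (by simpa using t.2.1)

lemma stretch_one_right (t : I) : stretch (t, 1) = 1 :=
  Set.projIcc_of_right_le zero_le_one (by have := t.2.1; simp only [Set.Icc.coe_one]; linarith)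

/-- The collar of the endpoints of the unit interval given by `stretch`, with a cutoff equal to
`1` on the middle third. -/
noncomputable def interval : Collar ({0, 1} : Set I) where
  push := stretch
  cutoff := ⟨fun s => Set.projIcc 0 1 zero_le_one (3 * min (s : ℝ) (1 - s)),
    continuous_projIcc.comp (by fun_prop)⟩
  push_zero := stretch_zero_left
  push_mem := by
    rintro t _ (rfl | rfl)
    · exact Or.inl (stretch_zero_right t)
    · exact Or.inr (stretch_one_right t)
  cutoff_eq_zero := by
    rintro _ (rfl | rfl) <;> exact Set.projIcc_of_le_left zero_le_one (by simp)
  push_one_mem s hs := by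
    have hs' : 3 * min (s : ℝ) (1 - s) < 1 := by
      contrapose! hs
      exact Set.projIcc_of_right_le zero_le_one hs
    rcases min_lt_iff.1 (show min (s : ℝ) (1 - s) < 1 / 3 by linarith) with h | h
    · exact Or.inl (Set.projIcc_of_le_left zero_le_one (by simp only [Set.Icc.coe_one]; linarith))
    · exact Or.inr (Set.projIcc_of_right_le zero_le_one (by simp only [Set.Icc.coe_one]; linarith))

/-- The collar of the boundary of a cube. -/
noncomputable def cube (n : ℕ) : Collar (Cube.boundary (Fin n)) := pi fun _ => interval

end Collar

/-! ### A criterion for weak homotopy equivalences -/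

section Criterion

variable {X : Type u} {Y : Type v} [TopologicalSpace X] [TopologicalSpace Y]

/-- A map `f : X → Y` is compressible with respect to subsets `S k ⊆ X` if every family `p` of
points of `Y` can be deformed into `X` without moving the parameters where a cutoff function `c`
vanishes, provided that `p` lies in `S k`, for some `k`, at the parameters where `c ≠ 1`. -/
def IsCompressible (f : C(X, Y)) (S : ℕ → Set X) : Prop :=
  ∀ (K : Type) [TopologicalSpace K] (c : C(K, I)) (p : C(K, Y)) (k : ℕ),
    (∀ y, c y ≠ 1 → p y ∈ f '' S k) →
      ∃ q : C(K, X), p.HomotopicRel (f.comp q) {y | c y = 0}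

/-- Every compact family in `X` can be deformed into one of the subsets `S m`, without moving the
parameters where it lies in a given `S k`. -/
def HasStageDeformations (S : ℕ → Set X) : Prop :=
  ∀ (K : Type) [TopologicalSpace K] [CompactSpace K] (p : C(K, X)) (k : ℕ),
    ∃ (m : ℕ) (q : C(K, X)), (∀ y, q y ∈ S m) ∧ p.HomotopicRel q {y | p y ∈ S k}

lemma homotopicRel_mono {K : Type*} [TopologicalSpace K] {p q : C(K, X)} {A A' : Set K}
    (h : p.HomotopicRel q A) (hA : A' ⊆ A) : p.HomotopicRel q A' :=
  h.map fun H => { H with prop' := fun t y hy => H.prop' t y (hA hy) }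

/-- The generalized loop `p` precomposed with the collapse of the collar of the cube. -/
noncomputable def collapseLoop {n : ℕ} {x : X} (p : GenLoop (Fin n) X x) : GenLoop (Fin n) X x :=
  ⟨p.1.comp (Collar.cube n).collapse, fun _ hy => p.2 _ (Collar.collapse_mem _ hy)⟩

lemma homotopic_collapseLoop {n : ℕ} {x : X} (p : GenLoop (Fin n) X x) :
    GenLoop.Homotopic p (collapseLoop p) :=
  (Collar.cube n).homotopicRel_comp_collapse p.2

lemma HasStageDeformations.exists_genLoop_homotopic {S : ℕ → Set X}
    (hstage : HasStageDeformations S) {n k : ℕ} {x : X} (hx : x ∈ S k) (p : GenLoop (Fin n) X x) :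
    ∃ (m : ℕ) (q : GenLoop (Fin n) X x), (∀ y, q y ∈ S m) ∧ GenLoop.Homotopic p q := by
  obtain ⟨m, q, hq, hpq⟩ := hstage (Fin n → I) p.1 k
  have hpq' : p.1.HomotopicRel q (Cube.boundary (Fin n)) :=
    homotopicRel_mono hpq fun y hy => (congrArg (· ∈ S k) (p.2 y hy)).mpr hx
  exact ⟨m, ⟨q, fun y hy => (hpq'.fst_eq_snd hy).symm.trans (p.2 y hy)⟩, hq, hpq'⟩

namespace IsCompressible

variable {f : C(X, Y)} {S : ℕ → Set X}

lemma exists_comp_collapse_homotopicRel (hf : IsCompressible f S) {K : Type} [TopologicalSpace K]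
    {L : Set K} (C : Collar L) (p : C(K, Y)) {k : ℕ} (hp : ∀ y ∈ L, p y ∈ f '' S k) :
    ∃ q : C(K, X), (p.comp C.collapse).HomotopicRel (f.comp q) L := by
  obtain ⟨q, hq⟩ := hf K C.cutoff (p.comp C.collapse) k fun y hy => hp _ (C.push_one_mem y hy)
  exact ⟨q, homotopicRel_mono hq C.cutoff_eq_zero⟩

lemma pi0Map_surjective (hf : IsCompressible f S) : Function.Surjective (pi0Map f) := by
  rintro ⟨y⟩
  obtain ⟨q, ⟨Q⟩⟩ := hf Unit (.const _ 1) (.const _ y) 0 fun _ h => absurd rfl h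
  refine ⟨Quotient.mk _ (q ()), Quotient.sound (Joined.symm ?_)⟩
  exact ⟨⟨⟨fun t => Q (t, ()), by fun_prop⟩, Q.apply_zero (), Q.apply_one ()⟩⟩

lemma pi0Map_injective (hf : IsCompressible f S) (hinj : Function.Injective f) (hS : Monotone S)
    (hSX : ∀ x, ∃ k, x ∈ S k) : Function.Injective (pi0Map f) := by
  rintro ⟨x⟩ ⟨x'⟩ h
  obtain ⟨g⟩ : Joined (f x) (f x') := Quotient.exact h
  obtain ⟨k, hk⟩ := hSX x
  obtain ⟨k', hk'⟩ := hSX x'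
  have hg : ∀ t ∈ ({0, 1} : Set I), g.toContinuousMap t ∈ f '' S (max k k') := by
    rintro _ (rfl | rfl)
    · exact ⟨x, hS (le_max_left _ _) hk, g.source.symm⟩
    · exact ⟨x', hS (le_max_right _ _) hk', g.target.symm⟩
  obtain ⟨q, hq⟩ := hf.exists_comp_collapse_homotopicRel Collar.interval g.toContinuousMap hg
  refine Quotient.sound ⟨⟨q, hinj ?_, hinj ?_⟩⟩
  · exact (hq.fst_eq_snd (Or.inl rfl)).symm.trans
      ((congrArg g (Collar.stretch_zero_right 1)).trans g.source)
  · exact (hq.fst_eq_snd (Or.inr rfl)).symm.trans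
      ((congrArg g (Collar.stretch_one_right 1)).trans g.target)

lemma piMap_surjective (hf : IsCompressible f S) (hinj : Function.Injective f) {k : ℕ} {x : X}
    (hx : x ∈ S k) (n : ℕ) : Function.Surjective (piMap n f x) := by
  rintro ⟨p⟩
  obtain ⟨q, hq⟩ := hf.exists_comp_collapse_homotopicRel (Collar.cube n) p.1
    fun y hy => ⟨x, hx, (p.2 y hy).symm⟩
  let q' : GenLoop (Fin n) X x := ⟨q, fun y hy => hinj <|
    (hq.fst_eq_snd hy).symm.trans ((collapseLoop p).2 y hy)⟩
  have hpq : GenLoop.Homotopic (collapseLoop p) (genLoopMap f q') := hq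
  exact ⟨Quotient.mk _ q', Quotient.sound ((homotopic_collapseLoop p).trans hpq).symm⟩

/-- The homotopy between the images lies in `X` on the boundary of the cylinder over the cube, so
it compresses to a homotopy in `X` once the cylinder has been collapsed along a collar. -/
lemma homotopic_of_genLoopMap_homotopic (hf : IsCompressible f S) (hinj : Function.Injective f)
    {n k : ℕ} {x : X} (hx : x ∈ S k) {p q : GenLoop (Fin n) X x} (hp : ∀ y, p y ∈ S k)
    (hq : ∀ y, q y ∈ S k) (h : GenLoop.Homotopic (genLoopMap f p) (genLoopMap f q)) :
    GenLoop.Homotopic p q := by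
  obtain ⟨H⟩ := h
  have H_boundary : ∀ t, ∀ y ∈ Cube.boundary (Fin n), H (t, y) = f x := fun t y hy =>
    (H.eq_fst t hy).trans ((genLoopMap f p).2 y hy)
  obtain ⟨G, hG⟩ := hf.exists_comp_collapse_homotopicRel (Collar.interval.prod (Collar.cube n))
    (k := k) H.toContinuousMap (by
      rintro ⟨_, y⟩ ((rfl | rfl) | hy)
      · exact ⟨p y, hp y, (H.apply_zero y).symm⟩
      · exact ⟨q y, hq y, (H.apply_one y).symm⟩
      · exact ⟨x, hx, (H_boundary _ y hy).symm⟩)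
  have hfG : ∀ z : I × (Fin n → I), z.1 ∈ ({0, 1} : Set I) ∨ z.2 ∈ Cube.boundary (Fin n) →
      f (G z) = H (Collar.stretch (1, z.1), (Collar.cube n).collapse z.2) :=
    fun z hz => (hG.fst_eq_snd hz).symm
  suffices GenLoop.Homotopic (collapseLoop p) (collapseLoop q) from
    ((homotopic_collapseLoop p).trans this).trans (homotopic_collapseLoop q).symm
  refine ⟨{ toContinuousMap := G, map_zero_left := fun y => hinj ?_,
            map_one_left := fun y => hinj ?_, prop' := fun t y hy => hinj ?_ }⟩
  · exact (hfG (0, y) (Or.inl (Or.inl rfl))).trans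
      (by rw [Collar.stretch_zero_right, H.apply_zero]; rfl)
  · exact (hfG (1, y) (Or.inl (Or.inr rfl))).trans
      (by rw [Collar.stretch_one_right, H.apply_one]; rfl)
  · exact (hfG (t, y) (Or.inr hy)).trans ((H_boundary _ _ (Collar.collapse_mem _ hy)).trans
      (congrArg f ((collapseLoop p).2 y hy).symm))

lemma piMap_injective (hf : IsCompressible f S) (hinj : Function.Injective f) (hS : Monotone S)
    (hstage : HasStageDeformations S) {k : ℕ} {x : X} (hx : x ∈ S k) (n : ℕ) :
    Function.Injective (piMap n f x) := by
  rintro ⟨p⟩ ⟨p'⟩ h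
  obtain ⟨m, q, hq, hpq⟩ := hstage.exists_genLoop_homotopic hx p
  obtain ⟨m', q', hq', hpq'⟩ := hstage.exists_genLoop_homotopic hx p'
  have hqq' : GenLoop.Homotopic (genLoopMap f q) (genLoopMap f q') :=
    ((genLoopMap_homotopic f hpq).symm.trans (Quotient.exact h)).trans
      (genLoopMap_homotopic f hpq')
  have hl : k ≤ max k (max m m') ∧ m ≤ max k (max m m') ∧ m' ≤ max k (max m m') := by omega
  have := hf.homotopic_of_genLoopMap_homotopic hinj (hS hl.1 hx) (fun y => hS hl.2.1 (hq y))
    (fun y => hS hl.2.2 (hq' y)) hqq'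
  exact Quotient.sound ((hpq.trans this).trans hpq'.symm)

theorem isWeakHomotopyEquiv (hf : IsCompressible f S) (hinj : Function.Injective f)
    (hS : Monotone S) (hSX : ∀ x, ∃ k, x ∈ S k) (hstage : HasStageDeformations S) :
    IsWeakHomotopyEquiv f := by
  refine ⟨f.continuous, ⟨hf.pi0Map_injective hinj hS hSX, hf.pi0Map_surjective⟩, fun n _ x => ?_⟩
  obtain ⟨k, hx⟩ := hSX x
  exact ⟨hf.piMap_injective hinj hS hstage hx n, hf.piMap_surjective hinj hx n⟩

end IsCompressible

end Criterion

/-! ### Deformations and transport -/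

/-- The deformation is read off from a retraction of `X × I` onto `X × {0} ∪ A × I`: its first
coordinate moves `x` along a track, and a point of `X × {1}` whose image has positive second
coordinate ends up in `A`. -/
lemma ClosedCofibration.exists_deformation {X : Type u} [TopologicalSpace X] {A : Set X}
    (hA : ClosedCofibration A) :
    ∃ h : C(X × I, X), (∀ x, h (x, 0) = x) ∧ (∀ x ∈ A, ∀ t, h (x, t) = x) ∧
      ∀ᶠ x in 𝓝ˢ A, h (x, 1) ∈ A := by
  let Z : Set (X × I) := {z | z.2 = 0 ∨ z.1 ∈ A}
  obtain ⟨r, hr₀, hrA⟩ := hA.2 Z ⟨fun x => ⟨(x, 0), Or.inl rfl⟩, by fun_prop⟩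
    ⟨fun z => ⟨(z.1.1, z.2), Or.inr z.1.2⟩, by fun_prop⟩ fun _ => rfl
  have hr_open : IsOpen {x | (r (x, 1)).1.2 ≠ 0} := isOpen_ne_fun (by fun_prop) continuous_const
  have hA_sub : A ⊆ {x | (r (x, 1)).1.2 ≠ 0} := fun x hx => by simp [hrA ⟨x, hx⟩ 1]
  refine ⟨⟨fun z => (r z).1.1, by fun_prop⟩, fun x => ?_, fun x hx t => ?_, ?_⟩
  · simp [hr₀]
  · simp [hrA ⟨x, hx⟩ t]
  · filter_upwards [hr_open.mem_nhdsSet.2 hA_sub] with x hx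
    exact (r (x, 1)).2.resolve_left hx

lemma exists_bump {X : Type*} [TopologicalSpace X] [R1Space X] [LocallyCompactSpace X]
    {C V : Set X} (hC : IsCompact C) (hV : IsOpen V) (hCV : C ⊆ V) :
    ∃ ρ : C(X, I), tsupport ρ ⊆ V ∧ ∀ᶠ x in 𝓝ˢ C, ρ x = 1 := by
  obtain ⟨L, hL, hCL, hLV⟩ := exists_compact_between hC hV hCV
  obtain ⟨f, hf₁, -, hfV, hf⟩ := exists_continuousMap_one_of_isCompact_subset_isOpen hL hV hLV
  refine ⟨⟨fun x => ⟨f x, hf x⟩, by fun_prop⟩, ?_, ?_⟩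
  · refine (closure_mono ?_).trans hfV
    exact Function.support_subset_iff'.2 fun x hx => Subtype.ext (by simpa using hx)
  · filter_upwards [subset_interior_iff_mem_nhdsSet.1 hCL] with x hx
    exact Subtype.ext (hf₁ hx)

lemma isOpen_setOfPred_forall_apply_mem {X T Y : Type*} [TopologicalSpace X] [TopologicalSpace T]
    [CompactSpace T] [TopologicalSpace Y] (h : C(X × T, Y)) {W : Set Y} (hW : IsOpen W) :
    IsOpen {x | ∀ t, h (x, t) ∈ W} := by
  simpa [Set.MapsTo] using
    (ContinuousMap.isOpen_setOfPred_mapsTo isCompact_univ hW).preimage h.curry.continuous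

section Transport

variable {E M Z : Type*} [TopologicalSpace E] [TopologicalSpace Z]

/-- `Φ` is a transport in `π : E → M`, over `V ⊆ Z`, from the fibers over `b` to the fibers over
`a`, where `a, b : Z → M`: it continuously sends `z` and a point over `b z` to a point over `a z`.
The transport is required to be the identity over the points of `D`. The function `Φ` is total,
but only its values at `(z, e)` with `z ∈ V` and `e` over `b z` are meaningful. -/
structure IsTransport (π : E → M) (a b : Z → M) (V D : Set Z) (Φ : Z × E → E) : Prop where
  continuousOn : ContinuousOn Φ {w | w.1 ∈ V ∧ π w.2 = b w.1}
  proj : ∀ z ∈ V, ∀ e, π e = b z → π (Φ (z, e)) = a z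
  eq_self : ∀ z ∈ V, z ∈ D → ∀ e, π e = b z → Φ (z, e) = e

namespace IsTransport

variable {π : E → M} {a b c : Z → M} {V V' D D' : Set Z} {Φ Ψ : Z × E → E}

lemma refl (π : E → M) (a : Z → M) (V D : Set Z) : IsTransport π a a V D Prod.snd :=
  ⟨continuousOn_snd, fun _ _ _ he => he, fun _ _ _ _ _ => rfl⟩

lemma mono (hΦ : IsTransport π a b V D Φ) (hV : V' ⊆ V) (hD : D' ⊆ D) :
    IsTransport π a b V' D' Φ where
  continuousOn := hΦ.continuousOn.mono fun _ hw => ⟨hV hw.1, hw.2⟩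
  proj z hz := hΦ.proj z (hV hz)
  eq_self z hz hzD := hΦ.eq_self z (hV hz) (hD hzD)

lemma congr_right (hΦ : IsTransport π a b V D Φ) (hbc : Set.EqOn c b V) :
    IsTransport π a c V D Φ where
  continuousOn := hΦ.continuousOn.mono fun _ hw => ⟨hw.1, hw.2.trans (hbc hw.1)⟩
  proj z hz e he := hΦ.proj z hz e (he.trans (hbc hz))
  eq_self z hz hzD e he := hΦ.eq_self z hz hzD e (he.trans (hbc hz))

lemma comap (hΦ : IsTransport π a b V D Φ) {Z' : Type*} [TopologicalSpace Z'] {g : Z' → Z}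
    (hg : Continuous g) :
    IsTransport π (a ∘ g) (b ∘ g) (g ⁻¹' V) (g ⁻¹' D) fun w => Φ (g w.1, w.2) where
  continuousOn := hΦ.continuousOn.comp (by fun_prop) fun _ hw => hw
  proj z := hΦ.proj (g z)
  eq_self z := hΦ.eq_self (g z)

lemma trans (hΦ : IsTransport π a b V D Φ) (hΨ : IsTransport π b c V D Ψ) :
    IsTransport π a c V D fun w => Φ (w.1, Ψ w) where
  continuousOn := hΦ.continuousOn.comp (continuousOn_fst.prodMk hΨ.continuousOn)
    fun w hw => ⟨hw.1, hΨ.proj w.1 hw.1 w.2 hw.2⟩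
  proj z hz e he := hΦ.proj z hz _ (hΨ.proj z hz e he)
  eq_self z hz hzD e he := by
    rw [hΨ.eq_self z hz hzD e he]
    exact hΦ.eq_self z hz hzD e (hΨ.eq_self z hz hzD e he ▸ hΨ.proj z hz e he)

open Classical in
lemma extend (hΦ : IsTransport π a b V D Φ) (hV : IsOpen V) {T : Set Z} (hT : IsClosed T)
    (hTV : T ⊆ V) (hTD : Tᶜ ⊆ D) (hab : Set.EqOn a b Tᶜ) :
    IsTransport π a b Set.univ D fun w => if w.1 ∈ T then Φ w else w.2 where
  continuousOn := by
    have hΦ_eq : Set.EqOn (fun w => if w.1 ∈ T then Φ w else w.2) Φ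
        {w | w.1 ∈ V ∧ π w.2 = b w.1} := fun w hw => by
      by_cases hwT : w.1 ∈ T
      · exact if_pos hwT
      · exact (if_neg hwT).trans (hΦ.eq_self w.1 hw.1 (hTD hwT) w.2 hw.2).symm
    refine continuousOn_of_locally_continuousOn fun w _ => ?_
    by_cases hwV : w.1 ∈ V
    · refine ⟨Prod.fst ⁻¹' V, hV.preimage continuous_fst, hwV, ?_⟩
      exact (hΦ.continuousOn.congr hΦ_eq).mono fun _ hw => ⟨hw.2, hw.1.2⟩
    · refine ⟨Prod.fst ⁻¹' Tᶜ, hT.isOpen_compl.preimage continuous_fst, fun h => hwV (hTV h), ?_⟩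
      exact continuousOn_snd.congr fun w hw => if_neg hw.2
  proj z _ e he := by
    by_cases hz : z ∈ T
    · simpa only [if_pos hz] using hΦ.proj z (hTV hz) e he
    · simpa only [if_neg hz] using he.trans (hab hz).symm
  eq_self z _ hzD e he := by
    by_cases hz : z ∈ T
    · simpa only [if_pos hz] using hΦ.eq_self z (hTV hz) hzD e he
    · simp only [if_neg hz]

end IsTransport

end Transport

section

variable {E M F : Type u} [TopologicalSpace E] [TopologicalSpace M] [TopologicalSpace F]
  {π : E → M}

lemma IsFiberBundle.exists_isTransport_diagonal (hπ : IsFiberBundle F π) (x₀ : M) :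
    ∃ W : Set M, IsOpen W ∧ x₀ ∈ W ∧
      ∃ Φ, IsTransport π Prod.fst Prod.snd (W ×ˢ W) (Set.diagonal M) Φ := by
  classical
  obtain ⟨W, hW, hx₀, φ, hφ⟩ := hπ.locTriv x₀
  let Φ : (M × M) × E → E := fun w => if hw : w.1.1 ∈ W ∧ w.2 ∈ π ⁻¹' W then
    φ.symm (⟨w.1.1, hw.1⟩, (φ ⟨w.2, hw.2⟩).2) else w.2
  have hΦ : ∀ w (hw : w.1.1 ∈ W ∧ w.2 ∈ π ⁻¹' W),
      Φ w = φ.symm (⟨w.1.1, hw.1⟩, (φ ⟨w.2, hw.2⟩).2) := fun _ hw => dif_pos hw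
  have mem {w : (M × M) × E} (hw : w.1 ∈ W ×ˢ W) (he : π w.2 = w.1.2) :
    w.1.1 ∈ W ∧ w.2 ∈ π ⁻¹' W := ⟨hw.1, Set.mem_preimage.2 (he ▸ hw.2)⟩
  refine ⟨W, hW, hx₀, Φ, ?_, fun z hz e he => ?_, ?_⟩
  · rw [continuousOn_iff_continuous_domRestrict]
    have : Continuous fun w : {w : (M × M) × E | w.1 ∈ W ×ˢ W ∧ π w.2 = w.1.2} =>
        (φ.symm (⟨w.1.1.1, (mem w.2.1 w.2.2).1⟩, (φ ⟨w.1.2, (mem w.2.1 w.2.2).2⟩).2)).1 := by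
      fun_prop
    exact this.congr fun w => (hΦ w.1 (mem w.2.1 w.2.2)).symm
  · rw [hΦ _ (mem (w := (z, e)) hz he), ← hφ, φ.apply_symm_apply]
  · rintro ⟨x, x'⟩ hz (hx : x = x') e (he : π e = x')
    subst hx he
    rw [hΦ ((π e, π e), e) ⟨hz.1, hz.1⟩]
    have : (⟨π e, hz.1⟩ : W) = (φ ⟨e, hz.1⟩).1 := Subtype.ext (hφ ⟨e, hz.1⟩).symm
    simp [this]

/-- The points `(x, t)` up to which the track of `x` under `h` is constant. -/
def stationarySet (h : C(M × I, M)) : Set (M × I) := {z | ∀ s ≤ z.2, h (z.1, s) = z.1}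

/-- Points of `E` can be transported back along the tracks of `h`, the track of `x` being followed
up to the time `θ x` only. -/
def HasTransportUpTo (π : E → M) (h : C(M × I, M)) (θ : C(M, I)) : Prop :=
  ∃ Φ, IsTransport π Prod.fst (fun z : M × I => h (z.1, min z.2 (θ z.1))) Set.univ
    (stationarySet h) Φ

lemma hasTransportUpTo_zero {h : C(M × I, M)} (h₀ : ∀ x, h (x, 0) = x) :
    HasTransportUpTo π h 0 :=
  ⟨_, (IsTransport.refl π Prod.fst _ _).congr_right fun z _ => by
    simp [h₀]⟩

lemma HasTransportUpTo.sup {h : C(M × I, M)} {θ ρ : C(M, I)} (hθ : HasTransportUpTo π h θ)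
    {W : Set M} (hW : IsOpen W) {Φ : (M × M) × E → E}
    (hΦ : IsTransport π Prod.fst Prod.snd (W ×ˢ W) (Set.diagonal M) Φ)
    (hρ : tsupport ρ ⊆ {x | ∀ t, h (x, t) ∈ W}) : HasTransportUpTo π h (θ ⊔ ρ) := by
  obtain ⟨Ψ, hΨ⟩ := hθ
  let g : M × I → M × M := fun z =>
    (h (z.1, min z.2 (θ z.1)), h (z.1, min z.2 ((θ ⊔ ρ) z.1)))
  have hg : Continuous g := by fun_prop
  have hg_diag : Prod.fst ⁻¹' (tsupport ρ)ᶜ ⊆ g ⁻¹' Set.diagonal M := fun z hz => by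
    have hρz : ρ z.1 = 0 := image_eq_zero_of_notMem_tsupport hz
    simp [g, hρz]
  have h_stationary : stationarySet h ⊆ g ⁻¹' Set.diagonal M := fun z hz =>
    (hz _ (min_le_left _ _)).trans (hz _ (min_le_left _ _)).symm
  have hT : IsClosed (Prod.fst ⁻¹' tsupport ρ : Set (M × I)) :=
    (isClosed_tsupport ρ).preimage continuous_fst
  have := (hΦ.comap hg).extend ((hW.prod hW).preimage hg) hT (fun z hz => ⟨hρ hz _, hρ hz _⟩)
    hg_diag hg_diag
  exact ⟨_, hΨ.trans (this.mono subset_rfl h_stationary)⟩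

/-- Near a compact set of fixed points of `h`, the tracks of `h` are short enough to stay in
trivializing open sets, so finitely many local transports patch to one along whole tracks. -/
lemma IsFiberBundle.exists_hasTransportUpTo [R1Space M] [LocallyCompactSpace M]
    (hπ : IsFiberBundle F π) {h : C(M × I, M)} (h₀ : ∀ x, h (x, 0) = x) {Δ : Set M}
    (hΔc : IsCompact Δ) (hΔ : ∀ x ∈ Δ, ∀ t, h (x, t) = x) :
    ∃ θ, HasTransportUpTo π h θ ∧ ∀ᶠ x in 𝓝ˢ Δ, θ x = 1 := by
  suffices ∀ θ, HasTransportUpTo π h θ →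
      ∃ θ' ≥ θ, HasTransportUpTo π h θ' ∧ ∀ᶠ x in 𝓝ˢ Δ, θ' x = 1 by
    obtain ⟨θ, -, hθ⟩ := this 0 (hasTransportUpTo_zero h₀)
    exact ⟨θ, hθ⟩
  refine hΔc.induction_on (p := fun S => ∀ θ, HasTransportUpTo π h θ →
      ∃ θ' ≥ θ, HasTransportUpTo π h θ' ∧ ∀ᶠ x in 𝓝ˢ S, θ' x = 1) ?_ ?_ ?_ ?_
  · exact fun θ hθ => ⟨θ, le_rfl, hθ, by simp⟩
  · intro S T hST hT θ hθ
    obtain ⟨θ', hle, hθ', hT⟩ := hT θ hθ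
    exact ⟨θ', hle, hθ', hT.filter_mono (nhdsSet_mono hST)⟩
  · intro S T hS hT θ hθ
    obtain ⟨θ', hle, hθ', hS⟩ := hS θ hθ
    obtain ⟨θ'', hle', hθ'', hT⟩ := hT θ' hθ'
    refine ⟨θ'', hle.trans hle', hθ'', ?_⟩
    rw [nhdsSet_union, Filter.eventually_sup]
    exact ⟨hS.mono fun x hx => top_le_iff.1 (hx.symm.le.trans (hle' x)), hT⟩
  · intro x hx
    obtain ⟨W, hW, hxW, Φ, hΦ⟩ := hπ.exists_isTransport_diagonal x
    obtain ⟨ρ, hρ, hρ_one⟩ := exists_bump (isCompact_singleton (x := x))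
      (isOpen_setOfPred_forall_apply_mem h hW) (by rintro _ rfl t; rwa [hΔ _ hx])
    rw [nhdsSet_singleton] at hρ_one
    refine ⟨_, mem_nhdsWithin_of_mem_nhds hρ_one.eventually_nhds, fun θ hθ =>
      ⟨θ ⊔ ρ, le_sup_left, hθ.sup hW hΦ hρ, ?_⟩⟩
    refine eventually_nhdsSet_iff_forall.2 fun y hy => hy.mono fun z hz => ?_
    simp [hz, max_eq_right unitInterval.le_one']

end

/-- A deformation of `M` which moves a neighborhood `V` of `Δ` into `Δ`, along tracks inside `N`
and keeping `Δ` fixed, together with a transport in `π` from the fibers over the points of a track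
back to the fiber over its origin. -/
structure LocalDeformation {E M : Type*} [TopologicalSpace E] [TopologicalSpace M] (π : E → M)
    (Δ N V : Set M) where
  track : C(M × I, M)
  transport : (M × I) × E → E
  track_zero : ∀ x, track (x, 0) = x
  track_eq_self : ∀ x ∈ Δ, ∀ t, track (x, t) = x
  track_mem : ∀ x ∈ V, ∀ t, track (x, t) ∈ N
  track_one_mem : ∀ x ∈ V, track (x, 1) ∈ Δ
  isTransport : IsTransport π Prod.fst track (V ×ˢ Set.univ) (stationarySet track) transport

lemma IsFiberBundle.exists_localDeformation {E M F : Type u} [TopologicalSpace E]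
    [TopologicalSpace M] [TopologicalSpace F] [R1Space M] [LocallyCompactSpace M] {π : E → M}
    (hπ : IsFiberBundle F π) {Δ N : Set M} (hΔc : IsCompact Δ) (hΔcof : ClosedCofibration Δ)
    (hN : N ∈ 𝓝ˢ Δ) :
    ∃ V, IsOpen V ∧ Δ ⊆ V ∧ Nonempty (LocalDeformation π Δ N V) := by
  obtain ⟨h, h₀, hΔ, h₁⟩ := hΔcof.exists_deformation
  obtain ⟨θ, ⟨Φ, hΦ⟩, hθ⟩ := hπ.exists_hasTransportUpTo h₀ hΔc hΔ
  have htrack : ∀ᶠ x in 𝓝ˢ Δ, ∀ t, h (x, t) ∈ interior N :=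
    (isOpen_setOfPred_forall_apply_mem h isOpen_interior).mem_nhdsSet.2 fun x hx t =>
      (hΔ x hx t).symm ▸ subset_interior_iff_mem_nhdsSet.2 hN hx
  obtain ⟨V, hV, hΔV, hV'⟩ := mem_nhdsSet_iff_exists.1 (h₁.and (hθ.and htrack))
  refine ⟨V, hV, hΔV, ⟨h, Φ, h₀, hΔ, fun x hx t => interior_subset ((hV' hx).2.2 t),
    fun x hx => (hV' hx).1, ?_⟩⟩
  refine (hΦ.mono (Set.subset_univ _) subset_rfl).congr_right fun z hz => ?_
  simp [(hV' hz.1).2.1, min_eq_left unitInterval.le_one']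

namespace LocalDeformation

variable {E M : Type*} [TopologicalSpace E] [TopologicalSpace M] {π : E → M} {Δ N V : Set M}

lemma subset (D : LocalDeformation π Δ N V) : V ⊆ N := fun x hx =>
  D.track_zero x ▸ D.track_mem x hx 0

/-- The walk of a section `s` over `N`: its value at `x` is obtained by transporting back to `x`
the value of `s` at the point which the track of `x` reaches at time `t`. -/
def walk (D : LocalDeformation π Δ N V) (s : N → E) (x : V) (t : I) : E :=
  D.transport ((x, t), s ⟨D.track (x, t), D.track_mem x x.2 t⟩)

variable (D : LocalDeformation π Δ N V) {s s' : N → E}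

lemma proj_walk (hs : ∀ x, π (s x) = x) (x : V) (t : I) : π (D.walk s x t) = x :=
  D.isTransport.proj (x, t) ⟨x.2, trivial⟩ _ (hs _)

lemma walk_eq_of_mem_stationarySet (hs : ∀ x, π (s x) = x) {x : V} {t : I}
    (hxt : (↑x, t) ∈ stationarySet D.track) : D.walk s x t = s ⟨x, D.subset x.2⟩ := by
  refine (D.isTransport.eq_self (x, t) ⟨x.2, trivial⟩ hxt _ (hs _)).trans (congrArg s ?_)
  exact Subtype.ext (hxt t le_rfl)

lemma walk_zero (hs : ∀ x, π (s x) = x) (x : V) : D.walk s x 0 = s ⟨x, D.subset x.2⟩ :=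
  D.walk_eq_of_mem_stationarySet hs fun t ht => by
    rw [show t = 0 from le_bot_iff.1 ht, D.track_zero]

lemma walk_of_mem (hs : ∀ x, π (s x) = x) {x : V} (hx : ↑x ∈ Δ) (t : I) :
    D.walk s x t = s ⟨x, D.subset x.2⟩ :=
  D.walk_eq_of_mem_stationarySet hs fun t _ => D.track_eq_self x hx t

lemma walk_one_congr (h : ∀ x : N, ↑x ∈ Δ → s x = s' x) (x : V) :
    D.walk s x 1 = D.walk s' x 1 :=
  congrArg (fun e => D.transport ((x, 1), e)) (h _ (D.track_one_mem x x.2))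

lemma continuous_walk {P : Type*} [TopologicalSpace P] {s : P → N → E}
    (hs : Continuous fun z : P × N => s z.1 z.2) (hsπ : ∀ y x, π (s y x) = x) {x : P → V}
    (hx : Continuous x) {t : P → I} (ht : Continuous t) :
    Continuous fun y => D.walk (s y) (x y) (t y) := by
  have htrack : Continuous fun y => (⟨D.track (x y, t y), D.track_mem _ (x y).2 _⟩ : N) := by
    fun_prop
  have hst := hs.comp (continuous_id.prodMk htrack)
  exact D.isTransport.continuousOn.comp_continuous
    ((by fun_prop : Continuous fun y => ((x y : M), t y)).prodMk hst) fun y =>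
      ⟨⟨(x y).2, trivial⟩, hsπ _ _⟩

end LocalDeformation

/-! ### Compressing families of sections -/

section Sections

variable {E M : Type u} [TopologicalSpace E] [TopologicalSpace M] [LocallyCompactSpace M]
  {π : E → M} {K : Type*} [TopologicalSpace K]

open Classical in
lemma exists_glue (p : C(K, SectionSpace π)) {V C : Set M} (hV : IsOpen V) (hC : IsClosed C)
    (hCV : C ⊆ V) (R : C(K × V, E)) (hRπ : ∀ y x, π (R (y, x)) = x)
    (hRp : ∀ y (x : V), ↑x ∉ C → R (y, x) = (p y).1 x) :
    ∃ q : C(K, SectionSpace π), (∀ y (x : V), (q y).1 x = R (y, x)) ∧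
      ∀ y, ∀ x ∉ C, (q y).1 x = (p y).1 x := by
  let Q : K × M → E := fun z => if hz : z.2 ∈ V then R (z.1, ⟨z.2, hz⟩) else (p z.1).1 z.2
  have hQV : ∀ y (x : V), Q (y, x) = R (y, x) := fun y x => dif_pos x.2
  have hQC : ∀ y, ∀ x ∉ C, Q (y, x) = (p y).1 x := fun y x hx => by
    by_cases hxV : x ∈ V
    · exact (hQV y ⟨x, hxV⟩).trans (hRp y ⟨x, hxV⟩ hx)
    · exact dif_neg hxV
  have hp : Continuous fun z : K × M => (p z.1).1 z.2 :=
    ((continuous_subtype_val.comp p.continuous).comp continuous_fst).eval continuous_snd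
  have hQ : Continuous Q := by
    rw [← continuousOn_univ]
    refine continuousOn_of_locally_continuousOn fun z _ => ?_
    by_cases hzV : z.2 ∈ V
    · refine ⟨Prod.snd ⁻¹' V, hV.preimage continuous_snd, hzV, ?_⟩
      rw [Set.univ_inter, continuousOn_iff_continuous_domRestrict]
      have : Continuous fun z : (Prod.snd ⁻¹' V : Set (K × M)) => R (z.1.1, ⟨z.1.2, z.2⟩) := by
        fun_prop
      exact this.congr fun z => (hQV z.1.1 ⟨z.1.2, z.2⟩).symm
    · refine ⟨Prod.snd ⁻¹' Cᶜ, hC.isOpen_compl.preimage continuous_snd, fun h => hzV (hCV h), ?_⟩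
      exact hp.continuousOn.congr fun z hz => hQC z.1 z.2 hz.2
  have hQπ : ∀ z, π (Q z) = z.2 := fun z => by
    by_cases hz : z.2 ∈ V
    · exact (congrArg π (hQV z.1 ⟨z.2, hz⟩)).trans (hRπ _ _)
    · exact (congrArg π (hQC z.1 z.2 fun h => hz (hCV h))).trans ((p z.1).2 z.2)
  exact ⟨⟨fun y => ⟨ContinuousMap.curry ⟨Q, hQ⟩ y, fun x => hQπ (y, x)⟩, by fun_prop⟩, hQV, hQC⟩

variable [R1Space M] {Δ U : Set M} {hΔU : Δ ⊆ U} {γ : C(U, E)}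

/-- The local deformation `R` is slowed down by a bump function on `M`, so that it becomes constant
away from `Δ`. -/
lemma exists_homotopicRel_of_local (hΔc : IsCompact Δ) (p : C(K, fixSet π γ Δ hΔU)) {V : Set M}
    (hV : IsOpen V) (hΔV : Δ ⊆ V) (R : C((I × K) × V, E)) (hRπ : ∀ z x, π (R (z, x)) = x)
    (hR₀ : ∀ y (x : V), R ((0, y), x) = (p y).1.1 x)
    (hRΔ : ∀ z, ∀ x : V, ↑x ∈ Δ → R (z, x) = (p z.2).1.1 x) :
    ∃ q : C(K, fixSet π γ Δ hΔU),
      p.HomotopicRel q {y | ∀ t (x : V), R ((t, y), x) = (p y).1.1 x} ∧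
      ∀ᶠ x in 𝓝ˢ Δ, ∀ hx : x ∈ V, ∀ y, (q y).1.1 x = R ((1, y), ⟨x, hx⟩) := by
  obtain ⟨ρ, hρ, hρ_one⟩ := exists_bump hΔc hV hΔV
  let p' : C(I × K, SectionSpace π) := ⟨fun z => (p z.2).1, by fun_prop⟩
  obtain ⟨Q, hQV, hQρ⟩ := exists_glue p' hV (isClosed_tsupport ρ) hρ
    ⟨fun z => R ((z.1.1 * ρ z.2, z.1.2), z.2), by fun_prop⟩ (fun _ _ => hRπ _ _) fun z x hx => by
      simpa [p', image_eq_zero_of_notMem_tsupport hx] using hR₀ z.2 x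
  have Q_eq : ∀ z, (∀ x : V, R ((z.1 * ρ x, z.2), x) = (p z.2).1.1 x) → Q z = (p z.2).1 :=
    fun z hz => Subtype.ext <| ContinuousMap.ext fun x => by
      by_cases hx : x ∈ V
      · exact (hQV z ⟨x, hx⟩).trans (hz ⟨x, hx⟩)
      · exact hQρ z x fun h => hx (hρ h)
  let H : C(I × K, fixSet π γ Δ hΔU) := ⟨fun z => ⟨Q z, fun x hx =>
    (hQV z ⟨x, hΔV hx⟩).trans ((hRΔ _ ⟨x, hΔV hx⟩ hx).trans ((p z.2).2 x hx))⟩, by fun_prop⟩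
  refine ⟨H.curry 1, ⟨⟨⟨H, fun y => Subtype.ext <| Q_eq (0, y) fun x => ?_, fun _ => rfl⟩,
    fun t y hy => Subtype.ext <| Q_eq (t, y) fun x => hy _ x⟩⟩, ?_⟩
  · simpa using hR₀ y x
  · filter_upwards [hρ_one] with x hx hxV y
    simpa [H, hx] using hQV (1, y) ⟨x, hxV⟩

variable {N V : Set M}

lemma exists_homotopicRel_walk (hΔc : IsCompact Δ) (hV : IsOpen V) (hΔV : Δ ⊆ V)
    (D : LocalDeformation π Δ N V) (c : C(K, I)) (p : C(K, fixSet π γ Δ hΔU)) :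
    ∃ q : C(K, fixSet π γ Δ hΔU), p.HomotopicRel q {y | c y = 0} ∧
      ∀ᶠ x in 𝓝ˢ Δ, ∀ hx : x ∈ V, ∀ y,
        (q y).1.1 x = D.walk (fun x => (p y).1.1 x) ⟨x, hx⟩ (c y) := by
  have hpπ : ∀ y (x : N), π ((p y).1.1 x) = x := fun y x => (p y).1.2 x
  have hp : Continuous fun z : K × N => (p z.1).1.1 z.2 := by
    have : Continuous fun y => (p y).1.1 := by fun_prop
    exact (this.comp continuous_fst).eval (continuous_subtype_val.comp continuous_snd)
  obtain ⟨q, hpq, hq⟩ := exists_homotopicRel_of_local hΔc p hV hΔV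
    ⟨fun z => D.walk (fun x => (p z.1.2).1.1 x) z.2 (z.1.1 * c z.1.2), D.continuous_walk
      (s := fun (z : (I × K) × V) (x : N) => (p z.1.2).1.1 x)
      (hp.comp (by fun_prop : Continuous fun w : ((I × K) × V) × N => (w.1.1.2, w.2)))
      (fun _ => hpπ _) continuous_snd (by fun_prop)⟩
    (fun _ x => D.proj_walk (hpπ _) x _) (fun y x => by simpa using D.walk_zero (hpπ y) x)
    fun _ _ hx => D.walk_of_mem (hpπ _) hx _
  refine ⟨q, homotopicRel_mono hpq fun y (hy : c y = 0) t x => ?_, ?_⟩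
  · simpa [hy] using D.walk_zero (hpπ y) x
  · filter_upwards [hq] with x hx hxV y
    simpa using hx hxV y

lemma exists_homotopicRel_of_eq_walk (hΔc : IsCompact Δ)
    (D : LocalDeformation π Δ N V) {s : C(N, E)} (hs : ∀ x, π (s x) = x) (c : C(K, I))
    (p : C(K, fixSet π γ Δ hΔU)) {V' : Set M} (hV' : IsOpen V') (hΔV' : Δ ⊆ V') (hV'V : V' ⊆ V)
    (hp : ∀ y (x : V'), (p y).1.1 x = D.walk s (Set.inclusion hV'V x) (c y)) :
    ∃ q : C(K, fixSet π γ Δ hΔU), p.HomotopicRel q {y | c y = 0} ∧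
      ∀ᶠ x in 𝓝ˢ Δ, ∀ hx : x ∈ V', ∀ y, (q y).1.1 x = s ⟨x, D.subset (hV'V hx)⟩ := by
  obtain ⟨q, hpq, hq⟩ := exists_homotopicRel_of_local hΔc p hV' hΔV'
    ⟨fun z => D.walk s (Set.inclusion hV'V z.2) (σ z.1.1 * c z.1.2),
      D.continuous_walk (s := fun _ : (I × K) × V' => s) (by fun_prop) (fun _ => hs)
      ((continuous_inclusion hV'V).comp continuous_snd) (by fun_prop)⟩
    (fun z x => D.proj_walk hs _ _) (fun y x => by simpa using (hp y x).symm)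
    fun z x hx => (D.walk_of_mem hs hx _).trans
      ((D.walk_of_mem hs hx _).symm.trans (hp z.2 x).symm)
  refine ⟨q, homotopicRel_mono hpq fun y (hy : c y = 0) t x => ?_, ?_⟩
  · simpa [hy] using (hp y x).symm
  · filter_upwards [hq] with x hx hxV y
    simpa using (hx hxV y).trans (by simpa using D.walk_zero hs _)

/-- The family `p` first walks out, up to the time `c`, so that near `Δ` it agrees with the walk
of `γ`: where `c < 1` because `p` agrees with `γ` on `N`, and where `c = 1` because a completed
walk only depends on the values over `Δ`. Then it walks back along the walk of `γ`. -/
theorem IsFiberBundle.exists_homotopicRel_mem_fixSet {F : Type u} [TopologicalSpace F]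
    (hπ : IsFiberBundle F π) (hΔc : IsCompact Δ) (hΔcof : ClosedCofibration Δ)
    (hγ : ∀ x : U, π (γ x) = x) (hN : N ∈ 𝓝ˢ Δ) (hNU : N ⊆ U) (c : C(K, I))
    (p : C(K, fixSet π γ Δ hΔU)) (hp : ∀ y, c y ≠ 1 → (p y).1 ∈ fixSet π γ N hNU) :
    ∃ q : C(K, fixSet π γ Δ hΔU), p.HomotopicRel q {y | c y = 0} ∧
      ∃ O ∈ 𝓝ˢ Δ, ∃ hOU : O ⊆ U, ∀ y, (q y).1 ∈ fixSet π γ O hOU := by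
  obtain ⟨V, hV, hΔV, ⟨D⟩⟩ := hπ.exists_localDeformation hΔc hΔcof hN
  let s : C(N, E) := γ.comp (.inclusion hNU)
  have walk_eq : ∀ y x, D.walk (fun x => (p y).1.1 x) x (c y) = D.walk s x (c y) := fun y x => by
    by_cases hc : c y = 1
    · rw [hc, D.walk_one_congr (s' := s) fun x hx => (p y).2 x hx]
    · exact congrArg (fun s => D.walk s x (c y)) (funext fun x => hp y hc x x.2)
  obtain ⟨q₁, hpq₁, hq₁⟩ := exists_homotopicRel_walk hΔc hV hΔV D c p
  obtain ⟨V', hV', hΔV', hV'q₁⟩ := mem_nhdsSet_iff_exists.1 (hq₁.and (hV.mem_nhdsSet.2 hΔV))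
  have hV'V : V' ⊆ V := fun x hx => (hV'q₁ hx).2
  obtain ⟨q₂, hq₁₂, hq₂⟩ := exists_homotopicRel_of_eq_walk hΔc D (s := s) (fun _ => hγ _) c q₁
    hV' hΔV' hV'V fun y x => ((hV'q₁ x.2).1 (hV'V x.2) y).trans (walk_eq y _)
  exact ⟨q₂, hpq₁.trans hq₁₂, _, hq₂.and (hV'.mem_nhdsSet.2 hΔV'),
    fun x hx => hNU (D.subset (hV'V hx.2)), fun y x hx => hx.1 hx.2 y⟩

end Sections

/-! ### The colimit of the stages -/

/-- The homotopy stays at `p` for `t < 1` and jumps to `q` at time `1`. -/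
lemma homotopicRel_of_specializes {K X : Type*} [TopologicalSpace K] [TopologicalSpace X]
    {p q : C(K, X)} (h : ∀ y, p y ⤳ q y) : p.HomotopicRel q {y | p y = q y} := by
  classical
  have hJ : IsOpen {z : I × K | z.1 < 1} := isOpen_lt continuous_fst continuous_const
  let H : I × K → X := Set.piecewise {z : I × K | z.1 < 1} (fun z => p z.2) (fun z => q z.2)
  have hH : Continuous H :=
    hJ.continuous_piecewise_of_specializes (by fun_prop) (by fun_prop) fun z => h z.2
  refine ⟨⟨⟨⟨H, hH⟩, fun y => ?_, fun y => ?_⟩, fun t y (hy : p y = q y) => ?_⟩⟩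
  · simp [H]
  · simp [H]
  · by_cases ht : t < 1 <;> simp [H, ht, hy]

lemma hasAntitoneBasis_nhdsSet {X : Type*} [TopologicalSpace X] {A : Set X} {B : ℕ → Set X}
    (hB : Antitone B) (hAB : ∀ i, A ⊆ interior (B i))
    (hBV : ∀ V, IsOpen V → A ⊆ V → ∃ i, B i ⊆ V) : (𝓝ˢ A).HasAntitoneBasis B where
  antitone := hB
  mem_iff' S := by
    refine ⟨fun hS => ?_, fun ⟨i, _, hi⟩ =>
      Filter.mem_of_superset (subset_interior_iff_mem_nhdsSet.1 (hAB i)) hi⟩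
    obtain ⟨V, hV, hAV, hVS⟩ := mem_nhdsSet_iff_exists.1 hS
    obtain ⟨i, hi⟩ := hBV V hV hAV
    exact ⟨i, trivial, hi.trans hVS⟩

section Germ

variable {E M : Type u} [TopologicalSpace E] [TopologicalSpace M]
  {π : E → M} {U Δ : Set M} {γ : C(U, E)} {B : ℕ → Set M} {hBU : ∀ i, B i ⊆ U}

lemma fixSet_anti {A A' : Set M} (h : A' ⊆ A) (hA : A ⊆ U) :
    fixSet π γ A hA ⊆ fixSet π γ A' (h.trans hA) := fun _ hs x hx => hs x (h hx)

lemma sectionSpace_specializes_iff {s t : SectionSpace π} : s ⤳ t ↔ ∀ x, s.1 x ⤳ t.1 x := by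
  have : s ⤳ t ↔ s.1 ⤳ t.1 := Topology.IsInducing.subtypeVal.specializes_iff.symm
  rw [this, ← ContinuousMap.specializes_coe, specializes_pi]

open Classical in
/-- The new family is equal to `γ` over `C` and to the old one elsewhere. -/
lemma exists_specializes_mem_fixSet [LocallyCompactSpace M] (hγ : ∀ x : U, π (γ x) = x)
    {K : Type*} [TopologicalSpace K] (p : C(K, SectionSpace π)) {V C : Set M} (hV : IsOpen V)
    (hVU : V ⊆ U) (hC : IsClosed C) (hCV : C ⊆ V)
    (hp : ∀ y (x : V), (p y).1 x ⤳ γ (Set.inclusion hVU x)) :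
    ∃ q : C(K, SectionSpace π), (∀ y, q y ∈ fixSet π γ C (hCV.trans hVU)) ∧
      (∀ y, p y ⤳ q y) ∧ ∀ y, p y ∈ fixSet π γ V hVU → q y = p y := by
  let T : Set (K × V) := {z | ↑z.2 ∈ C}
  let R : K × V → E :=
    T.piecewise (fun z => γ (Set.inclusion hVU z.2)) (fun z => (p z.1).1 z.2)
  have hR_mem : ∀ y (x : V), ↑x ∈ C → R (y, x) = γ (Set.inclusion hVU x) := fun y x hx =>
    T.piecewise_eq_of_mem _ _ hx
  have hR_notMem : ∀ y (x : V), ↑x ∉ C → R (y, x) = (p y).1 x := fun y x hx =>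
    T.piecewise_eq_of_notMem _ _ hx
  have hpc : Continuous fun z : K × V => (p z.1).1 z.2 :=
    ((continuous_subtype_val.comp p.continuous).comp continuous_fst).eval (by fun_prop)
  have hR : Continuous R :=
    (hC.preimage (by fun_prop)).continuous_piecewise_of_specializes
      (γ.continuous.comp ((continuous_inclusion hVU).comp continuous_snd)) hpc
      fun z => hp z.1 z.2
  obtain ⟨q, hqV, hqC⟩ := exists_glue p hV hC hCV ⟨R, hR⟩ (fun y x => by
    by_cases hx : ↑x ∈ C
    · exact (congrArg π (hR_mem y x hx)).trans (hγ _)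
    · exact (congrArg π (hR_notMem y x hx)).trans ((p y).2 x)) hR_notMem
  have hq_mem : ∀ y x (hx : x ∈ C), (q y).1 x = γ ⟨x, hVU (hCV hx)⟩ := fun y x hx =>
    (hqV y ⟨x, hCV hx⟩).trans (hR_mem y _ hx)
  refine ⟨q, hq_mem, fun y => sectionSpace_specializes_iff.2 fun x => ?_, fun y hy =>
    Subtype.ext <| ContinuousMap.ext fun x => ?_⟩
  · by_cases hx : x ∈ C
    · exact hq_mem y x hx ▸ hp y ⟨x, hCV hx⟩
    · exact specializes_of_eq (hqC y x hx).symm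
  · by_cases hx : x ∈ C
    · exact (hq_mem y x hx).trans (hy x (hCV hx)).symm
    · exact hqC y x hx

/-- The space `Γ_g(E, Δ, γ)`, that is, the union of the stages `Γ(E, B i, γ)` with the colimit
topology. It is a type synonym because the union itself carries the subspace topology. -/
def GermSpace (π : E → M) {U : Set M} (γ : C(U, E)) (B : ℕ → Set M) (hBU : ∀ i, B i ⊆ U) :
    Type u :=
  ↥(⋃ i, fixSet π γ (B i) (hBU i))

namespace GermSpace

instance : TopologicalSpace (GermSpace π γ B hBU) :=
  ⨆ i, TopologicalSpace.coinduced
    (Set.inclusion (Set.subset_iUnion (fun i => fixSet π γ (B i) (hBU i)) i)) inferInstance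

/-- The inclusion of the `i`-th stage `Γ(E, B i, γ)` into `Γ_g(E, Δ, γ)`. -/
def of (i : ℕ) : C(fixSet π γ (B i) (hBU i), GermSpace π γ B hBU) :=
  ⟨Set.inclusion (Set.subset_iUnion (fun i => fixSet π γ (B i) (hBU i)) i),
    continuous_iSup_rng (i := i) continuous_coinduced_rng⟩

/-- The `i`-th stage `Γ(E, B i, γ)` as a subset of `Γ_g(E, Δ, γ)`. -/
def stage (i : ℕ) : Set (GermSpace π γ B hBU) := {s | s.1 ∈ fixSet π γ (B i) (hBU i)}

lemma exists_mem_stage (s : GermSpace π γ B hBU) : ∃ i, s ∈ stage i :=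
  (Set.mem_iUnion (s := fun i => fixSet π γ (B i) (hBU i))).1 s.2

lemma stage_mono (hB : Antitone B) :
    Monotone (stage : ℕ → Set (GermSpace π γ B hBU)) := fun _ _ hij _ hs =>
  fixSet_anti (hB hij) _ hs

lemma isClosed_iff {D : Set (GermSpace π γ B hBU)} : IsClosed D ↔ ∀ i, IsClosed (of i ⁻¹' D) :=
  isClosed_iSup_iff.trans (forall_congr' fun _ => isClosed_coinduced)

/-- The inclusion of `Γ_g(E, Δ, γ)` into the space `Γ(E, Δ, γ)` of sections. -/
def toFixSet (hΔU : Δ ⊆ U) (hΔB : ∀ i, Δ ⊆ B i) : C(GermSpace π γ B hBU, fixSet π γ Δ hΔU) where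
  toFun s := ⟨s.1, have ⟨i, hi⟩ := s.exists_mem_stage; fixSet_anti (hΔB i) _ hi⟩
  continuous_toFun :=
    continuous_iSup_dom.2 fun _ => continuous_coinduced_dom.2 (continuous_subtype_val.subtype_mk _)

lemma toFixSet_injective (hΔU : Δ ⊆ U) (hΔB : ∀ i, Δ ⊆ B i) :
    Function.Injective (toFixSet hΔU hΔB : C(GermSpace π γ B hBU, fixSet π γ Δ hΔU)) :=
  fun _ _ h => Subtype.ext (congrArg (fun r => r.1) h)

lemma continuous_val : Continuous fun s : GermSpace π γ B hBU => (s.1 : SectionSpace π) :=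
  continuous_iSup_dom.2 fun _ => continuous_coinduced_dom.2 continuous_subtype_val

/-- Two points of the colimit lie in a common stage, which carries the compact-open topology. -/
lemma specializes_iff (hB : Antitone B) {s t : GermSpace π γ B hBU} : s ⤳ t ↔ s.1 ⤳ t.1 := by
  refine ⟨fun h => h.map continuous_val, fun h => ?_⟩
  obtain ⟨i, hi⟩ := s.exists_mem_stage
  obtain ⟨j, hj⟩ := t.exists_mem_stage
  let s' : fixSet π γ (B (max i j)) (hBU _) := ⟨s.1, stage_mono hB (le_max_left i j) hi⟩
  let t' : fixSet π γ (B (max i j)) (hBU _) := ⟨t.1, stage_mono hB (le_max_right i j) hj⟩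
  have h' : s' ⤳ t' := Topology.IsInducing.subtypeVal.specializes_iff.1 h
  exact h'.map (of _).continuous

lemma isClosed_setOfPred_exists_specializes (hB : Antitone B) {s : ℕ → GermSpace π γ B hBU}
    (hs : ∀ l i, ∀ t ∈ stage i, s l ⤳ t → l < i) (j : ℕ) :
    IsClosed {t | ∃ l ≥ j, s l ⤳ t} := by
  refine isClosed_iff.2 fun i => ?_
  have : of i ⁻¹' {t | ∃ l ≥ j, s l ⤳ t} =
      ⋃ l ∈ Finset.Ico j i, Subtype.val ⁻¹' closure {(s l).1} := by
    ext t
    simp only [Set.mem_preimage, Set.mem_ofPred_eq, Set.mem_iUnion, Finset.mem_Ico, exists_prop,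
      ← specializes_iff_mem_closure]
    refine exists_congr fun l => ⟨fun ⟨hjl, hl⟩ => ?_, fun ⟨⟨hjl, _⟩, hl⟩ => ?_⟩
    · exact ⟨⟨hjl, hs l i (of i t) t.2 hl⟩, (specializes_iff hB).1 hl⟩
    · exact ⟨hjl, (specializes_iff hB).2 hl⟩
  rw [this]
  exact isClosed_biUnion_finset fun l _ => isClosed_closure.preimage continuous_subtype_val

/-- A compact family in the colimit lies in a single stage up to specialization. If the total space
is `T₁`, this is the usual fact that a compact subset of a sequential colimit along closed
inclusions lies in a stage. -/
lemma exists_specializes_stage (hB : Antitone B) {K : Type*} [TopologicalSpace K]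
    [CompactSpace K] (p : C(K, GermSpace π γ B hBU)) (k : ℕ) :
    ∃ m ≥ k, ∀ y x (hx : x ∈ B m), (p y).1.1 x ⤳ γ ⟨x, hBU m hx⟩ := by
  by_contra! h
  choose y x hx hyx using fun l => h (max l k) (le_max_right _ _)
  have hlt : ∀ l i, ∀ t ∈ stage i, p (y l) ⤳ t → l < i := fun l i t ht hlt => by
    by_contra! hil
    have hxi : x l ∈ B i := hB (hil.trans (le_max_left l k)) (hx l)
    have := sectionSpace_specializes_iff.1 ((specializes_iff hB).1 hlt) (x l)
    exact hyx l (ht _ hxi ▸ this)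
  have hD := isClosed_setOfPred_exists_specializes hB hlt
  obtain ⟨z, hz⟩ := IsCompact.nonempty_iInter_of_sequence_nonempty_isCompact_isClosed
    (fun j => p ⁻¹' {t | ∃ l ≥ j, p (y l) ⤳ t})
    (fun j z ⟨l, hl, h⟩ => ⟨l, (Nat.le_succ j).trans hl, h⟩)
    (fun j => ⟨y j, j, le_rfl, specializes_rfl⟩) ((hD 0).preimage p.continuous).isCompact
    (fun j => (hD j).preimage p.continuous)
  obtain ⟨i, hi⟩ := (p z).exists_mem_stage
  obtain ⟨l, hil, hl⟩ := Set.mem_iInter.1 hz i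
  exact (hlt l i _ hi hl).not_ge hil

variable [R1Space M] [LocallyCompactSpace M]

lemma hasStageDeformations (hγ : ∀ x : U, π (γ x) = x) (hΔc : IsCompact Δ)
    (hB : (𝓝ˢ Δ).HasAntitoneBasis B) :
    HasStageDeformations (stage : ℕ → Set (GermSpace π γ B hBU)) := by
  intro K _ _ p k
  obtain ⟨m, hkm, hm⟩ := exists_specializes_stage hB.antitone p k
  have hVB : interior (B m) ⊆ B m := interior_subset
  obtain ⟨W, hW, hΔW, hWV⟩ := hΔc.exists_isOpen_closure_subset
    (isOpen_interior.mem_nhdsSet.2 (subset_interior_iff_mem_nhdsSet.2 (hB.mem m)))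
  obtain ⟨q, hqW, hpq, hq_eq⟩ := exists_specializes_mem_fixSet hγ
    ⟨fun y => (p y).1, continuous_val.comp p.continuous⟩ isOpen_interior (hVB.trans (hBU m))
    isClosed_closure hWV fun y x => hm y x (hVB x.2)
  obtain ⟨m', hm'⟩ := hB.mem_iff.1
    (Filter.mem_of_superset (hW.mem_nhdsSet.2 hΔW) subset_closure)
  let q' : C(K, GermSpace π γ B hBU) :=
    (of m').comp ⟨fun y => ⟨q y, fixSet_anti hm' _ (hqW y)⟩, by fun_prop⟩
  refine ⟨m', q', fun y => fixSet_anti hm' _ (hqW y), homotopicRel_mono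
    (homotopicRel_of_specializes fun y => (specializes_iff hB.antitone).2 (hpq y)) fun y hy => ?_⟩
  exact Subtype.ext (hq_eq y (fixSet_anti (hVB.trans (hB.antitone hkm)) _ hy)).symm

lemma isCompressible_toFixSet {F : Type u} [TopologicalSpace F] (hπ : IsFiberBundle F π)
    (hγ : ∀ x : U, π (γ x) = x) (hΔc : IsCompact Δ) (hΔcof : ClosedCofibration Δ)
    (hB : (𝓝ˢ Δ).HasAntitoneBasis B) (hΔU : Δ ⊆ U) :
    IsCompressible (toFixSet hΔU fun i => subset_of_mem_nhdsSet (hB.mem i) :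
      C(GermSpace π γ B hBU, fixSet π γ Δ hΔU)) stage := by
  intro K _ c p k hp
  obtain ⟨q, hpq, O, hO, hOU, hq⟩ := hπ.exists_homotopicRel_mem_fixSet hΔc hΔcof hγ (hB.mem k)
    (hBU k) c p fun y hy => by
      obtain ⟨s, hs, hsp⟩ := hp y hy
      exact hsp ▸ hs
  obtain ⟨m, hm⟩ := hB.mem_iff.1 hO
  exact ⟨(of m).comp ⟨fun y => ⟨(q y).1, fixSet_anti hm hOU (hq y)⟩, by fun_prop⟩, hpq⟩

end GermSpace

theorem germSections_toSections_isWeakHomotopyEquiv_general {F : Type u} [TopologicalSpace F]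
    [R1Space M] [LocallyCompactSpace M] (hπ : IsFiberBundle F π) (hΔc : IsCompact Δ)
    (hΔcof : ClosedCofibration Δ) (hΔU : Δ ⊆ U) (hγ : ∀ x : U, π (γ x) = x)
    (hB : (𝓝ˢ Δ).HasAntitoneBasis B) :
    IsWeakHomotopyEquiv
      (GermSpace.toFixSet hΔU fun i => subset_of_mem_nhdsSet (hB.mem i) :
        GermSpace π γ B hBU → fixSet π γ Δ hΔU) :=
  (GermSpace.isCompressible_toFixSet hπ hγ hΔc hΔcof hB hΔU).isWeakHomotopyEquiv
    (GermSpace.toFixSet_injective hΔU _) (GermSpace.stage_mono hB.antitone)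
    GermSpace.exists_mem_stage (GermSpace.hasStageDeformations hγ hΔc hB)

end Germ

/-- Let `M` be a manifold without boundary and `π : E → M` a fiber bundle with path-connected
fiber.  Let `Δ ⊆ M` be compact and contractible with `Δ ↪ M` a closed cofibration, `γ` a
section of `π` on a neighborhood `U` of `Δ`, and `B_0 ⊇ B_1 ⊇ ⋯ ⊆ U` a neighborhood basis of
`Δ` by compact contractible sets whose inclusions into `M` are closed cofibrations.  Then the
natural inclusion `Γ_g(E, Δ, γ) = colim_i Γ(E, B_i, γ) → Γ(E, Δ, γ)`, where the colimit
carries the colimit topology, is a weak homotopy equivalence. -/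
theorem germSections_toSections_isWeakHomotopyEquiv {d : ℕ} {E M F : Type u}
    [TopologicalSpace E] [TopologicalSpace M] [TopologicalSpace F]
    [ChartedSpace (EuclideanSpace ℝ (Fin d)) M] [T2Space M] [PathConnectedSpace F]
    (π : E → M) (hπ : IsFiberBundle F π)
    (Δ : Set M) (hΔc : IsCompact Δ) (hΔcon : ContractibleSpace Δ)
    (hΔcof : ClosedCofibration Δ)
    (U : Set M) (hU : IsOpen U) (hΔU : Δ ⊆ U)
    (γ : C(U, E)) (hγ : ∀ x : U, π (γ x) = ↑x)
    (B : ℕ → Set M) (hBU : ∀ i, B i ⊆ U) (hBmono : ∀ i, B (i + 1) ⊆ B i)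
    (hBnbhd : ∀ i, Δ ⊆ interior (B i))
    (hBbasis : ∀ V : Set M, IsOpen V → Δ ⊆ V → ∃ i, B i ⊆ V)
    (hBcomp : ∀ i, IsCompact (B i)) (hBcon : ∀ i, ContractibleSpace (B i))
    (hBcof : ∀ i, ClosedCofibration (B i)) :
    -- the colimit topology on `Γ_g(E, Δ, γ) = ⋃ i, Γ(E, B_i, γ)`
    let tg : TopologicalSpace ↥(⋃ i, fixSet π γ (B i) (hBU i)) :=
      ⨆ i, TopologicalSpace.coinduced
        (Set.inclusion (Set.subset_iUnion (fun i => fixSet π γ (B i) (hBU i)) i)) inferInstance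
    -- the natural inclusion `Γ_g(E, Δ, γ) → Γ(E, Δ, γ)`
    @IsWeakHomotopyEquiv _ _ tg _
      (fun s : ↥(⋃ i, fixSet π γ (B i) (hBU i)) =>
        (⟨s.1, by
          obtain ⟨i, hi⟩ := Set.mem_iUnion.mp s.2
          exact fun x hx => hi x (interior_subset (hBnbhd i hx))⟩ :
          ↥(fixSet π γ Δ hΔU))) := by
  have : LocallyCompactSpace M :=
    ChartedSpace.locallyCompactSpace (EuclideanSpace ℝ (Fin d)) M
  exact germSections_toSections_isWeakHomotopyEquiv_general hπ hΔc hΔcof hΔU hγ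
    (hasAntitoneBasis_nhdsSet (antitone_nat_of_succ_le hBmono) hBnbhd hBbasis)
end

section
/- Let X be a topological space and let Δ ⊆ B be compact Hausdorff spaces, both contractible. Then the restriction map C(B, X) → C(Δ, X), f ↦ f|_Δ, between spaces of continuous maps with the compact-open topology, is a homotopy equivalence; in particular it is a weak homotopy equivalence. -/
/-!
Any map between contractible spaces is a homotopy equivalence; this applies to the inclusion
`Δ → B`. Although composition of maps is not jointly continuous in general, `(t, φ) ↦ φ ∘ F_t` is
for every homotopy `F`, by the tube lemma and the local compactness of the time interval; so
precomposition with a homotopy equivalence is a homotopy equivalence of mapping spaces.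

A homotopy equivalence is a weak one, but its homotopies move basepoints. A homotopy from `f` to `g`
along which the basepoint runs through a path `γ` deforms every loop `f ∘ p` into `g ∘ p` through
maps of the cube whose boundary goes to `γ t` at time `t`. Up to homotopy rel boundary, the final
loop of such a deformation depends only on `γ` and the initial loop: shrink the initial loop to the
concentric cube of half size and run `γ` radially in the remaining shell. This transport along `γ`
is inverted by transport along the reversed path, so homotopic maps induce maps of homotopy groups
that differ by a bijection.
-/

open scoped unitInterval Topology

universe u v w

/-- The restriction map `C(B, X) → C(Δ, X)`, as a continuous map between mapping spaces
with the compact-open topology. -/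
def restrictionMap {B X : Type u} [TopologicalSpace B] [TopologicalSpace X] (Δ : Set B) :
    C(C(B, X), C(↥Δ, X)) :=
  ⟨fun f => f.restrict Δ, ContinuousMap.continuous_restrict Δ⟩

section CenteredCube

variable {N : Type*}

/-- The coordinates on the cube that put its centre at the origin of `N → ℝ` and its boundary on
the unit sphere of the sup norm. -/
def centeredCoord (z : I^N) : N → ℝ := fun i => 2 * (z i : ℝ) - 1

/-- The retraction of `N → ℝ` onto the cube, given in the coordinates `centeredCoord` by clamping
each of them to `[-1, 1]`. -/
noncomputable def clampToCube (v : N → ℝ) : I^N :=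
  fun i => Set.projIcc 0 1 zero_le_one ((1 + v i) / 2)

@[fun_prop]
theorem continuous_centeredCoord : Continuous (centeredCoord : (I^N) → N → ℝ) := by
  unfold centeredCoord
  fun_prop

@[fun_prop]
theorem continuous_clampToCube : Continuous (clampToCube : (N → ℝ) → I^N) :=
  continuous_pi fun _ => continuous_projIcc.comp (by fun_prop)

@[simp]
theorem clampToCube_centeredCoord (z : I^N) : clampToCube (centeredCoord z) = z := by
  funext i
  have h : (1 + centeredCoord z i) / 2 = z i := by simp only [centeredCoord]; ring
  simp only [clampToCube, h, Set.projIcc_val]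

variable [Fintype N]

theorem norm_centeredCoord_le_one (z : I^N) : ‖centeredCoord z‖ ≤ 1 := by
  refine (pi_norm_le_iff_of_nonneg zero_le_one).2 fun i => ?_
  rw [centeredCoord, Real.norm_eq_abs, abs_le]
  constructor <;> linarith [(z i).2.1, (z i).2.2]

theorem norm_centeredCoord_of_mem_boundary {z : I^N} (hz : z ∈ Cube.boundary N) :
    ‖centeredCoord z‖ = 1 := by
  obtain ⟨i, hi⟩ := hz
  refine le_antisymm (norm_centeredCoord_le_one z) (le_trans ?_ (norm_le_pi_norm _ i))
  rcases hi with h | h <;> norm_num [centeredCoord, h]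

theorem clampToCube_mem_boundary {v : N → ℝ} (hv : 1 ≤ ‖v‖) :
    clampToCube v ∈ Cube.boundary N := by
  obtain ⟨i, hi⟩ : ∃ i, 1 ≤ |v i| := by
    contrapose! hv
    exact (pi_norm_lt_iff zero_lt_one).2 hv
  refine ⟨i, (le_abs'.1 hi).imp (fun h => ?_) fun h => ?_⟩
  · exact Set.projIcc_of_le_left _ (by linarith)
  · exact Set.projIcc_of_right_le _ (by linarith)

end CenteredCube

section Transport

variable {N : Type*} {X : Type*} [TopologicalSpace X] {x y : X}

/-- `FreelyHomotopic γ p q`: the loops `p` and `q` are homotopic through maps of the cube which at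
time `t` send the whole boundary to `γ t`. -/
def FreelyHomotopic (γ : Path x y) (p : GenLoop N X x) (q : GenLoop N X y) : Prop :=
  ∃ F : p.1.Homotopy q.1, ∀ t, ∀ z ∈ Cube.boundary N, F (t, z) = γ t

theorem FreelyHomotopic.symm {γ : Path x y} {p : GenLoop N X x} {q : GenLoop N X y}
    (h : FreelyHomotopic γ p q) : FreelyHomotopic γ.symm q p := by
  obtain ⟨F, hF⟩ := h
  exact ⟨F.symm, fun t z hz => hF (unitInterval.symm t) z hz⟩

variable [Fintype N]

/-- The extension of a loop `p` from the cube to all of `N → ℝ`, in centered coordinates, which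
runs `γ` along the rays outside of the cube. -/
noncomputable def radialExtend (γ : Path x y) (p : GenLoop N X x) (v : N → ℝ) : X :=
  open Classical in
  if ‖v‖ ≤ 1 then p (clampToCube v) else γ.extend (‖v‖ - 1)

theorem radialExtend_of_norm_le_one (γ : Path x y) (p : GenLoop N X x) {v : N → ℝ}
    (hv : ‖v‖ ≤ 1) : radialExtend γ p v = p (clampToCube v) :=
  if_pos hv

theorem radialExtend_of_one_le_norm (γ : Path x y) (p : GenLoop N X x) {v : N → ℝ}
    (hv : 1 ≤ ‖v‖) : radialExtend γ p v = γ.extend (‖v‖ - 1) := by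
  rcases hv.eq_or_lt with h | h
  · rw [radialExtend_of_norm_le_one γ p h.ge, GenLoop.boundary p _ (clampToCube_mem_boundary hv),
      ← h, sub_self, Path.extend_zero]
  · exact if_neg h.not_ge

@[simp]
theorem radialExtend_centeredCoord (γ : Path x y) (p : GenLoop N X x) (z : I^N) :
    radialExtend γ p (centeredCoord z) = p z := by
  rw [radialExtend_of_norm_le_one γ p (norm_centeredCoord_le_one z), clampToCube_centeredCoord]

theorem radialExtend_smul_of_mem_boundary (γ : Path x y) (p : GenLoop N X x) {c : ℝ} (hc : 1 ≤ c)
    {z : I^N} (hz : z ∈ Cube.boundary N) :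
    radialExtend γ p (c • centeredCoord z) = γ.extend (c - 1) := by
  have hnorm : ‖c • centeredCoord z‖ = c := by
    rw [norm_smul, norm_centeredCoord_of_mem_boundary hz, mul_one,
      Real.norm_of_nonneg (by linarith)]
  rw [radialExtend_of_one_le_norm γ p (hc.trans_eq hnorm.symm), hnorm]

@[fun_prop]
theorem continuous_radialExtend {A : Type*} [TopologicalSpace A] (γ : Path x y)
    {p : A → GenLoop N X x} {v : A → N → ℝ} (hp : Continuous p) (hv : Continuous v) :
    Continuous fun a => radialExtend γ (p a) (v a) := by
  refine Continuous.if_le (by fun_prop) (γ.continuous_extend.comp (by fun_prop)) (by fun_prop)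
    continuous_const fun a ha => ?_
  rw [← radialExtend_of_norm_le_one γ (p a) ha.le, radialExtend_of_one_le_norm γ (p a) ha.ge]

/-- Transport of a loop along a path `γ` of basepoints: the loop on the concentric cube of half
size, and `γ` run radially in the remaining shell. -/
noncomputable def transport (γ : Path x y) (p : GenLoop N X x) : GenLoop N X y :=
  ⟨⟨fun z => radialExtend γ p ((2 : ℝ) • centeredCoord z), by fun_prop⟩, fun z hz => by
    change radialExtend γ p ((2 : ℝ) • centeredCoord z) = y
    rw [radialExtend_smul_of_mem_boundary γ p one_le_two hz, show (2 : ℝ) - 1 = 1 by norm_num,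
      Path.extend_one]⟩

theorem transport_apply (γ : Path x y) (p : GenLoop N X x) (z : I^N) :
    transport γ p z = radialExtend γ p ((2 : ℝ) • centeredCoord z) :=
  rfl

theorem freelyHomotopic_transport (γ : Path x y) (p : GenLoop N X x) :
    FreelyHomotopic γ p (transport γ p) := by
  refine ⟨{
    toFun := fun a => radialExtend γ p ((1 + (a.1 : ℝ)) • centeredCoord a.2)
    continuous_toFun := by fun_prop
    map_zero_left := fun z => ?_
    map_one_left := fun z => ?_ }, fun t z hz => ?_⟩
  · simp
  · simp only [Set.Icc.coe_one, one_add_one_eq_two, GenLoop.coe_coe, transport_apply]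
  · change radialExtend γ p ((1 + (t : ℝ)) • centeredCoord z) = γ t
    rw [radialExtend_smul_of_mem_boundary γ p (by linarith [t.2.1]) hz, add_sub_cancel_left,
      Path.extend_extends']

theorem transport_homotopic_transport (γ : Path x y) {p q : GenLoop N X x}
    (h : GenLoop.Homotopic p q) : GenLoop.Homotopic (transport γ p) (transport γ q) := by
  obtain ⟨H⟩ := h
  let L : I → GenLoop N X x := fun s =>
    ⟨H.toHomotopy.curry s, fun z hz => (H.eq_fst s hz).trans (GenLoop.boundary p z hz)⟩
  have hL : Continuous L := H.toHomotopy.curry.continuous.subtype_mk _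
  have hL0 : L 0 = p := GenLoop.ext _ _ H.apply_zero
  have hL1 : L 1 = q := GenLoop.ext _ _ H.apply_one
  exact ⟨{
    toFun := fun a => transport γ (L a.1) a.2
    continuous_toFun := continuous_radialExtend γ (hL.comp continuous_fst) (by fun_prop)
    map_zero_left := fun z => by rw [hL0]; rfl
    map_one_left := fun z => by rw [hL1]; rfl
    prop' := fun s z hz =>
      ((transport γ (L s)).2 z hz).trans ((transport γ p).2 z hz).symm }⟩

section FreeHomotopy

variable {γ : Path x y} {p : GenLoop N X x} {q : GenLoop N X y} {F : p.1.Homotopy q.1}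

theorem extend_clampToCube_of_one_le_norm
    (hF : ∀ t, ∀ z ∈ Cube.boundary N, F (t, z) = γ t) (t : ℝ) {v : N → ℝ} (hv : 1 ≤ ‖v‖) :
    F.extend t (clampToCube v) = γ.extend t :=
  hF _ _ (clampToCube_mem_boundary hv)

theorem extend_clampToCube_eq_radialExtend
    (hF : ∀ t, ∀ z ∈ Cube.boundary N, F (t, z) = γ t) (v : N → ℝ) :
    F.extend (max 0 (‖v‖ - 1)) (clampToCube v) = radialExtend γ p v := by
  rcases le_total ‖v‖ 1 with hv | hv
  · rw [radialExtend_of_norm_le_one γ p hv, max_eq_left (by linarith), F.extend_zero]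
    rfl
  · rw [radialExtend_of_one_le_norm γ p hv, max_eq_right (by linarith),
      extend_clampToCube_of_one_le_norm hF _ hv]

/-- The homotopy at time `s` shows stage `s` of the free homotopy on a concentric cube of size
`1 / (2 - s)`, surrounded by the part of `γ` from `s` to `1`. -/
theorem FreelyHomotopic.transport_homotopic (h : FreelyHomotopic γ p q) :
    GenLoop.Homotopic (transport γ p) q := by
  obtain ⟨F, hF⟩ := h
  let v : I × (I^N) → N → ℝ := fun a => (2 - (a.1 : ℝ)) • centeredCoord a.2
  have hv : Continuous v := by fun_prop
  refine ⟨{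
    toFun := fun a => F.extend (a.1 + max 0 (‖v a‖ - 1)) (clampToCube (v a))
    continuous_toFun := by fun_prop
    map_zero_left := fun z => ?_
    map_one_left := fun z => ?_
    prop' := fun s z hz => ?_ }⟩
  · have hv0 : v (0, z) = (2 : ℝ) • centeredCoord z := by simp [v]
    change F.extend (0 + max 0 (‖v (0, z)‖ - 1)) (clampToCube (v (0, z))) = transport γ p z
    rw [zero_add, extend_clampToCube_eq_radialExtend hF, hv0, transport_apply]
  · have hv1 : v (1, z) = centeredCoord z := by
      simp only [v, Set.Icc.coe_one, show (2 : ℝ) - 1 = 1 by norm_num, one_smul]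
    change F.extend (1 + max 0 (‖v (1, z)‖ - 1)) (clampToCube (v (1, z))) = q.1 z
    rw [F.extend_apply_of_one_le (le_add_of_nonneg_right (le_max_left _ _)), hv1,
      clampToCube_centeredCoord]
  · have hs : (s : ℝ) ≤ 1 := s.2.2
    have hnorm : ‖v (s, z)‖ = 2 - s := by
      rw [norm_smul, norm_centeredCoord_of_mem_boundary hz, mul_one,
        Real.norm_of_nonneg (by linarith)]
    change F.extend (s + max 0 (‖v (s, z)‖ - 1)) (clampToCube (v (s, z))) = transport γ p z
    rw [extend_clampToCube_of_one_le_norm hF _ (by linarith), hnorm, max_eq_right (by linarith),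
      GenLoop.boundary _ z hz, show (s : ℝ) + (2 - s - 1) = 1 by ring, Path.extend_one]

end FreeHomotopy

theorem transport_symm_transport (γ : Path x y) (p : GenLoop N X x) :
    GenLoop.Homotopic (transport γ.symm (transport γ p)) p :=
  (freelyHomotopic_transport γ p).symm.transport_homotopic

theorem transport_transport_symm (γ : Path x y) (q : GenLoop N X y) :
    GenLoop.Homotopic (transport γ (transport γ.symm q)) q := by
  simpa only [Path.symm_symm] using transport_symm_transport γ.symm q

/-- The change of basepoint bijection on homotopy groups induced by `transport`. -/
noncomputable def transportEquiv (γ : Path x y) : HomotopyGroup N X x ≃ HomotopyGroup N X y where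
  toFun := Quotient.map (transport γ) fun _ _ => transport_homotopic_transport γ
  invFun := Quotient.map (transport γ.symm) fun _ _ => transport_homotopic_transport γ.symm
  left_inv := Quotient.ind fun p => Quotient.sound (transport_symm_transport γ p)
  right_inv := Quotient.ind fun q => Quotient.sound (transport_transport_symm γ q)

end Transport

section WeakEquiv

variable {X : Type*} {Y : Type*} {Z : Type*} [TopologicalSpace X] [TopologicalSpace Y]
  [TopologicalSpace Z]

theorem freelyHomotopic_genLoopMap {N : Type} {f g : C(X, Y)} (H : f.Homotopy g) {x : X}
    (p : GenLoop N X x) :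
    FreelyHomotopic (H.evalAt x) (genLoopMap f p) (genLoopMap g p) :=
  ⟨H.compContinuousMap p.1, fun t z hz => congrArg (fun w => H (t, w)) (GenLoop.boundary p z hz)⟩

theorem transportEquiv_comp_piMap {f g : C(X, Y)} (H : f.Homotopy g) (n : ℕ) (x : X) :
    transportEquiv (H.evalAt x) ∘ piMap n f x = piMap n g x :=
  funext <| Quotient.ind fun p =>
    Quotient.sound (freelyHomotopic_genLoopMap H p).transport_homotopic

theorem piMap_bijective_iff_of_homotopic {f g : C(X, Y)} (h : f.Homotopic g) (n : ℕ) (x : X) :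
    Function.Bijective (piMap n f x) ↔ Function.Bijective (piMap n g x) := by
  obtain ⟨H⟩ := h
  rw [← transportEquiv_comp_piMap H, Equiv.comp_bijective]

theorem piMap_id (n : ℕ) (x : X) : piMap n (ContinuousMap.id X) x = id :=
  funext <| Quotient.ind fun _ => rfl

theorem piMap_comp (n : ℕ) (g : C(Y, Z)) (f : C(X, Y)) (x : X) :
    piMap n (g.comp f) x = piMap n g (f x) ∘ piMap n f x :=
  funext <| Quotient.ind fun _ => rfl

theorem piMap_comp_piMap_bijective {f : C(X, Y)} {g : C(Y, X)}
    (h : (g.comp f).Homotopic (ContinuousMap.id X)) (n : ℕ) (x : X) :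
    Function.Bijective (piMap n g (f x) ∘ piMap n f x) := by
  rw [← piMap_comp, piMap_bijective_iff_of_homotopic h, piMap_id]
  exact Function.bijective_id

theorem pi0Map_leftInverse {f : C(X, Y)} {g : C(Y, X)}
    (h : (g.comp f).Homotopic (ContinuousMap.id X)) :
    Function.LeftInverse (pi0Map g) (pi0Map f) := by
  obtain ⟨H⟩ := h
  exact Quotient.ind fun x => Quotient.sound ⟨H.evalAt x⟩

theorem isWeakHomotopyEquiv_of_homotopyEquiv (e : ContinuousMap.HomotopyEquiv X Y) :
    IsWeakHomotopyEquiv e := by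
  refine ⟨e.continuous, ⟨(pi0Map_leftInverse e.left_inv).injective,
    (pi0Map_leftInverse e.right_inv).surjective⟩, fun n _ x => ?_⟩
  have hgf := piMap_comp_piMap_bijective e.left_inv n x
  have hfg := piMap_comp_piMap_bijective e.right_inv n (e x)
  have hg : Function.Bijective (piMap n e.invFun (e x)) := ⟨hfg.1.of_comp, hgf.2.of_comp⟩
  exact (hg.of_comp_iff' _).1 hgf

end WeakEquiv

section MappingSpace

open Set

variable {A : Type*} {B : Type*} [TopologicalSpace A] [TopologicalSpace B]

theorem continuous_comp_curry {T : Type*} (X : Type*) [TopologicalSpace T] [LocallyCompactSpace T]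
    [TopologicalSpace X] (F : C(T × A, B)) :
    Continuous fun a : T × C(B, X) => a.2.comp (F.curry a.1) := by
  refine ContinuousMap.continuous_compactOpen.2 fun K hK U hU => isOpen_iff_mem_nhds.2 ?_
  rintro ⟨t, φ⟩ hφ
  have hopen : IsOpen (φ.comp F ⁻¹' U) := hU.preimage (φ.comp F).continuous
  have hslice : {t} ×ˢ K ⊆ φ.comp F ⁻¹' U := by
    rintro ⟨s, a⟩ ⟨rfl, ha⟩
    exact hφ ha
  obtain ⟨V, W, hV, -, htV, hKW, hVW⟩ := generalized_tube_lemma isCompact_singleton hK hopen hslice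
  obtain ⟨C, hCt, hCV, hC⟩ := local_compact_nhds (hV.mem_nhds (htV rfl))
  have himage : IsCompact (F '' C ×ˢ K) := (hC.prod hK).image F.continuous
  have hmaps : MapsTo φ (F '' C ×ˢ K) U :=
    mapsTo_image_iff.2 fun _ ha => hVW (prod_mono hCV hKW ha)
  filter_upwards [prod_mem_nhds hCt (ContinuousMap.eventually_mapsTo himage hU hmaps)]
    with ⟨s, ψ⟩ ⟨hs, hψ⟩ a ha
  exact hψ (mem_image_of_mem F ⟨hs, ha⟩)

theorem compRightContinuousMap_homotopic (X : Type*) [TopologicalSpace X] {f g : C(A, B)}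
    (h : f.Homotopic g) :
    (f.compRightContinuousMap X).Homotopic (g.compRightContinuousMap X) := by
  obtain ⟨F⟩ := h
  exact ⟨{
    toFun := fun a => a.2.comp (F.curry a.1)
    continuous_toFun := continuous_comp_curry X F.toContinuousMap
    map_zero_left := fun φ => ContinuousMap.ext fun a => congrArg φ (F.apply_zero a)
    map_one_left := fun φ => ContinuousMap.ext fun a => congrArg φ (F.apply_one a) }⟩

/-- The homotopy equivalence of mapping spaces `φ ↦ φ ∘ e`. -/
def precompHomotopyEquiv (X : Type*) [TopologicalSpace X] (e : ContinuousMap.HomotopyEquiv A B) :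
    ContinuousMap.HomotopyEquiv C(B, X) C(A, X) where
  toFun := e.toFun.compRightContinuousMap X
  invFun := e.invFun.compRightContinuousMap X
  left_inv := compRightContinuousMap_homotopic X e.right_inv
  right_inv := compRightContinuousMap_homotopic X e.left_inv

end MappingSpace

section Contractible

variable {A : Type*} {B : Type*} [TopologicalSpace A] [TopologicalSpace B]

theorem homotopic_of_contractibleSpace [ContractibleSpace B] (f g : C(A, B)) : f.Homotopic g := by
  obtain ⟨b, hb⟩ := id_nullhomotopic B
  have hconst (k : C(A, B)) : k.Homotopic (ContinuousMap.const A b) := hb.comp (.refl k)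
  exact (hconst f).trans (hconst g).symm

/-- An arbitrary continuous map between contractible spaces, as a homotopy equivalence. -/
noncomputable def contractibleHomotopyEquiv [ContractibleSpace A] [ContractibleSpace B]
    (f : C(A, B)) : ContinuousMap.HomotopyEquiv A B where
  toFun := f
  invFun := ContinuousMap.const B (Classical.arbitrary A)
  left_inv := homotopic_of_contractibleSpace _ _
  right_inv := homotopic_of_contractibleSpace _ _

end Contractible

theorem restrictionMap_homotopyEquiv_general {B X : Type u} [TopologicalSpace B]
    [TopologicalSpace X] [ContractibleSpace B] (Δ : Set B) [ContractibleSpace Δ] :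
    (∃ g : C(C(↥Δ, X), C(B, X)),
        ((restrictionMap Δ).comp g).Homotopic (ContinuousMap.id _) ∧
        (g.comp (restrictionMap Δ)).Homotopic (ContinuousMap.id _)) ∧
      IsWeakHomotopyEquiv (restrictionMap (X := X) Δ) := by
  let inclusion : C(Δ, B) := ⟨Subtype.val, continuous_subtype_val⟩
  let e := precompHomotopyEquiv X (contractibleHomotopyEquiv inclusion)
  exact ⟨⟨e.invFun, e.right_inv, e.left_inv⟩, isWeakHomotopyEquiv_of_homotopyEquiv e⟩

/-- Let `X` be a topological space and `Δ ⊆ B` compact Hausdorff spaces, both contractible.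
Then the restriction map `C(B, X) → C(Δ, X)`, `f ↦ f|_Δ`, is a homotopy equivalence; in
particular it is a weak homotopy equivalence. -/
theorem restrictionMap_homotopyEquiv {B X : Type u} [TopologicalSpace B] [TopologicalSpace X]
    [CompactSpace B] [T2Space B] [ContractibleSpace B]
    (Δ : Set B) (hΔc : IsCompact Δ) (hΔcon : ContractibleSpace Δ) :
    (∃ g : C(C(↥Δ, X), C(B, X)),
        ((restrictionMap Δ).comp g).Homotopic (ContinuousMap.id _) ∧
        (g.comp (restrictionMap Δ)).Homotopic (ContinuousMap.id _)) ∧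
      IsWeakHomotopyEquiv (restrictionMap (X := X) Δ) :=
  restrictionMap_homotopyEquiv_general Δ
end

section
/- Let A ↪ X and B ↪ Y be closed cofibrations of topological spaces. Then A × B ↪ X × Y is a closed cofibration. In particular, given a continuous map g_0 : X × Y → Z and a homotopy h : A × B × [0,1] → Z with h(a, b, 0) = g_0(a, b) for all (a,b) ∈ A × B, there exists a homotopy G : X × Y × [0,1] → Z with G(x, y, 0) = g_0(x, y) whose restriction to A × B × [0,1] equals h. -/
/-!
For closed `A ⊆ X`, the subspace `X × {0} ∪ A × I` of the cylinder is obtained by gluing `X` and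
`A × I` along `A`, so the homotopy extension property says precisely that `X × I` retracts onto it.
Multiplying such a retraction by the identity of a space `W` shows that `A × W ↪ X × W` again has
the homotopy extension property. Now factor `A × B ↪ X × Y` as `A × B ↪ X × B ↪ X × Y`.
-/

open scoped unitInterval Topology

universe u v w
/-- The homotopy extension property of a map `i : A → X` with respect to a single space `Z`.
It is stated for maps rather than for subspaces so that inclusions can be composed with each other
and with homeomorphisms. -/
def HomotopyExtensionProperty {A X : Type*} [TopologicalSpace A] [TopologicalSpace X]
    (i : A → X) (Z : Type*) [TopologicalSpace Z] : Prop :=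
  ∀ (f : C(X, Z)) (h : C(A × I, Z)), (∀ a, h (a, 0) = f (i a)) →
    ∃ H : C(X × I, Z), (∀ x, H (x, 0) = f x) ∧ ∀ a t, H (i a, t) = h (a, t)

namespace HomotopyExtensionProperty

variable {A X Y Z : Type*} [TopologicalSpace A] [TopologicalSpace X] [TopologicalSpace Y]
  [TopologicalSpace Z]

theorem comp {j : X → Y} {i : A → X} (hj : HomotopyExtensionProperty j Z)
    (hi : HomotopyExtensionProperty i Z) (hjc : Continuous j) :
    HomotopyExtensionProperty (j ∘ i) Z := by
  intro f h hf
  obtain ⟨H, H_zero, H_i⟩ := hi (f.comp ⟨j, hjc⟩) h hf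
  obtain ⟨G, G_zero, G_j⟩ := hj f H H_zero
  exact ⟨G, G_zero, fun a t => (G_j (i a) t).trans (H_i a t)⟩

theorem of_homeomorph (e : A ≃ₜ X) : HomotopyExtensionProperty e Z := fun f h hf =>
  ⟨⟨fun p => h (e.symm p.1, p.2), by fun_prop⟩, fun x => by simp [hf], fun a t => by simp⟩

end HomotopyExtensionProperty

/-- The subspace `X × {0} ∪ A × I` of the cylinder `X × I`. -/
def cylinderBase {X : Type*} (A : Set X) : Set (X × I) :=
  {p | p.2 = 0 ∨ p.1 ∈ A}

namespace cylinderBase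

variable {X Z : Type*} [TopologicalSpace X] [TopologicalSpace Z] (A : Set X)

open Topology

/-- The inclusion of `X` as the bottom `X × {0}` of `X × {0} ∪ A × I`. -/
def bottom : C(X, cylinderBase A) :=
  ⟨fun x => ⟨(x, 0), Or.inl rfl⟩, by fun_prop⟩

/-- The inclusion of the side `A × I` into `X × {0} ∪ A × I`. -/
def side : C(A × I, cylinderBase A) :=
  ⟨fun p => ⟨(p.1, p.2), Or.inr p.1.2⟩, by fun_prop⟩

variable {A}

theorem isClosedMap_bottom : IsClosedMap (bottom A) := by
  have isClosedMap_mk : IsClosedMap fun x : X => (x, (0 : I)) := fun s hs => by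
    rw [← Set.prod_singleton]
    exact hs.prod isClosed_singleton
  exact isClosedMap_mk.codRestrict _

theorem isClosedMap_side (hA : IsClosed A) : IsClosedMap (side A) :=
  (hA.isClosedEmbedding_subtypeVal.prodMap .id).isClosedMap.codRestrict _

theorem bottom_injective : Function.Injective (bottom A) := fun _ _ hxy =>
  congrArg (fun p => p.1.1) hxy

theorem side_injective : Function.Injective (side A) := fun p q hpq => by
  simpa [side, Prod.ext_iff, Subtype.ext_iff] using hpq

theorem isQuotientMap_sumElim (hA : IsClosed A) :
    IsQuotientMap (Sum.elim (bottom A) (side A)) := by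
  refine IsClosedMap.isQuotientMap ?_ (by fun_prop) ?_
  · exact isClosedMap_bottom.sumElim (isClosedMap_side hA)
  · rintro ⟨⟨x, t⟩, (rfl : t = 0) | hx⟩
    · exact ⟨Sum.inl x, rfl⟩
    · exact ⟨Sum.inr (⟨x, hx⟩, t), rfl⟩

theorem exists_glue (hA : IsClosed A) (f : C(X, Z)) (h : C(A × I, Z))
    (hf : ∀ a, h (a, 0) = f a) :
    ∃ k : C(cylinderBase A, Z), (∀ x, k (bottom A x) = f x) ∧ ∀ p, k (side A p) = h p := by
  let q : C(X ⊕ A × I, cylinderBase A) := ⟨Sum.elim (bottom A) (side A), by fun_prop⟩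
  have hq : IsQuotientMap q := isQuotientMap_sumElim hA
  have bottom_eq_side : ∀ x p, bottom A x = side A p → f x = h p := by
    rintro x ⟨a, t⟩ hxp
    obtain ⟨rfl, rfl⟩ : x = a ∧ 0 = t := Prod.ext_iff.1 (congrArg Subtype.val hxp)
    exact (hf a).symm
  let g : C(X ⊕ A × I, Z) := ⟨Sum.elim f h, by fun_prop⟩
  have hg : Function.FactorsThrough g q := by
    rintro (x | p) (y | p') heq
    · exact congrArg f (bottom_injective heq)
    · exact bottom_eq_side x p' heq
    · exact (bottom_eq_side y p heq.symm).symm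
    · exact congrArg h (side_injective heq)
  exact ⟨hq.lift g hg, fun x => DFunLike.congr_fun (hq.lift_comp g hg) (Sum.inl x),
    fun p => DFunLike.congr_fun (hq.lift_comp g hg) (Sum.inr p)⟩

end cylinderBase

/-- The cylinder `X × I` retracts onto `X × {0} ∪ A × I`. For closed `A` this is equivalent to the
homotopy extension property, but it does not mention a target space. -/
def HasCylinderRetraction {X : Type*} [TopologicalSpace X] (A : Set X) : Prop :=
  ∃ r : C(X × I, cylinderBase A), Function.LeftInverse r (↑)

namespace HasCylinderRetraction

variable {X W Z : Type*} [TopologicalSpace X] [TopologicalSpace W] [TopologicalSpace Z] {A : Set X}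

theorem homotopyExtensionProperty (hr : HasCylinderRetraction A) (hA : IsClosed A) :
    HomotopyExtensionProperty ((↑) : A → X) Z := by
  intro f h hf
  obtain ⟨r, hr⟩ := hr
  obtain ⟨k, k_bottom, k_side⟩ := cylinderBase.exists_glue hA f h hf
  refine ⟨k.comp r, fun x => ?_, fun a t => ?_⟩
  · exact (congrArg k (hr (cylinderBase.bottom A x))).trans (k_bottom x)
  · exact (congrArg k (hr (cylinderBase.side A (a, t)))).trans (k_side (a, t))

theorem prod_univ (hr : HasCylinderRetraction A) :
    HasCylinderRetraction (A ×ˢ (Set.univ : Set W)) := by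
  obtain ⟨r, hr⟩ := hr
  let s (p : (X × W) × I) : X × I := r (p.1.1, p.2)
  have hs (p : (X × W) × I) :
      (((s p).1, p.1.2), (s p).2) ∈ cylinderBase (A ×ˢ (Set.univ : Set W)) :=
    (r (p.1.1, p.2)).2.imp_right fun ha => ⟨ha, trivial⟩
  refine ⟨⟨fun p => ⟨_, hs p⟩, by fun_prop⟩, fun ⟨⟨⟨x, w⟩, t⟩, hp⟩ => ?_⟩
  have hxt : r (x, t) = ⟨(x, t), hp.imp_right And.left⟩ := hr ⟨(x, t), _⟩
  simp [s, hxt]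

end HasCylinderRetraction

namespace ClosedCofibration

variable {X : Type u} {Y : Type v} {Z : Type w} [TopologicalSpace X] [TopologicalSpace Y]
  [TopologicalSpace Z] {A : Set X} {B : Set Y}

theorem hasCylinderRetraction (hA : ClosedCofibration A) : HasCylinderRetraction A := by
  obtain ⟨r, r_bottom, r_side⟩ :=
    hA.2 (cylinderBase A) (cylinderBase.bottom A) (cylinderBase.side A) fun _ => rfl
  refine ⟨r, ?_⟩
  rintro ⟨⟨x, t⟩, (rfl : t = 0) | hx⟩
  · exact r_bottom x
  · exact r_side ⟨x, hx⟩ t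

theorem homotopyExtensionProperty_prodMap_id (hA : ClosedCofibration A) :
    HomotopyExtensionProperty (Prod.map (↑) id : A × Y → X × Y) Z := by
  let e : A × Y ≃ₜ ↥(A ×ˢ (Set.univ : Set Y)) :=
    ((Homeomorph.refl A).prodCongr (Homeomorph.Set.univ Y).symm).trans
      (Homeomorph.Set.prod A Set.univ).symm
  exact (hA.hasCylinderRetraction.prod_univ.homotopyExtensionProperty
    (hA.1.prod isClosed_univ)).comp (.of_homeomorph e) continuous_subtype_val

theorem homotopyExtensionProperty_id_prodMap (hB : ClosedCofibration B) :
    HomotopyExtensionProperty (Prod.map id (↑) : X × B → X × Y) Z :=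
  ((HomotopyExtensionProperty.of_homeomorph (.prodComm Y X)).comp
    hB.homotopyExtensionProperty_prodMap_id (by fun_prop)).comp
      (.of_homeomorph (.prodComm X B)) (by fun_prop)

theorem homotopyExtensionProperty_prodMap (hA : ClosedCofibration A) (hB : ClosedCofibration B) :
    HomotopyExtensionProperty (Prod.map (↑) (↑) : A × B → X × Y) Z :=
  hB.homotopyExtensionProperty_id_prodMap.comp hA.homotopyExtensionProperty_prodMap_id
    (by fun_prop)

theorem prod (hA : ClosedCofibration A) (hB : ClosedCofibration B) :
    ClosedCofibration (A ×ˢ B) :=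
  ⟨hA.1.prod hB.1, fun _ _ => (hA.homotopyExtensionProperty_prodMap hB).comp
    (.of_homeomorph (Homeomorph.Set.prod A B)) (by fun_prop)⟩

end ClosedCofibration

/-- Let `A ↪ X` and `B ↪ Y` be closed cofibrations.  Then `A × B ↪ X × Y` is a closed
cofibration.  In particular, any map `g₀ : X × Y → Z` together with a homotopy
`h : A × B × [0,1] → Z` starting at the restriction of `g₀` extends to a homotopy
`G : X × Y × [0,1] → Z` starting at `g₀` and restricting to `h` on `A × B × [0,1]`. -/
theorem closedCofibration_prod {X Y : Type u} [TopologicalSpace X] [TopologicalSpace Y]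
    (A : Set X) (B : Set Y) (hA : ClosedCofibration A) (hB : ClosedCofibration B) :
    ClosedCofibration (A ×ˢ B) ∧
      ∀ (Z : Type u) [TopologicalSpace Z] (g₀ : C(X × Y, Z))
        (h : C((↥A × ↥B) × unitInterval, Z)),
        (∀ (a : A) (b : B), h ((a, b), 0) = g₀ (↑a, ↑b)) →
        ∃ G : C((X × Y) × unitInterval, Z),
          (∀ (x : X) (y : Y), G ((x, y), 0) = g₀ (x, y)) ∧
          ∀ (a : A) (b : B) (t : unitInterval), G ((↑a, ↑b), t) = h ((a, b), t) := by
  refine ⟨hA.prod hB, fun Z _ g₀ h hg => ?_⟩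
  obtain ⟨G, G_zero, G_side⟩ :=
    hA.homotopyExtensionProperty_prodMap hB g₀ h fun p => hg p.1 p.2
  exact ⟨G, fun x y => G_zero (x, y), fun a b => G_side (a, b)⟩
end
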